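/- arXiv:1406.6918 — 3 statements merged into one kernel-verified Lean document; each statement's English description precedes it below -/
import Mathlib

section
/- For every integer m > 0, the triple (FIN_m^[∞], ≤, r) is a topological Ramsey space. -/
open Topology

section Ellentuck

variable {R α : Type*}

/-- The basic set `[a,A] = {B ∈ R : B ≤ A and r_n(B) = a for some n}` of the
Ellentuck topology determined by a quasi-order `le` and approximation
mappings `r`. -/
def EllSet (le : R → R → Prop) (r : ℕ → R → α) (a : α) (A : R) : Set R :=
  {B | le B A ∧ ∃ n, r n B = a}

/-- The Ellentuck topology on `R`, generated by the basic sets `[a,A]`. -/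
def EllTop (le : R → R → Prop) (r : ℕ → R → α) : TopologicalSpace R :=
  TopologicalSpace.generateFrom {s | ∃ a A, s = EllSet le r a A}

/-- A set `S ⊆ R` is Ramsey: for every nonempty `[a,A]` there is `B ∈ [a,A]`
with `[a,B] ⊆ S` or `[a,B] ∩ S = ∅`. -/
def IsRamseySet (le : R → R → Prop) (r : ℕ → R → α) (S : Set R) : Prop :=
  ∀ (a : α) (A : R), (EllSet le r a A).Nonempty →
    ∃ B ∈ EllSet le r a A, EllSet le r a B ⊆ S ∨ EllSet le r a B ∩ S = ∅

/-- A set `S ⊆ R` is Ramsey null: for every nonempty `[a,A]` there is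
`B ∈ [a,A]` with `[a,B] ∩ S = ∅`. -/
def IsRamseyNullSet (le : R → R → Prop) (r : ℕ → R → α) (S : Set R) : Prop :=
  ∀ (a : α) (A : R), (EllSet le r a A).Nonempty →
    ∃ B ∈ EllSet le r a A, EllSet le r a B ∩ S = ∅

/-- A set has the property of Baire with respect to a topology `t`: it is the
symmetric difference of a `t`-open set and a `t`-meager set. -/
def HasPropertyOfBaire (t : TopologicalSpace R) (S : Set R) : Prop :=
  ∃ U M : Set R, IsOpen[t] U ∧ @IsMeagre R t M ∧ S = symmDiff U M

/-- `(R, ≤, r)` is a topological Ramsey space: every subset of `R` with the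
property of Baire in the Ellentuck topology is Ramsey, and every
Ellentuck-meager subset is Ramsey null. -/
def IsTopRamseySpace (le : R → R → Prop) (r : ℕ → R → α) : Prop :=
  (∀ S : Set R, HasPropertyOfBaire (EllTop le r) S → IsRamseySet le r S) ∧
  (∀ S : Set R, @IsMeagre R (EllTop le r) S → IsRamseyNullSet le r S)

end Ellentuck

/-- `FIN_m`: the finitely supported functions `p : ω → {0,…,m}` attaining the
value `m`. -/
def FINm (m : ℕ) : Set (ℕ → ℕ) :=
  {p | (∀ i, p i ≤ m) ∧ {i | p i ≠ 0}.Finite ∧ ∃ i, p i = m}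

/-- A block sequence of elements of `FIN_m`: consecutive supports are
completely separated. -/
def IsBlockSeq (m : ℕ) (P : ℕ → ℕ → ℕ) : Prop :=
  (∀ n, P n ∈ FINm m) ∧ ∀ n i j, P n i ≠ 0 → P (n + 1) j ≠ 0 → i < j

/-- `FIN_m^[∞]`, the space of all block sequences of elements of `FIN_m`. -/
def BlockSeq (m : ℕ) : Type := {P : ℕ → ℕ → ℕ // IsBlockSeq m P}

/-- The combinatorial span `[P]` of a block sequence `P`: all sums
`T^{j_0}(p_{n_0}) + ⋯ + T^{j_q}(p_{n_q})` where `n_0 < ⋯ < n_q`,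
`0 ≤ j_i ≤ m−1` and some `j_i = 0`; here the tetris operation satisfies
`T^j(p)(i) = max (p i − j) 0 = p i - j` (truncated subtraction), and since
the supports of the summands are pairwise disjoint the sum is pointwise. -/
def blockSpan (m : ℕ) (P : ℕ → ℕ → ℕ) : Set (ℕ → ℕ) :=
  {q | ∃ F : Finset ℕ, F.Nonempty ∧ ∃ j : ℕ → ℕ,
        (∀ n ∈ F, j n ≤ m - 1) ∧ (∃ n ∈ F, j n = 0) ∧
        q = fun i => ∑ n ∈ F, (P n i - j n)}

/-- The quasi-order on `FIN_m^[∞]`: `Q ≤ P` iff every term of `Q` lies in the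
combinatorial span `[P]`. -/
def blockLe (m : ℕ) (Q P : BlockSeq m) : Prop :=
  ∀ n, Q.val n ∈ blockSpan m P.val

/-- The approximation map on `FIN_m^[∞]`: `r n P` is the initial segment
`(p_0, …, p_{n−1})` of `P`. -/
def blockR (m : ℕ) (n : ℕ) (P : BlockSeq m) : List (ℕ → ℕ) :=
  List.ofFn fun i : Fin n => P.val i

section Combinations

variable {m : ℕ}

/-- `x` lies entirely to the left of `y`: every point of the support of `x` is smaller than every
point of the support of `y`. -/
def SuppLT (x y : ℕ → ℕ) : Prop :=
  ∀ i j, x i ≠ 0 → y j ≠ 0 → i < j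

/-- `q` is the combination `⋁ₙ T^{m - p n} (X n)` of the sequence `X` with coefficients `p`,
expressed through its superlevel sets. -/
def IsComb (m : ℕ) (X : ℕ → ℕ → ℕ) (p q : ℕ → ℕ) : Prop :=
  ∀ i c, 0 < c → (c ≤ q i ↔ ∃ n, m + c ≤ X n i + p n)

theorem IsComb.unique {X : ℕ → ℕ → ℕ} {p q q' : ℕ → ℕ} (h : IsComb m X p q)
    (h' : IsComb m X p q') : q = q' := by
  funext i
  apply le_antisymm
  · rcases Nat.eq_zero_or_pos (q i) with h0 | h0
    · omega
    · exact (h' i _ h0).2 ((h i _ h0).1 le_rfl)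
  · rcases Nat.eq_zero_or_pos (q' i) with h0 | h0
    · omega
    · exact (h i _ h0).2 ((h' i _ h0).1 le_rfl)

/-- Combinations of members of `FIN_m` exist and are members of `FIN_m`. -/
theorem exists_isComb (hm : 0 < m) {X : ℕ → ℕ → ℕ} {p : ℕ → ℕ} (hle : ∀ n i, X n i ≤ m)
    (hp : p ∈ FINm m) (hX : ∀ n, p n ≠ 0 → X n ∈ FINm m) :
    ∃ q ∈ FINm m, IsComb m X p q := by
  obtain ⟨hp1, hp2, k, hk⟩ := hp
  have key : IsComb m X p fun i => hp2.toFinset.sup fun n => X n i + p n - m := by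
    intro i c hc
    rw [Finset.le_sup_iff (by simpa using hc)]
    constructor
    · rintro ⟨n, -, hn⟩
      exact ⟨n, by omega⟩
    · rintro ⟨n, hn⟩
      have := hle n i
      exact ⟨n, by simp; omega, by omega⟩
  refine ⟨_, ⟨?_, ?_, ?_⟩, key⟩
  · intro i
    refine Finset.sup_le fun n _ => ?_
    have := hle n i
    have := hp1 n
    omega
  · refine (hp2.biUnion fun n hn => (hX n hn).2.1).subset ?_
    intro i hi
    obtain ⟨n, hn⟩ := (key i 1 one_pos).1 (Nat.one_le_iff_ne_zero.2 hi)
    have := hle n i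
    have := hp1 n
    simp only [Set.mem_iUnion, Set.mem_ofPred_eq]
    exact ⟨n, by omega, by omega⟩
  · obtain ⟨i, hi⟩ := (hX k (by omega)).2.2
    refine ⟨i, le_antisymm ?_ ((key i m hm).2 ⟨k, by omega⟩)⟩
    refine Finset.sup_le fun n _ => ?_
    have := hle n i
    have := hp1 n
    omega

/-- A combination of combinations is a combination. -/
theorem IsComb.comp {X y B : ℕ → ℕ → ℕ} {p r z : ℕ → ℕ} (hX : ∀ n i, X n i ≤ m)
    (hp : ∀ n, p n ≤ m) (hB : ∀ n, p n ≠ 0 → IsComb m X (y n) (B n)) (hBle : ∀ n i, B n i ≤ m)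
    (hy : ∀ n i, y n i ≤ m)
    (hr : IsComb m y p r) (hz : IsComb m B p z) : IsComb m X r z := by
  intro i c hc
  rw [hz i c hc]
  constructor
  · rintro ⟨l, hl⟩
    have h1 := hBle l i
    have h2 := hp l
    obtain ⟨n, hn⟩ := (hB l (by omega) i (m + c - p l) (by omega)).1 (by omega)
    have h3 := hX n i
    have := (hr n (m + c - X n i) (by omega)).2 ⟨l, by omega⟩
    exact ⟨n, by omega⟩
  · rintro ⟨n, hn⟩
    have h3 := hX n i
    obtain ⟨l, hl⟩ := (hr n (m + c - X n i) (by omega)).1 (by omega)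
    have h1 := hy l n
    have h2 := hp l
    have := (hB l (by omega) i (m + c - p l) (by omega)).2 ⟨n, by omega⟩
    exact ⟨l, by omega⟩

theorem IsBlockSeq.le {X : ℕ → ℕ → ℕ} (hX : IsBlockSeq m X) (n i : ℕ) : X n i ≤ m :=
  (hX.1 n).1 i

/-- Nonconsecutive terms of a block sequence are also separated. -/
theorem IsBlockSeq.suppLT (hm : 0 < m) {X : ℕ → ℕ → ℕ} (hX : IsBlockSeq m X) {k n : ℕ}
    (h : k < n) : SuppLT (X k) (X n) := by
  induction n, h using Nat.le_induction with
  | base => exact hX.2 k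
  | succ n _ ih =>
    intro i j hi hj
    obtain ⟨t, ht⟩ := (hX.1 n).2.2
    exact (ih i t hi (by omega)).trans (hX.2 n t j (by omega) hj)

theorem IsBlockSeq.index_unique (hm : 0 < m) {X : ℕ → ℕ → ℕ} (hX : IsBlockSeq m X) {k n i : ℕ}
    (hk : X k i ≠ 0) (hn : X n i ≠ 0) : k = n := by
  rcases lt_trichotomy k n with h | h | h
  · exact absurd (hX.suppLT hm h i i hk hn) (lt_irrefl _)
  · exact h
  · exact absurd (hX.suppLT hm h i i hn hk) (lt_irrefl _)

theorem IsBlockSeq.index_le (hm : 0 < m) {X : ℕ → ℕ → ℕ} (hX : IsBlockSeq m X) {n i : ℕ}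
    (h : X n i ≠ 0) : n ≤ i := by
  induction n generalizing i with
  | zero => exact Nat.zero_le _
  | succ n ih =>
    obtain ⟨t, ht⟩ := (hX.1 n).2.2
    have h1 := ih (i := t) (by omega)
    have := hX.2 n t i (by omega) h
    omega

theorem IsBlockSeq.sum_eq (hm : 0 < m) {X : ℕ → ℕ → ℕ} (hX : IsBlockSeq m X) {F : Finset ℕ}
    {j : ℕ → ℕ} {i n : ℕ} (hn : n ∈ F) (h : X n i ≠ 0) :
    ∑ k ∈ F, (X k i - j k) = X n i - j n := by
  refine Finset.sum_eq_single_of_mem n hn fun k _ hk => ?_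
  by_contra h0
  exact hk (hX.index_unique hm (by omega) h)

/-- The combinatorial span of a block sequence consists of the combinations whose coefficients
form a member of `FIN_m`. -/
theorem mem_blockSpan_iff (hm : 0 < m) {X : ℕ → ℕ → ℕ} (hX : IsBlockSeq m X) {q : ℕ → ℕ} :
    q ∈ blockSpan m X ↔ ∃ p ∈ FINm m, IsComb m X p q := by
  classical
  constructor
  · rintro ⟨F, -, j, hj, ⟨k, hkF, hk⟩, rfl⟩
    refine ⟨fun n => if n ∈ F then m - j n else 0, ⟨?_, ?_, k, by simp [hkF, hk]⟩, ?_⟩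
    · intro n
      dsimp only
      split_ifs <;> omega
    · refine F.finite_toSet.subset fun n hn => ?_
      by_contra h
      exact hn (if_neg h)
    · intro i c hc
      constructor
      · intro h
        obtain ⟨n, hn, h0⟩ := Finset.exists_ne_zero_of_sum_ne_zero (show
          ∑ k ∈ F, (X k i - j k) ≠ 0 by dsimp only at h; omega)
        dsimp only at h
        rw [hX.sum_eq hm hn (by omega)] at h
        have := hj n hn
        exact ⟨n, by dsimp only; rw [if_pos hn]; omega⟩
      · rintro ⟨n, hn⟩
        have := hX.le n i
        dsimp only at hn
        by_cases hF : n ∈ F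
        · rw [if_pos hF] at hn
          dsimp only
          have := hj n hF
          rw [hX.sum_eq hm hF (by omega)]
          omega
        · rw [if_neg hF] at hn
          omega
  · rintro ⟨p, ⟨hp1, hp2, k, hk⟩, hq⟩
    refine ⟨hp2.toFinset, ⟨k, by simp; omega⟩, fun n => m - p n, ?_, ⟨k, by simp; omega, by simp [hk]⟩,
      ?_⟩
    · intro n hn
      simp only [Set.Finite.mem_toFinset, Set.mem_ofPred_eq] at hn
      dsimp only
      omega
    · refine hq.unique ?_
      intro i c hc
      constructor
      · intro h
        obtain ⟨n, hn, h0⟩ := Finset.exists_ne_zero_of_sum_ne_zero (show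
          ∑ n ∈ hp2.toFinset, (X n i - (m - p n)) ≠ 0 by dsimp only at h; omega)
        dsimp only at h
        rw [hX.sum_eq (j := fun n => m - p n) hm hn (by omega)] at h
        have := hp1 n
        exact ⟨n, by omega⟩
      · rintro ⟨n, hn⟩
        have := hX.le n i
        have := hp1 n
        dsimp only
        rw [hX.sum_eq (j := fun n => m - p n) hm (n := n) (by simp; omega) (by omega)]
        omega

theorem mem_FINm_of_mem_blockSpan (hm : 0 < m) {X : ℕ → ℕ → ℕ} (hX : IsBlockSeq m X)
    {q : ℕ → ℕ} (hq : q ∈ blockSpan m X) : q ∈ FINm m := by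
  obtain ⟨p, hp, h⟩ := (mem_blockSpan_iff hm hX).1 hq
  obtain ⟨q', hq', h'⟩ := exists_isComb hm hX.le hp fun n _ => hX.1 n
  rwa [h.unique h']

/-- A combination of `B` belongs to `[Y]` once all terms of `B` occurring in it do. -/
theorem IsComb.mem_blockSpan (hm : 0 < m) {B Y : ℕ → ℕ → ℕ} {p z : ℕ → ℕ}
    (hB : IsBlockSeq m B) (hY : IsBlockSeq m Y) (hp : p ∈ FINm m) (hz : IsComb m B p z)
    (h : ∀ n, p n ≠ 0 → B n ∈ blockSpan m Y) : z ∈ blockSpan m Y := by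
  have h' : ∀ n, ∃ y : ℕ → ℕ, (∀ i, y i ≤ m) ∧
      (p n ≠ 0 → y ∈ FINm m ∧ IsComb m Y y (B n)) := by
    intro n
    by_cases hn : p n = 0
    · exact ⟨0, fun _ => Nat.zero_le _, fun h0 => absurd hn h0⟩
    · obtain ⟨y, hy, hc⟩ := (mem_blockSpan_iff hm hY).1 (h n hn)
      exact ⟨y, hy.1, fun _ => ⟨hy, hc⟩⟩
  choose y hy1 hy2 using h'
  obtain ⟨r, hr, hc⟩ := exists_isComb hm hy1 hp fun n hn => (hy2 n hn).1
  exact (mem_blockSpan_iff hm hY).2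
    ⟨r, hr, IsComb.comp hY.le hp.1 (fun n hn => (hy2 n hn).2) hB.le hy1 hc hz⟩

theorem blockSpan_subset (hm : 0 < m) {B Y : ℕ → ℕ → ℕ} (hB : IsBlockSeq m B)
    (hY : IsBlockSeq m Y) (h : ∀ n, B n ∈ blockSpan m Y) : blockSpan m B ⊆ blockSpan m Y := by
  intro z hz
  obtain ⟨p, hp, hc⟩ := (mem_blockSpan_iff hm hB).1 hz
  exact hc.mem_blockSpan hm hB hY hp fun n _ => h n

theorem term_mem_blockSpan (X : ℕ → ℕ → ℕ) (n : ℕ) : X n ∈ blockSpan m X :=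
  ⟨{n}, by simp, 0, by simp, by simp, by simp⟩

theorem mem_blockSpan_of_suppLT (hm : 0 < m) {B Y : ℕ → ℕ → ℕ} {z : ℕ → ℕ} {k : ℕ}
    (hB : IsBlockSeq m B) (hY : IsBlockSeq m Y) (hz : z ∈ blockSpan m B)
    (hlt : ∀ i < k, SuppLT (B i) z) (h : ∀ n, k ≤ n → B n ∈ blockSpan m Y) :
    z ∈ blockSpan m Y := by
  obtain ⟨p, hp, hc⟩ := (mem_blockSpan_iff hm hB).1 hz
  refine hc.mem_blockSpan hm hB hY hp fun n hn => h n ?_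
  by_contra hk
  obtain ⟨t, ht⟩ := (hB.1 n).2.2
  have := (hc t 1 one_pos).2 ⟨n, by omega⟩
  exact lt_irrefl _ (hlt n (by omega) t t (by omega) (by omega))

end Combinations

section GowersUltrafilter

/-- The functions `ω → ω` with pointwise maximum as multiplication. -/
def SupFun : Type := ℕ → ℕ

instance SupFun.instSemigroup : Semigroup SupFun where
  mul x y := fun i => max (x i) (y i)
  mul_assoc x y z := funext fun i => max_assoc (x i) (y i) (z i)

theorem SupFun.mul_apply (x y : SupFun) (i : ℕ) : (x * y) i = max (x i) (y i) := rfl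

/-- The zero function. -/
def SupFun.zero : SupFun := fun _ => 0

/-- The iterated tetris operation `T^j`. -/
def tetris (j : ℕ) (x : SupFun) : SupFun := fun i => x i - j

theorem tetris_apply (j : ℕ) (x : SupFun) (i : ℕ) : tetris j x i = x i - j := rfl

theorem tetris_mul (j : ℕ) (x y : SupFun) : tetris j (x * y) = tetris j x * tetris j y := by
  funext i
  simp only [tetris_apply, SupFun.mul_apply]
  omega

theorem tetris_tetris (j k : ℕ) (x : SupFun) : tetris j (tetris k x) = tetris (k + j) x := by
  funext i
  simp only [tetris_apply]
  omega

theorem tetris_zero : tetris 0 = id := rfl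

open Filter

attribute [local instance] Ultrafilter.mul Ultrafilter.semigroup

theorem Ultrafilter.map_tetris_mul (j : ℕ) (U V : Ultrafilter SupFun) :
    (U * V).map (tetris j) = U.map (tetris j) * V.map (tetris j) := by
  refine Ultrafilter.coe_inj.mp (Filter.ext' fun p => ?_)
  simp only [Ultrafilter.eventually_mul, Ultrafilter.coe_map, Filter.eventually_map, tetris_mul]

theorem Ultrafilter.map_tetris_tetris (j k : ℕ) (U : Ultrafilter SupFun) :
    (U.map (tetris k)).map (tetris j) = U.map (tetris (k + j)) := by
  rw [Ultrafilter.map_map]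
  congr 1
  exact funext fun x => tetris_tetris j k x

/-- Members of `FIN_k` whose support is contained in `[n, ∞)`. -/
def finTail (k n : ℕ) : Set SupFun :=
  {x | x ∈ FINm k ∧ ∀ i < n, x i = 0}

theorem mul_mem_finTail {k l n : ℕ} (h : l ≤ k) {x y : SupFun} (hx : x ∈ finTail k n)
    (hy : y ∈ finTail l n) : x * y ∈ finTail k n := by
  obtain ⟨⟨hx1, hx2, t, ht⟩, hx3⟩ := hx
  obtain ⟨⟨hy1, hy2, -⟩, hy3⟩ := hy
  refine ⟨⟨fun i => ?_, (hx2.union hy2).subset fun i hi => ?_, t, ?_⟩, fun i hi => ?_⟩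
  · rw [SupFun.mul_apply]
    have := hx1 i
    have := hy1 i
    omega
  · simp only [Set.mem_ofPred_eq, SupFun.mul_apply, Set.mem_union] at hi ⊢
    omega
  · rw [SupFun.mul_apply]
    have := hy1 t
    omega
  · rw [SupFun.mul_apply, hx3 i hi, hy3 i hi, max_self]

theorem tetris_mem_finTail {k n : ℕ} {x : SupFun} (hx : x ∈ finTail (k + 1) n) :
    tetris 1 x ∈ finTail k n := by
  obtain ⟨⟨hx1, hx2, t, ht⟩, hx3⟩ := hx
  refine ⟨⟨fun i => ?_, hx2.subset fun i hi => ?_, t, ?_⟩, fun i hi => ?_⟩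
  · rw [tetris_apply]
    have := hx1 i
    omega
  · simp only [Set.mem_ofPred_eq, tetris_apply] at hi ⊢
    omega
  · rw [tetris_apply, ht, Nat.add_sub_cancel]
  · rw [tetris_apply, hx3 i hi]

/-- The ultrafilters concentrating on arbitrarily late members of `FIN_k`. -/
def finUltra (k : ℕ) : Set (Ultrafilter SupFun) :=
  {U | ∀ n, finTail k n ∈ U}

theorem mul_mem_finUltra {k l : ℕ} (h : l ≤ k) {U V : Ultrafilter SupFun} (hU : U ∈ finUltra k)
    (hV : V ∈ finUltra l) : U * V ∈ finUltra k := by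
  intro n
  refine (Ultrafilter.eventually_mul U V (· ∈ finTail k n)).2 ?_
  filter_upwards [hU n] with x hx
  filter_upwards [hV n] with y hy
  exact mul_mem_finTail h hx hy

theorem eq_pure_of_mem_finUltra_zero {U : Ultrafilter SupFun} (hU : U ∈ finUltra 0) :
    U = pure SupFun.zero := by
  refine (Ultrafilter.coe_le_coe.1 ?_)
  intro s hs
  filter_upwards [hU 0] with x hx
  have : x = SupFun.zero := funext fun i => Nat.le_zero.1 (hx.1.1 i)
  rw [this]
  exact hs

/-- The map induced by the tetris operation is onto. -/
theorem exists_map_tetris_eq {k : ℕ} {U : Ultrafilter SupFun} (hU : U ∈ finUltra k) :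
    ∃ V ∈ finUltra (k + 1), V.map (tetris 1) = U := by
  rcases Nat.eq_zero_or_pos k with rfl | hk
  · let e : ℕ → SupFun := fun n i => if i = n then 1 else 0
    have he : (hyperfilter ℕ).map e ∈ finUltra 1 := by
      intro n
      have : ∀ᶠ k in (hyperfilter ℕ : Filter ℕ), n ≤ k :=
        Nat.hyperfilter_le_atTop (eventually_ge_atTop n)
      refine Ultrafilter.mem_map.2 ?_
      filter_upwards [this] with k hk
      refine ⟨⟨fun i => ?_, (Set.finite_singleton k).subset fun i hi => ?_, k, if_pos rfl⟩,
        fun i hi => if_neg (by omega)⟩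
      · dsimp only [e]
        split_ifs <;> omega
      · by_contra h
        exact hi (if_neg h)
    refine ⟨_, he, ?_⟩
    have h1 : ((hyperfilter ℕ).map e).map (tetris 1) ∈ finUltra 0 := by
      intro n
      refine Ultrafilter.mem_map.2 ?_
      filter_upwards [he n] with x hx
      exact tetris_mem_finTail hx
    rw [eq_pure_of_mem_finUltra_zero h1, eq_pure_of_mem_finUltra_zero hU]
  · let g : SupFun → SupFun := fun x i => if x i = 0 then 0 else x i + 1
    refine ⟨U.map g, fun n => ?_, ?_⟩
    · refine Ultrafilter.mem_map.2 ?_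
      filter_upwards [hU n] with x hx
      obtain ⟨⟨hx1, hx2, t, ht⟩, hx3⟩ := hx
      refine ⟨⟨fun i => ?_, hx2.subset fun i hi => ?_, t, ?_⟩, fun i hi => if_pos (hx3 i hi)⟩
      · dsimp only [g]
        have := hx1 i
        split_ifs <;> omega
      · intro h
        exact hi (if_pos h)
      · dsimp only [g]
        rw [if_neg (by omega), ht]
    · rw [Ultrafilter.map_map]
      have : tetris 1 ∘ g = id := by
        funext x i
        change (if x i = 0 then 0 else x i + 1) - 1 = x i
        split_ifs <;> omega
      rw [this, Ultrafilter.map_id]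

theorem isClosed_finUltra_lift (k : ℕ) (U : Ultrafilter SupFun) :
    IsClosed {V ∈ finUltra k | V.map (tetris 1) = U} := by
  have : {V ∈ finUltra k | V.map (tetris 1) = U} =
      (⋂ n, {V | finTail k n ∈ V}) ∩ ⋂ s ∈ U, {V | tetris 1 ⁻¹' s ∈ V} := by
    ext V
    simp only [finUltra, Set.mem_inter_iff, Set.mem_iInter, Set.mem_ofPred_eq]
    refine and_congr_right fun _ => ⟨?_, fun h => ?_⟩
    · rintro rfl s hs
      exact hs
    · exact Ultrafilter.coe_le_coe.1 fun s hs => h s hs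
  rw [this]
  exact (isClosed_iInter fun n => ultrafilter_isClosed_basic _).inter
    (isClosed_biInter fun s _ => ultrafilter_isClosed_basic _)

/-- Gowers' idempotents: an idempotent ultrafilter on `FIN_k` which absorbs its image under the
tetris operation. -/
theorem exists_gowers_ultrafilter (k : ℕ) :
    ∃ U ∈ finUltra k, U * U = U ∧ U.map (tetris 1) * U = U ∧ U * U.map (tetris 1) = U := by
  induction k with
  | zero =>
    have h0 : (pure SupFun.zero : Ultrafilter SupFun) ∈ finUltra 0 := by
      intro n
      refine Ultrafilter.mem_pure.2 ⟨⟨fun _ => le_rfl, by simp [SupFun.zero], 0, rfl⟩, fun _ _ => rfl⟩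
    have h1 : (pure SupFun.zero : Ultrafilter SupFun) * pure SupFun.zero = pure SupFun.zero :=
      eq_pure_of_mem_finUltra_zero (mul_mem_finUltra le_rfl h0 h0)
    have h2 : (pure SupFun.zero : Ultrafilter SupFun).map (tetris 1) = pure SupFun.zero :=
      Ultrafilter.map_pure _ _
    exact ⟨_, h0, h1, by rw [h2, h1], by rw [h2, h1]⟩
  | succ k ih =>
    obtain ⟨U, hU, hUU, hTU, hUT⟩ := ih
    let A : Set (Ultrafilter SupFun) := {V ∈ finUltra (k + 1) | V.map (tetris 1) = U}
    have hA : ∀ V ∈ A, V * U ∈ A := fun V hV =>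
      ⟨mul_mem_finUltra (Nat.le_succ k) hV.1 hU, by
        rw [Ultrafilter.map_tetris_mul, hV.2, hUT]⟩
    have hAA : ∀ V ∈ A, ∀ W ∈ A, V * W ∈ A := fun V hV W hW =>
      ⟨mul_mem_finUltra le_rfl hV.1 hW.1, by rw [Ultrafilter.map_tetris_mul, hV.2, hW.2, hUU]⟩
    obtain ⟨W₀, hW₀⟩ := exists_map_tetris_eq hU
    obtain ⟨_, ⟨W, hW, rfl⟩, hV⟩ := exists_idempotent_in_compact_subsemigroup
      Ultrafilter.continuous_mul_left ((· * U) '' A) ⟨_, W₀, hW₀, rfl⟩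
      ((isClosed_finUltra_lift (k + 1) U).isCompact.image (Ultrafilter.continuous_mul_left U)) (by
        rintro _ ⟨V, hV, rfl⟩ _ ⟨V', hV', rfl⟩
        exact ⟨V * U * V', hAA _ (hA V hV) _ hV', mul_assoc _ _ _⟩)
    dsimp only at hV
    have hU' : (U * (W * U)).map (tetris 1) = U := by
      rw [Ultrafilter.map_tetris_mul, (hA W hW).2, hTU]
    refine ⟨U * (W * U), ?_, ?_, ?_, ?_⟩
    · intro n
      refine (Ultrafilter.eventually_mul U (W * U) (· ∈ finTail (k + 1) n)).2 ?_
      filter_upwards [hU n] with x hx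
      filter_upwards [(hA W hW).1 n] with y hy
      have := mul_mem_finTail (Nat.le_succ k) hy hx
      rwa [show x * y = y * x from funext fun i => max_comm _ _]
    · calc U * (W * U) * (U * (W * U)) = U * (W * (U * U) * (W * U)) := by simp only [mul_assoc]
        _ = U * (W * U) := by rw [hUU, hV]
    · rw [hU', ← mul_assoc, hUU]
    · rw [hU', mul_assoc, mul_assoc, hUU]

theorem map_tetris_mul_map_tetris {U : Ultrafilter SupFun} (hUU : U * U = U)
    (hTU : U.map (tetris 1) * U = U) (hUT : U * U.map (tetris 1) = U) (i j : ℕ) :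
    U.map (tetris i) * U.map (tetris j) = U.map (tetris (min i j)) := by
  have h0 : U.map (tetris 0) = U := by rw [tetris_zero, Ultrafilter.map_id]
  have hl : ∀ i, U.map (tetris i) * U = U := by
    intro i
    induction i with
    | zero => rw [h0, hUU]
    | succ i ih =>
      have h : U.map (tetris (i + 1)) * U.map (tetris i) = U.map (tetris i) := by
        rw [add_comm, ← Ultrafilter.map_tetris_tetris, ← Ultrafilter.map_tetris_mul, hTU]
      rw [← congrArg (U.map (tetris (i + 1)) * ·) ih, ← mul_assoc, h, ih]
  have hr : ∀ i, U * U.map (tetris i) = U := by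
    intro i
    induction i with
    | zero => rw [h0, hUU]
    | succ i ih =>
      have h : U.map (tetris i) * U.map (tetris (i + 1)) = U.map (tetris i) := by
        rw [add_comm, ← Ultrafilter.map_tetris_tetris, ← Ultrafilter.map_tetris_mul, hUT]
      rw [← congrArg (· * U.map (tetris (i + 1))) ih, mul_assoc, h, ih]
  rcases le_total i j with h | h
  · obtain ⟨d, rfl⟩ := Nat.exists_eq_add_of_le' h
    rw [min_eq_left h, ← Ultrafilter.map_tetris_tetris, ← Ultrafilter.map_tetris_mul, hr]
  · obtain ⟨d, rfl⟩ := Nat.exists_eq_add_of_le' h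
    rw [min_eq_right h, ← Ultrafilter.map_tetris_tetris, ← Ultrafilter.map_tetris_mul, hl]

end GowersUltrafilter

section Gowers

open Filter

attribute [local instance] Ultrafilter.mul Ultrafilter.semigroup

variable {m : ℕ}

/-- The partial combination `c` can be extended `U`-almost surely inside `O`; the proposition `b`
records whether some summand of `c` has been taken without applying the tetris operation. -/
def Extendable (m : ℕ) (U : Ultrafilter SupFun) (O : Set SupFun) (c : SupFun) (b : Prop) : Prop :=
  (b → c ∈ O) ∧ ∀ j ≤ m, b ∨ j = 0 → ∀ᶠ x in U, c * tetris j x ∈ O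

theorem Extendable.eventually {U : Ultrafilter SupFun} {O : Set SupFun} {c : SupFun} {b : Prop}
    (hU : ∀ i j, U.map (tetris i) * U.map (tetris j) = U.map (tetris (min i j)))
    (h : Extendable m U O c b) {j : ℕ} (hj : j ≤ m) :
    ∀ᶠ x in U, Extendable m U O (c * tetris j x) (b ∨ j = 0) := by
  refine Filter.Eventually.and ?_ ?_
  · by_cases hb : b ∨ j = 0
    · filter_upwards [h.2 j hj hb] with x hx _ using hx
    · exact Eventually.of_forall fun x hx => absurd hx hb
  · refine (eventually_all_finite (Set.finite_Iic m)).2 fun j' hj' => ?_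
    by_cases hb : (b ∨ j = 0) ∨ j' = 0
    · have h1 : ∀ᶠ x in U, c * tetris (min j j') x ∈ O :=
        h.2 _ ((min_le_left _ _).trans hj) (by
          rcases hb with (hb | hb) | hb
          · exact Or.inl hb
          · right; omega
          · right; omega)
      have h2 : ∀ᶠ w in (U.map (tetris j) * U.map (tetris j') : Ultrafilter SupFun),
          c * w ∈ O := by
        rw [hU]
        exact h1
      have h3 : ∀ᶠ x in U, ∀ᶠ y in U, c * (tetris j x * tetris j' y) ∈ O := h2
      filter_upwards [h3] with x hx _
      filter_upwards [hx] with y hy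
      rwa [mul_assoc]
    · exact Eventually.of_forall fun x hx => absurd hx hb

/-- Finite approximations to a homogeneous block sequence: a finite set of extendable partial
combinations together with a bound for the supports used so far. -/
def GowersStage (m : ℕ) (U : Ultrafilter SupFun) (O : Set SupFun) : Type :=
  {s : Set (SupFun × Prop) × ℕ // s.1.Finite ∧ ∀ c ∈ s.1, Extendable m U O c.1 c.2}

theorem GowersStage.exists_next {U : Ultrafilter SupFun} {O : Set SupFun}
    (hU : ∀ i j, U.map (tetris i) * U.map (tetris j) = U.map (tetris (min i j)))
    (hUm : U ∈ finUltra m) (s : GowersStage m U O) :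
    ∃ (x : SupFun) (s' : GowersStage m U O), x ∈ finTail m s.1.2 ∧ (∀ i, x i ≠ 0 → i < s'.1.2) ∧
      ∀ c ∈ s.1.1, ∀ j ≤ m, (c.1 * tetris j x, (c.2 ∨ j = 0)) ∈ s'.1.1 := by
  obtain ⟨⟨C, N⟩, hC, hext⟩ := s
  have h1 : ∀ᶠ x in U, ∀ c ∈ C, ∀ j ∈ Set.Iic m,
      Extendable m U O (c.1 * tetris j x) (c.2 ∨ j = 0) :=
    (eventually_all_finite hC).2 fun c hc =>
      (eventually_all_finite (Set.finite_Iic m)).2 fun j hj => (hext c hc).eventually hU hj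
  obtain ⟨x, hx, hxN⟩ := (h1.and (hUm N)).exists
  obtain ⟨M, hM⟩ := hxN.1.2.1.bddAbove
  refine ⟨x, ⟨⟨Set.image2 (fun c j => (c.1 * tetris j x, (c.2 ∨ j = 0))) C (Set.Iic m), M + 1⟩,
    hC.image2 _ (Set.finite_Iic m), ?_⟩, hxN, fun i hi => Nat.lt_succ_of_le (hM hi),
    fun c hc j hj => ⟨c, hc, j, hj, rfl⟩⟩
  rintro _ ⟨c, hc, j, hj, rfl⟩
  exact hx c hc j hj

/-- The partial combination `⋁_{n < k} T^{m - p n} (x n)`. -/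
def partialComb (m : ℕ) (x : ℕ → SupFun) (p : ℕ → ℕ) : ℕ → SupFun
  | 0 => SupFun.zero
  | k + 1 => partialComb m x p k * tetris (m - p k) (x k)

theorem le_partialComb_iff {x : ℕ → SupFun} {p : ℕ → ℕ} (hp : ∀ n, p n ≤ m) (k i : ℕ) {c : ℕ}
    (hc : 0 < c) : c ≤ partialComb m x p k i ↔ ∃ n < k, m + c ≤ x n i + p n := by
  induction k with
  | zero =>
    have : ¬ c ≤ SupFun.zero i := not_le.2 hc
    simpa [partialComb] using this
  | succ k ih =>
    rw [partialComb, SupFun.mul_apply, le_max_iff, ih, tetris_apply]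
    have := hp k
    constructor
    · rintro (⟨n, hn, h⟩ | h)
      · exact ⟨n, by omega, h⟩
      · exact ⟨k, by omega, by omega⟩
    · rintro ⟨n, hn, h⟩
      rcases Nat.lt_succ_iff_lt_or_eq.1 hn with h' | rfl
      · exact Or.inl ⟨n, h', h⟩
      · right; omega

theorem exists_blockSeq_of_mem_ultrafilter (hm : 0 < m) {U : Ultrafilter SupFun}
    {O : Set SupFun} (hU : ∀ i j, U.map (tetris i) * U.map (tetris j) = U.map (tetris (min i j)))
    (hUm : U ∈ finUltra m) (hO : O ∈ U) :
    ∃ x : ℕ → ℕ → ℕ, IsBlockSeq m x ∧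
      ∀ p ∈ FINm m, ∀ z : ℕ → ℕ, IsComb m x p z → z ∈ O := by
  choose x nxt hx hnxt hC using fun s : GowersStage m U O => s.exists_next hU hUm
  have h0 : Extendable m U O SupFun.zero False := by
    refine ⟨False.elim, fun j _ hj => ?_⟩
    obtain rfl : j = 0 := by simpa using hj
    filter_upwards [hO] with y hy
    have : SupFun.zero * tetris 0 y = y := funext fun i => Nat.zero_max (y i)
    rwa [this]
  let s₀ : GowersStage m U O :=
    ⟨⟨{(SupFun.zero, False)}, 0⟩, Set.finite_singleton _, by rintro _ rfl; exact h0⟩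
  let s : ℕ → GowersStage m U O := fun n => nxt^[n] s₀
  have hs : ∀ n, s (n + 1) = nxt (s n) := fun n => Function.iterate_succ_apply' _ _ _
  refine ⟨fun n => x (s n), ⟨fun n => (hx (s n)).1, fun n i j hi hj => ?_⟩, ?_⟩
  · have h1 := hnxt (s n) i hi
    rw [← hs] at h1
    by_contra h
    exact hj ((hx (s (n + 1))).2 j (by omega))
  · rintro p ⟨hp1, hp2, t, ht⟩ z hz
    have key : ∀ k, (partialComb m (fun n => x (s n)) p k, ∃ n < k, p n = m) ∈ (s k).1.1 := by
      intro k
      induction k with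
      | zero =>
        have : (∃ n < 0, p n = m) = False := by simp
        rw [this]
        rfl
      | succ k ih =>
        have h1 := hC (s k) _ ih (m - p k) (Nat.sub_le _ _)
        rw [← hs] at h1
        have : (∃ n < k + 1, p n = m) = ((∃ n < k, p n = m) ∨ m - p k = 0) := by
          have := hp1 k
          apply propext
          constructor
          · rintro ⟨n, hn, h⟩
            rcases Nat.lt_succ_iff_lt_or_eq.1 hn with h' | rfl
            · exact Or.inl ⟨n, h', h⟩
            · right; omega
          · rintro (⟨n, hn, h⟩ | h)
            · exact ⟨n, by omega, h⟩
            · exact ⟨k, by omega, by omega⟩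
        rw [this]
        exact h1
    obtain ⟨M, hM⟩ := hp2.bddAbove
    have hz' : z = partialComb m (fun n => x (s n)) p (M + 1) := by
      refine hz.unique fun i c hc => ?_
      rw [le_partialComb_iff hp1 _ _ hc]
      constructor
      · rintro ⟨n, -, h⟩
        exact ⟨n, h⟩
      · rintro ⟨n, h⟩
        have h1 : x (s n) i ≤ m := (hx (s n)).1.1 i
        have h2 : n ≤ M := hM (show p n ≠ 0 by
          change m + c ≤ x (s n) i + p n at h
          omega)
        exact ⟨n, by omega, h⟩
    rw [hz']
    have h2 : t ≤ M := hM (show p t ≠ 0 by omega)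
    exact ((s (M + 1)).2.2 _ (key (M + 1))).1 ⟨t, by omega, ht⟩

/-- Gowers' theorem: every subset of `FIN_m` is decided by the span of some block subsequence of
a given block sequence. -/
theorem exists_blockLe_homogeneous (hm : 0 < m) (X : BlockSeq m) (O : Set (ℕ → ℕ)) :
    ∃ Y : BlockSeq m, blockLe m Y X ∧
      (blockSpan m Y.val ⊆ O ∨ ∀ z ∈ blockSpan m Y.val, z ∉ O) := by
  obtain ⟨U, hUm, hUU, hTU, hUT⟩ := exists_gowers_ultrafilter m
  have hU := map_tetris_mul_map_tetris hUU hTU hUT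
  let O' : Set SupFun := {p | ∃ z ∈ O, IsComb m X.val p z}
  have main : ∀ O'' ∈ U, ∃ Y : BlockSeq m, blockLe m Y X ∧
      ∀ z ∈ blockSpan m Y.val, ∃ r ∈ O'', IsComb m X.val r z := by
    intro O'' hO''
    obtain ⟨x, hxb, hx⟩ := exists_blockSeq_of_mem_ultrafilter hm hU hUm hO''
    choose Y hY hYc using fun n => exists_isComb hm X.2.le (hxb.1 n) fun n _ => X.2.1 n
    have hYb : IsBlockSeq m Y := by
      refine ⟨hY, fun n i j hi hj => ?_⟩
      obtain ⟨k, hk⟩ := (hYc n i 1 one_pos).1 (Nat.one_le_iff_ne_zero.2 hi)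
      obtain ⟨l, hl⟩ := (hYc (n + 1) j 1 one_pos).1 (Nat.one_le_iff_ne_zero.2 hj)
      have h1 := X.2.le k i
      have h2 := X.2.le l j
      have h3 := hxb.le n k
      have h4 := hxb.le (n + 1) l
      exact X.2.suppLT hm (hxb.2 n k l (by omega) (by omega)) i j (by omega) (by omega)
    refine ⟨⟨Y, hYb⟩, fun n => (mem_blockSpan_iff hm X.2).2 ⟨x n, hxb.1 n, hYc n⟩, fun z hz => ?_⟩
    obtain ⟨p, hp, hpz⟩ := (mem_blockSpan_iff hm hYb).1 hz
    obtain ⟨r, hr, hrc⟩ := exists_isComb hm hxb.le hp fun n _ => hxb.1 n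
    exact ⟨r, hx p hp r hrc,
      IsComb.comp X.2.le hp.1 (fun n _ => hYc n) hYb.le hxb.le hrc hpz⟩
  rcases U.mem_or_compl_mem O' with h | h
  · obtain ⟨Y, hYX, hY⟩ := main _ h
    refine ⟨Y, hYX, Or.inl fun z hz => ?_⟩
    obtain ⟨r, ⟨z', hz', hc'⟩, hc⟩ := hY z hz
    rwa [hc.unique hc']
  · obtain ⟨Y, hYX, hY⟩ := main _ h
    refine ⟨Y, hYX, Or.inr fun z hz hzO => ?_⟩
    obtain ⟨r, hr, hc⟩ := hY z hz
    exact hr ⟨z, hzO, hc⟩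

end Gowers

section Fusion

variable {m : ℕ}

theorem blockLe_refl (X : BlockSeq m) : blockLe m X X :=
  fun n => term_mem_blockSpan X.val n

theorem blockLe.subset (hm : 0 < m) {X Y : BlockSeq m} (h : blockLe m Y X) :
    blockSpan m Y.val ⊆ blockSpan m X.val :=
  blockSpan_subset hm Y.2 X.2 h

theorem blockLe.trans (hm : 0 < m) {X Y Z : BlockSeq m} (hZY : blockLe m Z Y)
    (hYX : blockLe m Y X) : blockLe m Z X :=
  fun n => hYX.subset hm (hZY n)

/-- Every member of the span of `Y` lying to the right of all terms of `s` is in the span of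
`X`. -/
def LeAbove (m : ℕ) (s : List (ℕ → ℕ)) (Y X : BlockSeq m) : Prop :=
  ∀ y ∈ blockSpan m Y.val, (∀ x ∈ s, SuppLT x y) → y ∈ blockSpan m X.val

theorem blockLe.leAbove (hm : 0 < m) {X Y : BlockSeq m} (h : blockLe m Y X)
    (s : List (ℕ → ℕ)) : LeAbove m s Y X :=
  fun _ hy _ => h.subset hm hy

/-- The block sequences extending `s` all of whose further terms are in the span of `X`. -/
def extensions (m : ℕ) (s : List (ℕ → ℕ)) (X : BlockSeq m) : Set (BlockSeq m) :=
  {B | blockR m s.length B = s ∧ ∀ k, s.length ≤ k → B.val k ∈ blockSpan m X.val}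

theorem mem_blockR_iff {n : ℕ} {B : BlockSeq m} {x : ℕ → ℕ} :
    x ∈ blockR m n B ↔ ∃ i < n, B.val i = x := by
  simp only [blockR, List.mem_ofFn]
  constructor
  · rintro ⟨i, rfl⟩
    exact ⟨i, i.2, rfl⟩
  · rintro ⟨i, hi, rfl⟩
    exact ⟨⟨i, hi⟩, rfl⟩

theorem length_blockR (n : ℕ) (B : BlockSeq m) : (blockR m n B).length = n :=
  List.length_ofFn

theorem blockR_succ (n : ℕ) (B : BlockSeq m) : blockR m (n + 1) B = blockR m n B ++ [B.val n] := by
  rw [blockR, List.ofFn_succ', List.concat_eq_append]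
  rfl

theorem blockR_eq_iff {n : ℕ} {B C : BlockSeq m} :
    blockR m n B = blockR m n C ↔ ∀ i < n, B.val i = C.val i := by
  rw [blockR, blockR, List.ofFn_inj, funext_iff]
  exact ⟨fun h i hi => h ⟨i, hi⟩, fun h i => h i i.2⟩

theorem nodup_blockR (hm : 0 < m) (n : ℕ) (B : BlockSeq m) : (blockR m n B).Nodup := by
  rw [blockR, List.nodup_ofFn]
  intro i j hij
  obtain ⟨t, ht⟩ := (B.2.1 i).2.2
  refine Fin.ext (B.2.index_unique hm (i := t) (by omega) ?_)
  dsimp only at hij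
  rw [← hij]
  omega

theorem suppLT_of_mem_blockR (hm : 0 < m) {n k : ℕ} {B : BlockSeq m} (h : n ≤ k) :
    ∀ x ∈ blockR m n B, SuppLT x (B.val k) := by
  intro x hx
  obtain ⟨i, hi, rfl⟩ := mem_blockR_iff.1 hx
  exact B.2.suppLT hm (by omega)

theorem extensions_mono (hm : 0 < m) {s : List (ℕ → ℕ)} {X Y : BlockSeq m}
    (h : LeAbove m s Y X) : extensions m s Y ⊆ extensions m s X := by
  rintro B ⟨hs, hB⟩
  refine ⟨hs, fun k hk => h _ (hB k hk) ?_⟩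
  rw [← hs]
  exact suppLT_of_mem_blockR hm hk

theorem blockSpan_add (hm : 0 < m) (X : BlockSeq m) (N : ℕ) :
    ∃ Y : BlockSeq m, blockLe m Y X ∧ ∀ y ∈ blockSpan m Y.val, ∀ i < N, y i = 0 := by
  have hY : IsBlockSeq m fun n => X.val (n + N) :=
    ⟨fun n => X.2.1 _, fun n => X.2.suppLT hm (by omega)⟩
  refine ⟨⟨_, hY⟩, fun n => term_mem_blockSpan X.val (n + N), fun y hy i hi => ?_⟩
  obtain ⟨p, hp, hc⟩ := (mem_blockSpan_iff hm hY).1 hy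
  by_contra h0
  obtain ⟨n, hn⟩ := (hc i 1 one_pos).1 (Nat.one_le_iff_ne_zero.2 h0)
  change m + 1 ≤ X.val (n + N) i + p n at hn
  have := hp.1 n
  have := X.2.index_le hm (n := n + N) (i := i) (by omega)
  omega

theorem finite_FINm_below (m N : ℕ) : {z | z ∈ FINm m ∧ ∀ i, N ≤ i → z i = 0}.Finite := by
  let f : (Fin N → Fin (m + 1)) → ℕ → ℕ := fun g i => if h : i < N then g ⟨i, h⟩ else 0
  refine (Set.finite_range f).subset ?_
  rintro z ⟨hz, hz0⟩
  refine ⟨fun i => ⟨z i, Nat.lt_succ_of_le (hz.1 i)⟩, funext fun i => ?_⟩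
  by_cases h : i < N
  · exact dif_pos h
  · exact (dif_neg h).trans (hz0 i (not_lt.1 h)).symm

theorem Set.Finite.finite_nodup_lists {α : Type*} {F : Set α} (hF : F.Finite) :
    {s : List α | s.Nodup ∧ ∀ x ∈ s, x ∈ F}.Finite := by
  classical
  have := hF.fintype
  refine (Set.finite_range fun l : {l : List F // l.Nodup} => l.1.map Subtype.val).subset ?_
  rintro s ⟨hs, hsF⟩
  lift s to List F using hsF
  exact ⟨⟨s, List.Nodup.of_map _ hs⟩, rfl⟩

/-- Fusion: a property of pairs `(s, X)` that can be achieved by shrinking `X` and is inherited by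
the part of the span above `s` can be achieved for all `s` in the span simultaneously. -/
theorem exists_fusion (hm : 0 < m) {D : List (ℕ → ℕ) → BlockSeq m → Prop}
    (hmono : ∀ s X Y, LeAbove m s Y X → D s X → D s Y)
    (hdense : ∀ s : List (ℕ → ℕ), (∀ x ∈ s, x ∈ FINm m) → ∀ X, ∃ Y, blockLe m Y X ∧ D s Y)
    (X : BlockSeq m) :
    ∃ Y, blockLe m Y X ∧ ∀ s : List (ℕ → ℕ), s.Nodup → (∀ x ∈ s, x ∈ blockSpan m Y.val) →
      D s Y := by
  have hfin : ∀ T : Set (List (ℕ → ℕ)), T.Finite → (∀ s ∈ T, ∀ x ∈ s, x ∈ FINm m) →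
      ∀ X, ∃ Y, blockLe m Y X ∧ ∀ s ∈ T, D s Y := by
    intro T hT
    induction T, hT using Set.Finite.induction_on with
    | empty => exact fun _ X => ⟨X, blockLe_refl X, by simp⟩
    | @insert s T _ _ ih =>
      intro h X
      obtain ⟨Y, hYX, hY⟩ := ih (fun s hs => h s (Set.mem_insert_of_mem _ hs)) X
      obtain ⟨Z, hZY, hZ⟩ := hdense s (h s (Set.mem_insert _ _)) Y
      refine ⟨Z, hZY.trans hm hYX, ?_⟩
      rintro t (rfl | ht)
      · exact hZ
      · exact hmono t Y Z (hZY.leAbove hm t) (hY t ht)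
  have hstep : ∀ (X : BlockSeq m) (N : ℕ), ∃ Z, blockLe m Z X ∧
      (∀ s : List (ℕ → ℕ), s.Nodup → (∀ x ∈ s, x ∈ FINm m ∧ ∀ i, N ≤ i → x i = 0) → D s Z) ∧
      (∀ i < N, Z.val 0 i = 0) ∧ ∃ M, ∀ i, M ≤ i → Z.val 0 i = 0 := by
    intro X N
    obtain ⟨Y, hYX, hY⟩ := hfin _ (finite_FINm_below m N).finite_nodup_lists
      (fun s hs x hx => (hs.2 x hx).1) X
    obtain ⟨Z, hZY, hZ⟩ := blockSpan_add hm Y N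
    obtain ⟨M, hM⟩ := (Z.2.1 0).2.1.bddAbove
    refine ⟨Z, hZY.trans hm hYX,
      fun s hs h => hmono s Y Z (hZY.leAbove hm s) (hY s ⟨hs, h⟩),
      hZ _ (term_mem_blockSpan _ 0), M + 1, fun i hi => ?_⟩
    by_contra h
    have := hM h
    omega
  choose! Z hZX hZD hZN M hM using hstep
  let st : ℕ → BlockSeq m × ℕ := fun k => (fun a => (Z a.1 a.2, M a.1 a.2))^[k] (X, 0)
  have hst : ∀ k, st (k + 1) = (Z (st k).1 (st k).2, M (st k).1 (st k).2) :=
    fun k => Function.iterate_succ_apply' _ _ _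
  obtain ⟨V, N, hN0, hV0, hVle, hVD, hVlow, hVup⟩ : ∃ (V : ℕ → BlockSeq m) (N : ℕ → ℕ), N 0 = 0 ∧
      blockLe m (V 0) X ∧ (∀ k, blockLe m (V (k + 1)) (V k)) ∧
      (∀ k (s : List (ℕ → ℕ)), s.Nodup → (∀ x ∈ s, x ∈ FINm m ∧ ∀ i, N k ≤ i → x i = 0) →
        D s (V k)) ∧
      (∀ k, ∀ i < N k, (V k).val 0 i = 0) ∧ ∀ k i, N (k + 1) ≤ i → (V k).val 0 i = 0 := by
    refine ⟨fun k => Z (st k).1 (st k).2, fun k => (st k).2, rfl, hZX _ _, fun k => ?_,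
      fun k => hZD _ _, fun k => hZN _ _, fun k i hi => hM _ _ i ?_⟩
    · refine blockLe.trans hm (hZX (st (k + 1)).1 (st (k + 1)).2) ?_
      rw [hst]
      exact blockLe_refl _
    · exact (congrArg Prod.snd (hst k)).symm.trans_le hi
  have hle : ∀ k l, k ≤ l → blockLe m (V l) (V k) := by
    intro k l h
    induction l, h using Nat.le_induction with
    | base => exact blockLe_refl _
    | succ l _ ih => exact (hVle l).trans hm ih
  have hNmono : StrictMono N := by
    refine strictMono_nat_of_lt_succ fun k => ?_
    obtain ⟨t, ht⟩ := ((V k).2.1 0).2.2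
    by_contra h
    rcases Nat.lt_or_ge t (N k) with h1 | h1
    · have := hVlow k t h1
      omega
    · have := hVup k t (by omega)
      omega
  obtain ⟨f, hf⟩ : ∃ f : ℕ → ℕ → ℕ, ∀ k, f k = (V k).val 0 := ⟨_, fun _ => rfl⟩
  have hYb : IsBlockSeq m f := by
    refine ⟨fun k => hf k ▸ (V k).2.1 0, fun n i j hi hj => ?_⟩
    by_contra hij
    rw [hf] at hi hj
    rcases Nat.lt_or_ge j (N (n + 1)) with h | h
    · exact hj (hVlow _ j h)
    · exact hi (hVup _ i (by omega))
  let Y : BlockSeq m := ⟨_, hYb⟩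
  have hYmem : ∀ k l, k ≤ l → f l ∈ blockSpan m (V k).val := fun k l h =>
    (hf l).symm ▸ (hle k l h).subset hm (term_mem_blockSpan _ 0)
  refine ⟨Y, fun n => hV0.subset hm (hYmem 0 n (Nat.zero_le _)), fun s hs hsY => ?_⟩
  have hsF : ∀ x ∈ s, x ∈ FINm m := fun x hx => mem_FINm_of_mem_blockSpan hm hYb (hsY x hx)
  have hex : ∃ k, ∀ x ∈ s, ∀ i, N k ≤ i → x i = 0 := by
    obtain ⟨b, hb⟩ := (s.finite_toSet.biUnion fun x hx => (hsF x hx).2.1).bddAbove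
    refine ⟨b + 1, fun x hx i hi => ?_⟩
    by_contra h
    have h1 : i ≤ b := hb (Set.mem_biUnion hx h)
    have h2 := hNmono.le_apply (x := b + 1)
    omega
  classical
  refine hmono s (V (Nat.find hex)) Y (fun y hy hlt => ?_)
    (hVD _ s hs fun x hx => ⟨hsF x hx, Nat.find_spec hex x hx⟩)
  obtain ⟨q, hq, hqc⟩ := (mem_blockSpan_iff hm hYb).1 hy
  refine hqc.mem_blockSpan hm hYb (V _).2 hq fun n hn => hYmem _ n ?_
  by_contra hnk
  have hmin := Nat.find_min hex (m := Nat.find hex - 1) (by omega)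
  push Not at hmin
  obtain ⟨x, hx, i, hi, hxi⟩ := hmin
  obtain ⟨p, hp, hpc⟩ := (mem_blockSpan_iff hm hYb).1 (hsY x hx)
  obtain ⟨l, hl⟩ := (hpc i 1 one_pos).1 (Nat.one_le_iff_ne_zero.2 hxi)
  have hYli := hYb.le l i
  have hpl := hp.1 l
  have hnl : n ≤ l := by
    by_contra h
    have := hVup l i ((hNmono.monotone (by omega)).trans hi)
    rw [← hf] at this
    omega
  obtain ⟨t, ht⟩ := (hYb.1 n).2.2
  have hyt := (hqc t 1 one_pos).2 ⟨n, by omega⟩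
  obtain ⟨u, hu⟩ := (hYb.1 l).2.2
  have hxu := (hpc u 1 one_pos).2 ⟨l, by omega⟩
  rcases hnl.lt_or_eq with h | rfl
  · exact lt_asymm (hYb.suppLT hm h t u (by omega) (by omega))
      (hlt x hx u t (by omega) (by omega))
  · have hxt := (hpc t 1 one_pos).2 ⟨n, by omega⟩
    exact lt_irrefl _ (hlt x hx t t (by omega) (by omega))

end Fusion

section EllentuckTheorem

variable {m : ℕ}

theorem LeAbove.trans {s : List (ℕ → ℕ)} {X Y Z : BlockSeq m} (hZY : LeAbove m s Z Y)
    (hYX : LeAbove m s Y X) : LeAbove m s Z X :=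
  fun z hz hlt => hYX z (hZY z hz hlt) hlt

theorem mem_extensions_blockR {a : List (ℕ → ℕ)} {B Y : BlockSeq m} (hB : B ∈ extensions m a Y)
    {n : ℕ} (hn : a.length ≤ n) : B ∈ extensions m (blockR m n B) Y := by
  refine ⟨by rw [length_blockR], fun k hk => hB.2 k ?_⟩
  rw [length_blockR] at hk
  exact hn.trans hk

theorem extensions_blockR_subset_of_le {B : BlockSeq m} {k n : ℕ} (h : k ≤ n) :
    extensions m (blockR m n B) B ⊆ extensions m (blockR m k B) B := by
  rintro C ⟨hC, hC'⟩
  rw [length_blockR] at hC hC'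
  rw [blockR_eq_iff] at hC
  refine ⟨?_, fun i hi => ?_⟩
  · rw [length_blockR, blockR_eq_iff]
    exact fun i hi => hC i (by omega)
  · rcases Nat.lt_or_ge i n with h1 | h1
    · rw [hC i h1]
      exact term_mem_blockSpan _ i
    · exact hC' i h1

theorem exists_fusion_above (hm : 0 < m) {D : List (ℕ → ℕ) → BlockSeq m → Prop}
    (hmono : ∀ s X Y, LeAbove m s Y X → D s X → D s Y)
    (hdense : ∀ s : List (ℕ → ℕ), (∀ x ∈ s, x ∈ FINm m) → ∀ X, ∃ Y, blockLe m Y X ∧ D s Y)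
    {a : List (ℕ → ℕ)} (ha : ∀ x ∈ a, x ∈ FINm m) (X : BlockSeq m) :
    ∃ Y, blockLe m Y X ∧ ∀ B ∈ extensions m a Y, ∀ n, a.length ≤ n → D (blockR m n B) Y := by
  obtain ⟨Y, hYX, hY⟩ := exists_fusion hm (D := fun s => D (a ++ s))
    (fun s X Y h => hmono (a ++ s) X Y fun y hy hlt =>
      h y hy fun x hx => hlt x (List.mem_append_right _ hx))
    (fun s hs => hdense (a ++ s) fun x hx => (List.mem_append.1 hx).elim (ha x) (hs x)) X
  refine ⟨Y, hYX, fun B hB n hn => ?_⟩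
  obtain ⟨d, rfl⟩ := Nat.exists_eq_add_of_le hn
  let s : List (ℕ → ℕ) := List.ofFn fun i : Fin d => B.val (a.length + i)
  have happ : blockR m (a.length + d) B = a ++ s := by
    conv_rhs => rw [← hB.1]
    exact List.ofFn_add
  rw [happ]
  refine hY s ?_ fun x hx => ?_
  · have := nodup_blockR hm (a.length + d) B
    rw [happ] at this
    exact this.of_append_right
  · obtain ⟨i, rfl⟩ := List.mem_ofFn.1 hx
    exact hB.2 _ (Nat.le_add_right _ _)

theorem exists_blockLe_of_leAbove (hm : 0 < m) {s : List (ℕ → ℕ)} (hs : ∀ x ∈ s, x ∈ FINm m)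
    {X Y : BlockSeq m} (h : LeAbove m s Y X) :
    ∃ Z, blockLe m Z Y ∧ blockLe m Z X := by
  obtain ⟨b, hb⟩ := (s.finite_toSet.biUnion fun x hx => (hs x hx).2.1).bddAbove
  obtain ⟨Z, hZY, hZ⟩ := blockSpan_add hm Y (b + 1)
  refine ⟨Z, hZY, fun n => h _ (hZY n) fun x hx i j hi hj => ?_⟩
  have h1 : i ≤ b := hb (Set.mem_biUnion hx hi)
  by_contra h2
  exact hj (hZ _ (term_mem_blockSpan _ n) j (by omega))

/-- Sets open in the Ellentuck sense are completely Ramsey. -/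
theorem exists_extensions_subset_or_disjoint (hm : 0 < m) {U : Set (BlockSeq m)}
    (hU : ∀ B ∈ U, ∃ n, extensions m (blockR m n B) B ⊆ U)
    {a : List (ℕ → ℕ)} (ha : ∀ x ∈ a, x ∈ FINm m) (X : BlockSeq m) :
    ∃ Y, blockLe m Y X ∧ (extensions m a Y ⊆ U ∨ ∀ B ∈ extensions m a Y, B ∉ U) := by
  obtain ⟨X₀, hX₀, hdec⟩ := exists_fusion_above hm
    (D := fun s X => extensions m s X ⊆ U ∨ ∀ Y, LeAbove m s Y X → ¬ extensions m s Y ⊆ U)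
    (by
      rintro s X Y h (h1 | h1)
      · exact Or.inl ((extensions_mono hm h).trans h1)
      · exact Or.inr fun Z hZ => h1 Z (hZ.trans h))
    (by
      intro s hs X
      by_cases h : ∃ Y, LeAbove m s Y X ∧ extensions m s Y ⊆ U
      · obtain ⟨Y, hYX, hY⟩ := h
        obtain ⟨Z, hZY, hZX⟩ := exists_blockLe_of_leAbove hm hs hYX
        exact ⟨Z, hZX, Or.inl ((extensions_mono hm (hZY.leAbove hm s)).trans hY)⟩
      · push Not at h
        exact ⟨X, blockLe_refl X, Or.inr h⟩) ha X
  by_cases hacc : extensions m a X₀ ⊆ U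
  · exact ⟨X₀, hX₀, Or.inl hacc⟩
  have hrej : ∀ Y, LeAbove m a Y X₀ → ¬ extensions m a Y ⊆ U := by
    obtain ⟨B, hB, -⟩ := Set.not_subset.1 hacc
    have := hdec B hB a.length le_rfl
    rw [hB.1] at this
    exact this.resolve_left hacc
  obtain ⟨Y, hYX, hY⟩ := exists_fusion_above hm
    (D := fun s Y =>
      (∀ y ∈ blockSpan m Y.val, (∀ x ∈ s, SuppLT x y) → extensions m (s ++ [y]) X₀ ⊆ U) ∨
      (∀ y ∈ blockSpan m Y.val, (∀ x ∈ s, SuppLT x y) → ¬ extensions m (s ++ [y]) X₀ ⊆ U))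
    (by
      rintro s X Y h (h1 | h1)
      · exact Or.inl fun y hy hlt => h1 y (h y hy hlt) hlt
      · exact Or.inr fun y hy hlt => h1 y (h y hy hlt) hlt)
    (by
      intro s _ X
      obtain ⟨Y, hYX, hY⟩ :=
        exists_blockLe_homogeneous hm X {y | extensions m (s ++ [y]) X₀ ⊆ U}
      refine ⟨Y, hYX, ?_⟩
      rcases hY with hY | hY
      · exact Or.inl fun y hy _ => hY hy
      · exact Or.inr fun y hy _ => hY y hy) ha X₀
  refine ⟨Y, hYX.trans hm hX₀, Or.inr fun B hB hBU => ?_⟩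
  have hB₀ : B ∈ extensions m a X₀ := extensions_mono hm (hYX.leAbove hm a) hB
  have key : ∀ n, a.length ≤ n → ∀ Z, LeAbove m (blockR m n B) Z X₀ →
      ¬ extensions m (blockR m n B) Z ⊆ U := by
    intro n hn
    induction n, hn using Nat.le_induction with
    | base =>
      rw [hB.1]
      exact hrej
    | succ n hn ih =>
      rcases hY B hB n hn with h | h
      · refine absurd (fun C hC => ?_) (ih Y (hYX.leAbove hm _))
        have hCr := hC.1
        have hCn := hC.2 n (by rw [length_blockR])
        rw [length_blockR] at hCr
        have hlt := suppLT_of_mem_blockR hm (le_refl n) (B := C)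
        rw [hCr] at hlt
        refine h (C.val n) hCn hlt ?_
        rw [← hCr, ← blockR_succ]
        exact extensions_mono hm (hYX.leAbove hm _)
          (mem_extensions_blockR hC (by rw [length_blockR]; omega))
      · have h1 := h (B.val n) (hB.2 n hn) (suppLT_of_mem_blockR hm le_rfl)
        rw [← blockR_succ] at h1
        exact (hdec B hB₀ (n + 1) (by omega)).resolve_left h1
  obtain ⟨n, hn⟩ := hU B hBU
  refine key (max a.length n) (le_max_left _ _) B ?_
    ((extensions_blockR_subset_of_le (le_max_right _ _)).trans hn)
  intro y hy hlt
  exact hYX.subset hm (mem_blockSpan_of_suppLT hm B.2 Y.2 (k := max a.length n) hy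
    (fun i hi => hlt _ (mem_blockR_iff.2 ⟨i, hi, rfl⟩))
    fun k hk => hB.2 k ((le_max_left _ _).trans hk))

theorem exists_extensions_disjoint_iUnion (hm : 0 < m) {C : ℕ → Set (BlockSeq m)}
    (hC : ∀ n (s : List (ℕ → ℕ)), (∀ x ∈ s, x ∈ FINm m) → ∀ X, ∃ Y, blockLe m Y X ∧
      ∀ B ∈ extensions m s Y, B ∉ C n)
    {a : List (ℕ → ℕ)} (ha : ∀ x ∈ a, x ∈ FINm m) (X : BlockSeq m) :
    ∃ Y, blockLe m Y X ∧ ∀ B ∈ extensions m a Y, ∀ n, B ∉ C n := by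
  obtain ⟨Y, hYX, hY⟩ := exists_fusion_above hm
    (D := fun s Y => ∀ n ≤ s.length, ∀ B ∈ extensions m s Y, B ∉ C n)
    (fun s X Y h h1 n hn B hB => h1 n hn B (extensions_mono hm h hB))
    (by
      intro s hs X
      suffices h : ∀ N, ∃ Y, blockLe m Y X ∧ ∀ n < N, ∀ B ∈ extensions m s Y, B ∉ C n by
        obtain ⟨Y, hYX, hY⟩ := h (s.length + 1)
        exact ⟨Y, hYX, fun n hn => hY n (Nat.lt_succ_of_le hn)⟩
      intro N
      induction N with
      | zero => exact ⟨X, blockLe_refl X, fun n hn => absurd hn (Nat.not_lt_zero n)⟩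
      | succ N ih =>
        obtain ⟨Y, hYX, hY⟩ := ih
        obtain ⟨Z, hZY, hZ⟩ := hC N s hs Y
        refine ⟨Z, hZY.trans hm hYX, fun n hn B hB => ?_⟩
        rcases Nat.lt_succ_iff_lt_or_eq.1 hn with h | rfl
        · exact hY n h B (extensions_mono hm (hZY.leAbove hm s) hB)
        · exact hZ B hB) ha X
  exact ⟨Y, hYX, fun B hB n => hY B hB (max a.length n) (le_max_left _ _) n
    (by rw [length_blockR]; exact le_max_right _ _) B
    (mem_extensions_blockR hB (le_max_left _ _))⟩

theorem extensions_blockR_subset_ellSet (hm : 0 < m) {a : List (ℕ → ℕ)} {A B : BlockSeq m}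
    (hB : B ∈ EllSet (blockLe m) (blockR m) a A) :
    extensions m (blockR m a.length B) B ⊆ EllSet (blockLe m) (blockR m) a A := by
  obtain ⟨hBA, n, rfl⟩ := hB
  rw [length_blockR]
  intro C hC
  have h1 := extensions_blockR_subset_of_le (Nat.zero_le n) hC
  refine ⟨blockLe.trans hm (fun i => h1.2 i (Nat.zero_le i)) hBA, n, ?_⟩
  simpa only [length_blockR] using hC.1

theorem exists_extensions_subset_of_isOpen (hm : 0 < m) {U : Set (BlockSeq m)}
    (hU : IsOpen[EllTop (blockLe m) (blockR m)] U) :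
    ∀ B ∈ U, ∃ n, extensions m (blockR m n B) B ⊆ U := by
  induction hU with
  | basic s hs =>
    obtain ⟨a, A, rfl⟩ := hs
    exact fun B hB => ⟨a.length, extensions_blockR_subset_ellSet hm hB⟩
  | univ => exact fun _ _ => ⟨0, Set.subset_univ _⟩
  | inter s t _ _ ihs iht =>
    rintro B ⟨hBs, hBt⟩
    obtain ⟨k, hk⟩ := ihs B hBs
    obtain ⟨n, hn⟩ := iht B hBt
    exact ⟨max k n, Set.subset_inter
      ((extensions_blockR_subset_of_le (le_max_left _ _)).trans hk)
      ((extensions_blockR_subset_of_le (le_max_right _ _)).trans hn)⟩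
  | sUnion S _ ih =>
    rintro B ⟨s, hs, hBs⟩
    obtain ⟨n, hn⟩ := ih s hs B hBs
    exact ⟨n, hn.trans (Set.subset_sUnion_of_mem hs)⟩

theorem isOpen_extensions (hm : 0 < m) (a : List (ℕ → ℕ)) (X : BlockSeq m) :
    IsOpen[EllTop (blockLe m) (blockR m)] (extensions m a X) := by
  let _ := EllTop (blockLe m) (blockR m)
  refine isOpen_iff_forall_mem_open.2 fun B hB => ?_
  refine ⟨EllSet (blockLe m) (blockR m) a B, ?_, TopologicalSpace.isOpen_generateFrom_of_mem
    ⟨a, B, rfl⟩, blockLe_refl B, a.length, hB.1⟩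
  rintro C ⟨hCB, n, hn⟩
  have hna : n = a.length := by rw [← hn, length_blockR]
  rw [hna] at hn
  refine ⟨hn, fun k hk => mem_blockSpan_of_suppLT hm B.2 X.2 (hCB k) (k := a.length)
    (fun i hi => ?_) hB.2⟩
  refine suppLT_of_mem_blockR hm hk _ ?_
  have h1 := hB.1
  rw [hn]
  exact h1 ▸ mem_blockR_iff.2 ⟨i, hi, rfl⟩

theorem exists_mem_ellSet_subset_extensions (hm : 0 < m) {a : List (ℕ → ℕ)} {A Y : BlockSeq m}
    (h : (EllSet (blockLe m) (blockR m) a A).Nonempty) (hYA : blockLe m Y A) :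
    ∃ B ∈ EllSet (blockLe m) (blockR m) a A,
      EllSet (blockLe m) (blockR m) a B ⊆ extensions m a Y := by
  obtain ⟨C, hCA, n, rfl⟩ := h
  obtain ⟨b, hb⟩ := ((Set.finite_Iio n).biUnion fun i _ => (C.2.1 i).2.1).bddAbove
  obtain ⟨Z, hZY, hZ⟩ := blockSpan_add hm Y (b + 1)
  obtain ⟨f, hf1, hf2⟩ : ∃ f : ℕ → ℕ → ℕ, (∀ k < n, f k = C.val k) ∧
      ∀ k, n ≤ k → f k = Z.val (k - n) :=
    ⟨fun k => if k < n then C.val k else Z.val (k - n), fun k hk => if_pos hk,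
      fun k hk => if_neg (not_lt.2 hk)⟩
  have hf : IsBlockSeq m f := by
    refine ⟨fun k => ?_, fun k => ?_⟩
    · rcases Nat.lt_or_ge k n with h | h
      · rw [hf1 k h]
        exact C.2.1 k
      · rw [hf2 k h]
        exact Z.2.1 _
    · rcases Nat.lt_or_ge (k + 1) n with h | h
      · rw [hf1 k (by omega), hf1 _ h]
        exact C.2.2 k
      · rw [hf2 _ h]
        rcases Nat.lt_or_ge k n with h' | h'
        · rw [hf1 k h']
          intro i j hi hj
          have h1 : i ≤ b := hb (Set.mem_biUnion (Set.mem_Iio.2 h') hi)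
          by_contra h2
          exact hj (hZ _ (term_mem_blockSpan _ _) j (by omega))
        · rw [hf2 k h', show k + 1 - n = (k - n) + 1 by omega]
          exact Z.2.2 _
  let B : BlockSeq m := ⟨f, hf⟩
  have hBC : blockR m n B = blockR m n C := blockR_eq_iff.2 hf1
  have hBY : ∀ k, n ≤ k → B.val k ∈ blockSpan m Y.val := by
    intro k hk
    change f k ∈ _
    rw [hf2 k hk]
    exact hZY _
  refine ⟨B, ⟨fun k => ?_, n, hBC⟩, ?_⟩
  · rcases Nat.lt_or_ge k n with h | h
    · change f k ∈ _
      rw [hf1 k h]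
      exact hCA k
    · exact hYA.subset hm (hBY k h)
  · rintro D ⟨hDB, l, hl⟩
    have hln : l = n := by
      have := congrArg List.length hl
      rwa [length_blockR, length_blockR] at this
    subst hln
    refine ⟨by rwa [length_blockR], fun k hk => ?_⟩
    rw [length_blockR] at hk
    refine mem_blockSpan_of_suppLT hm hf Y.2 (hDB k) (k := l) (fun i hi => ?_) hBY
    refine suppLT_of_mem_blockR hm hk _ ?_
    rw [hl, ← hBC]
    exact mem_blockR_iff.2 ⟨i, hi, rfl⟩

theorem mem_FINm_of_ellSet_nonempty {a : List (ℕ → ℕ)} {A : BlockSeq m}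
    (h : (EllSet (blockLe m) (blockR m) a A).Nonempty) : ∀ x ∈ a, x ∈ FINm m := by
  obtain ⟨C, -, n, rfl⟩ := h
  intro x hx
  obtain ⟨i, -, rfl⟩ := mem_blockR_iff.1 hx
  exact C.2.1 i

/-- Ellentuck-meager sets are completely Ramsey null. -/
theorem exists_extensions_disjoint_of_isMeagre (hm : 0 < m) {M : Set (BlockSeq m)}
    (hM : @IsMeagre _ (EllTop (blockLe m) (blockR m)) M)
    {a : List (ℕ → ℕ)} (ha : ∀ x ∈ a, x ∈ FINm m) (X : BlockSeq m) :
    ∃ Y, blockLe m Y X ∧ ∀ B ∈ extensions m a Y, B ∉ M := by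
  let _ := EllTop (blockLe m) (blockR m)
  obtain ⟨S, hSo, hSd, hSc, hS⟩ := mem_residual_iff.1 hM
  obtain ⟨f, hf⟩ := (hSc.insert Set.univ).exists_eq_range (Set.insert_nonempty _ _)
  have hfo : ∀ n, IsOpen (f n) ∧ Dense (f n) := by
    intro n
    rcases (hf ▸ Set.mem_range_self n : f n ∈ insert Set.univ S) with h | h
    · rw [h]
      exact ⟨isOpen_univ, dense_univ⟩
    · exact ⟨hSo _ h, hSd _ h⟩
  obtain ⟨Y, hYX, hY⟩ := exists_extensions_disjoint_iUnion hm (C := fun n => (f n)ᶜ) (by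
    intro n s hs X
    obtain ⟨Y, hYX, hY⟩ := exists_extensions_subset_or_disjoint hm
      (exists_extensions_subset_of_isOpen hm (hfo n).1) hs X
    refine ⟨Y, hYX, fun B hB => not_not.2 ?_⟩
    rcases hY with hY | hY
    · exact hY hB
    · obtain ⟨C, hC, hCf⟩ := (hfo n).2.inter_open_nonempty _ (isOpen_extensions hm s Y) ⟨B, hB⟩
      exact absurd hCf (hY C hC)) ha X
  refine ⟨Y, hYX, fun B hB hBM => hS (fun t ht => ?_) hBM⟩
  obtain ⟨n, rfl⟩ : t ∈ Set.range f := hf ▸ Set.mem_insert_of_mem _ ht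
  exact not_not.1 (hY B hB n)

end EllentuckTheorem

/-- **Theorem (Todorcevic).** For every `m > 0`, `(FIN_m^[∞], ≤, r)` is a
topological Ramsey space. -/
theorem finm_is_topological_ramsey_space (m : ℕ) (hm : 0 < m) :
    IsTopRamseySpace (blockLe m) (blockR m) := by
  have hnull : ∀ S : Set (BlockSeq m), @IsMeagre _ (EllTop (blockLe m) (blockR m)) S →
      IsRamseyNullSet (blockLe m) (blockR m) S := by
    intro S hS a A h
    obtain ⟨Y, hYA, hY⟩ :=
      exists_extensions_disjoint_of_isMeagre hm hS (mem_FINm_of_ellSet_nonempty h) A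
    obtain ⟨B, hB, hBY⟩ := exists_mem_ellSet_subset_extensions hm h hYA
    exact ⟨B, hB, Set.eq_empty_of_forall_notMem fun C hC => hY C (hBY hC.1) hC.2⟩
  refine ⟨?_, hnull⟩
  rintro S ⟨U, M, hU, hM, rfl⟩ a A h
  have ha := mem_FINm_of_ellSet_nonempty h
  obtain ⟨Y, hYA, hY⟩ := exists_extensions_disjoint_of_isMeagre hm hM ha A
  obtain ⟨Z, hZY, hZ⟩ := exists_extensions_subset_or_disjoint hm
    (exists_extensions_subset_of_isOpen hm hU) ha Y
  obtain ⟨B, hB, hBZ⟩ := exists_mem_ellSet_subset_extensions hm h (hZY.trans hm hYA)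
  have hBM : ∀ C ∈ EllSet (blockLe m) (blockR m) a B, C ∉ M := fun C hC =>
    hY C (extensions_mono hm (hZY.leAbove hm a) (hBZ hC))
  refine ⟨B, hB, hZ.imp (fun hZ C hC => Or.inl ⟨hZ (hBZ hC), hBM C hC⟩) fun hZ => ?_⟩
  refine Set.eq_empty_of_forall_notMem ?_
  rintro C ⟨hC, hC' | hC'⟩
  · exact hZ C (hBZ hC) hC'.1
  · exact hBM C hC hC'.1
end

section
/- For every t < ω, the triple (S_t(ω;ω), ≤, r) is a topological Ramsey space. -/
open Topology

/-- The space `S_t(ω;ω)` of parameter words: surjections `A : t+ω → t+ω`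
which are the identity below `t` and whose classes are ordered by their
minima (`min A^{-1}({j}) < min A^{-1}({j'})` for `j < j'`). -/
def St (t : ℕ) : Set (ℕ → ℕ) :=
  {A | (∀ j, ∃ i, A i = j) ∧ (∀ i < t, A i = i) ∧
       ∀ j j', j < j' → ∃ i, A i = j ∧ ∀ i', A i' = j' → i < i'}

/-- The space `S_t(ω;k)`: surjections `A : t+ω → t+k` which are the identity
below `t` and whose classes are ordered by their minima. -/
def StK (t k : ℕ) : Set (ℕ → ℕ) :=
  {A | (∀ i, A i < t + k) ∧ (∀ j < t + k, ∃ i, A i = j) ∧ (∀ i < t, A i = i) ∧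
       ∀ j j', j < j' → j' < t + k → ∃ i, A i = j ∧ ∀ i', A i' = j' → i < i'}

/-- The composition `(A·B)(i) = B(A(i))`. -/
def compP (A B : ℕ → ℕ) : ℕ → ℕ := fun i => B (A i)

/-- The approximation map: `r(0,A) = ∅` and, for `n > 0`, `r(n,A)` is the
restriction of `A` to the initial segment `{0, …, min A^{-1}({t+n}) − 1}`. -/
noncomputable def rP (t : ℕ) (n : ℕ) (A : ℕ → ℕ) : List ℕ :=
  if n = 0 then [] else List.ofFn fun i : Fin (sInf {i | A i = t + n}) => A i

/-- Surjections `ℕ → ℕ` fixing every `i < t`, in which every value first occurs after all smaller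
values have occurred. -/
structure RigidSurj (t : ℕ) (A : ℕ → ℕ) : Prop where
  fix : ∀ i < t, A i = i
  grow : ∀ i j, j < A i → ∃ i' < i, A i' = j
  surj : ∀ j, ∃ i, A i = j

theorem mem_St_iff {t : ℕ} {A : ℕ → ℕ} : A ∈ St t ↔ RigidSurj t A := by
  constructor
  · rintro ⟨hs, hf, hm⟩
    refine ⟨hf, fun i j hj => ?_, hs⟩
    obtain ⟨i', h1, h2⟩ := hm j (A i) hj
    exact ⟨i', h2 i rfl, h1⟩
  · intro h
    classical
    refine ⟨h.surj, h.fix, fun j j' hj => ⟨Nat.find (h.surj j), Nat.find_spec (h.surj j), ?_⟩⟩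
    rintro i' rfl
    obtain ⟨i, hi, hij⟩ := h.grow i' j hj
    exact lt_of_le_of_lt (Nat.find_min' (h.surj j) hij) hi

namespace RigidSurj

variable {s t m j : ℕ} {A B C D a : ℕ → ℕ}

theorem id (t : ℕ) : RigidSurj t id :=
  ⟨fun _ _ => rfl, fun _ j hj => ⟨j, hj, rfl⟩, fun j => ⟨j, rfl⟩⟩

theorem mono (h : RigidSurj s A) (hts : t ≤ s) : RigidSurj t A :=
  ⟨fun i hi => h.fix i (hi.trans_le hts), h.grow, h.surj⟩

theorem comp (hC : RigidSurj t C) (hA : RigidSurj t A) : RigidSurj t (C ∘ A) := by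
  refine ⟨fun i hi => ?_, fun i j hj => ?_, fun j => ?_⟩
  · simp [hA.fix i hi, hC.fix i hi]
  · obtain ⟨x, hx, rfl⟩ := hC.grow _ _ hj
    obtain ⟨i', hi', rfl⟩ := hA.grow _ _ hx
    exact ⟨i', hi', rfl⟩
  · obtain ⟨x, rfl⟩ := hC.surj j
    obtain ⟨i, rfl⟩ := hA.surj x
    exact ⟨i, rfl⟩

theorem apply_le (h : RigidSurj t A) (i : ℕ) : A i ≤ i := by
  induction i using Nat.strong_induction_on with
  | _ i ih =>
    by_contra! hlt
    obtain ⟨i', hi', he⟩ := h.grow i i hlt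
    have := ih i' hi'
    omega

/-- Every value `j` has a first occurrence, before which exactly the values below `j` occur. -/
theorem exists_first (h : RigidSurj t A) (j : ℕ) :
    ∃ p, A p = j ∧ (∀ i < p, A i < j) ∧ ∀ x < j, ∃ i < p, A i = x := by
  classical
  refine ⟨Nat.find (h.surj j), Nat.find_spec (h.surj j), fun i hi => ?_, fun x hx => ?_⟩
  · by_contra! hle
    rcases hle.eq_or_lt with he | hlt
    · exact Nat.find_min (h.surj j) hi he.symm
    · obtain ⟨i', hi', he⟩ := h.grow i j hlt
      exact Nat.find_min (h.surj j) (hi'.trans hi) he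
  · exact h.grow _ _ (by rwa [Nat.find_spec (h.surj j)])

/-- If `D k` fixes every `i < s + k`, then the compositions `⋯ ∘ D (k + 1) ∘ D k` converge. -/
theorem exists_limit {D : ℕ → ℕ → ℕ} (hD : ∀ k, RigidSurj (s + k) (D k)) :
    ∃ F : ℕ → ℕ → ℕ, ∀ k, RigidSurj (s + k) (F k) ∧ F k = F (k + 1) ∘ D k := by
  let G : ℕ → ℕ → ℕ → ℕ := fun N =>
    Nat.rec (motive := fun _ => ℕ → ℕ → ℕ) (fun _ i => i) (fun _ g k i => g (k + 1) (D k i)) N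
  have G0 : ∀ k i, G 0 k i = i := fun _ _ => rfl
  have GS : ∀ N k i, G (N + 1) k i = G N (k + 1) (D k i) := fun _ _ _ => rfl
  have hG : ∀ N k, RigidSurj (s + k) (G N k) := by
    intro N
    induction N with
    | zero => exact fun k => RigidSurj.id _
    | succ N ih => exact fun k => ((ih (k + 1)).mono (by omega)).comp (hD k)
  have hstab : ∀ N k i, G N k i < s + k + N → G (N + 1) k i = G N k i := by
    intro N
    induction N with
    | zero => exact fun k i hi => (hD k).fix i hi
    | succ N ih =>
      intro k i hi
      rw [GS (N + 1), GS N]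
      rw [GS] at hi
      exact ih _ _ (by omega)
  have hstab' : ∀ N k i, G N k i < s + k + N → ∀ N' ≥ N, G N' k i = G N k i := by
    intro N k i hi N' hN
    induction N', hN using Nat.le_induction with
    | base => rfl
    | succ N' hN ih => rw [hstab N' k i (by omega), ih]
  have hlim : ∀ N k i, i < N → G N k i = G (i + 1) k i := fun N k i hi =>
    hstab' (i + 1) k i (by have := (hG (i + 1) k).apply_le i; omega) N hi
  refine ⟨fun k i => G (i + 1) k i, fun k => ⟨⟨?_, ?_, ?_⟩, ?_⟩⟩
  · exact fun i hi => (hG (i + 1) k).fix i hi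
  · intro i x hx
    obtain ⟨i', hi', he⟩ := (hG (i + 1) k).grow i x hx
    exact ⟨i', hi', by rw [← he, hlim (i + 1) k i' (by omega)]⟩
  · intro x
    obtain ⟨i, hi⟩ := (hG (x + 1) k).surj x
    refine ⟨i, ?_⟩
    have h1 := hstab' (x + 1) k i (by omega) (max (x + 1) (i + 1)) (le_max_left _ _)
    have h2 := hlim (max (x + 1) (i + 1)) k i (by omega)
    dsimp only
    omega
  · funext i
    have h1 := hlim (i + 1) (k + 1) (D k i) (by have := (hD k).apply_le i; omega)
    have h2 := hlim (i + 2) k i (by omega)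
    rw [GS] at h2
    exact (h2.symm.trans h1)

/-- `a` is determined by its restriction to `m`: below `m` it takes only values less than `a m`,
and from `m` on it is a shift. -/
structure IsShiftFrom (m : ℕ) (a : ℕ → ℕ) : Prop where
  lt : ∀ i < m, a i < a m
  shift : ∀ i, m ≤ i → a i + m = i + a m

theorem finite_isShiftFrom (s m : ℕ) : {a | RigidSurj s a ∧ IsShiftFrom m a}.Finite := by
  let f : (ℕ → ℕ) → Fin (m + 1) → Fin (m + 1) := fun a i => Fin.ofNat (m + 1) (a i)
  refine Set.Finite.of_finite_image (f := f) (Set.toFinite _) ?_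
  rintro a ⟨ha, ha'⟩ b ⟨hb, hb'⟩ hab
  have key : ∀ i ≤ m, a i = b i := by
    intro i hi
    have h := congrArg Fin.val (congrFun hab ⟨i, by omega⟩)
    simp only [f, Fin.ofNat] at h
    have h1 := ha.apply_le i
    have h2 := hb.apply_le i
    rwa [Nat.mod_eq_of_lt (by omega), Nat.mod_eq_of_lt (by omega)] at h
  funext i
  rcases le_total i m with hi | hi
  · exact key i hi
  · have h1 := ha'.shift i hi
    have h2 := hb'.shift i hi
    have h3 := key m le_rfl
    omega

theorem exists_comp_eq_of_eqOn (ha' : IsShiftFrom m a) (hC : RigidSurj s C)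
    (hCa : ∀ i < m, C i = a i) : ∃ E, RigidSurj (a m) E ∧ C = E ∘ a := by
  have hsh : ∀ i, a m ≤ i → a (i - a m + m) = i := fun i hi => by
    have := ha'.shift (i - a m + m) (by omega)
    omega
  refine ⟨fun i => if i < a m then i else C (i - a m + m), ⟨?_, ?_, ?_⟩, ?_⟩
  · exact fun i hi => if_pos hi
  · intro i x hx
    by_cases hi : i < a m
    · simp only [hi, if_true] at hx
      exact ⟨x, hx, if_pos (by omega)⟩
    · simp only [hi, if_false] at hx
      obtain ⟨i', hi', rfl⟩ := hC.grow _ _ hx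
      by_cases him : i' < m
      · have := ha'.lt i' him
        rw [← hCa i' him] at this
        exact ⟨C i', by omega, if_pos this⟩
      · refine ⟨i' - m + a m, by omega, ?_⟩
        rw [if_neg (by omega)]
        congr 1
        omega
  · intro x
    by_cases hx : x < a m
    · exact ⟨x, if_pos hx⟩
    · obtain ⟨i, rfl⟩ := hC.surj x
      have him : m ≤ i := by
        by_contra! h
        exact hx (by rw [hCa i h]; exact ha'.lt i h)
      refine ⟨i - m + a m, ?_⟩
      rw [if_neg (by omega)]
      congr 1
      omega
  · funext i
    by_cases hi : i < m
    · simp [ha'.lt i hi, hCa i hi]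
    · have := ha'.shift i (by omega)
      simp only [Function.comp]
      rw [if_neg (by omega)]
      congr 1
      omega

theorem exists_isShiftFrom (hsm : s ≤ m) (hC : RigidSurj s C) (hlt : ∀ i < m, C i < j)
    (hon : ∀ x < j, ∃ i < m, C i = x) :
    ∃ a, RigidSurj s a ∧ IsShiftFrom m a ∧ a m = j ∧ ∀ i < m, C i = a i := by
  have hm : (if m < m then C m else m - m + j) = j := by simp
  refine ⟨fun i => if i < m then C i else i - m + j, ⟨?_, ?_, ?_⟩, ⟨?_, ?_⟩, hm, ?_⟩
  · intro i hi
    rw [if_pos (by omega), hC.fix i hi]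
  · intro i x hx
    by_cases hi : i < m
    · simp only [hi, if_true] at hx
      obtain ⟨i', hi', rfl⟩ := hC.grow _ _ hx
      exact ⟨i', hi', if_pos (by omega)⟩
    · simp only [hi, if_false] at hx
      by_cases hxj : x < j
      · obtain ⟨i', hi', rfl⟩ := hon x hxj
        exact ⟨i', by omega, if_pos hi'⟩
      · exact ⟨x - j + m, by omega, by rw [if_neg (by omega)]; omega⟩
  · intro x
    by_cases hxj : x < j
    · obtain ⟨i', hi', rfl⟩ := hon x hxj
      exact ⟨i', if_pos hi'⟩
    · exact ⟨x - j + m, by rw [if_neg (by omega)]; omega⟩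
  · intro i hi
    simpa [hi] using hlt i hi
  · intro i hi
    simp only [hm]
    rw [if_neg (by omega)]
    omega
  · intro i hi
    simp [hi]

theorem exists_amalgam {E : ℕ → ℕ} (ha : RigidSurj s a) (ha' : IsShiftFrom m a)
    (hE : RigidSurj (a m) E) : ∃ B, RigidSurj m B ∧ a ∘ B = E ∘ a := by
  have hpre : ∀ d, ∃ i, d < a m → i < m ∧ a i = d := by
    intro d
    by_cases hd : d < a m
    · obtain ⟨i, hi⟩ := ha.grow m d hd
      exact ⟨i, fun _ => hi⟩
    · exact ⟨0, fun h => absurd h hd⟩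
  choose pre hpre using hpre
  have hsh : ∀ l, a m ≤ l → a (l - a m + m) = l := fun l hl => by
    have := ha'.shift (l - a m + m) (by omega)
    omega
  let B : ℕ → ℕ := fun i =>
    if i < m then i else if E (a i) < a m then pre (E (a i)) else E (a i) - a m + m
  have hB1 : ∀ i < m, B i = i := fun i hi => if_pos hi
  have hB2 : ∀ i, m ≤ i → E (a i) < a m → B i = pre (E (a i)) := fun i hi h => by
    simp only [B]
    rw [if_neg (by omega), if_pos h]
  have hB3 : ∀ i, m ≤ i → a m ≤ E (a i) → B i = E (a i) - a m + m := fun i hi h => by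
    simp only [B]
    rw [if_neg (by omega), if_neg (by omega)]
  have hEl : ∀ l, a m ≤ E l → a m ≤ l := fun l hl => by
    by_contra! h
    rw [hE.fix l h] at hl
    omega
  refine ⟨B, ⟨hB1, ?_, ?_⟩, ?_⟩
  · intro i x hx
    by_cases hi : i < m
    · rw [hB1 i hi] at hx
      exact ⟨x, hx, hB1 x (by omega)⟩
    · by_cases hxm : x < m
      · exact ⟨x, by omega, hB1 x hxm⟩
      · have hle : a m ≤ E (a i) := by
          by_contra! h
          rw [hB2 i (by omega) h] at hx
          have := (hpre _ h).1
          omega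
        rw [hB3 i (by omega) hle] at hx
        obtain ⟨l, hl, he⟩ := hE.grow (a i) (x - m + a m) (by omega)
        have hl' := hEl l (by omega)
        have h1 := ha'.shift i (by omega)
        refine ⟨l - a m + m, by omega, ?_⟩
        rw [hB3 _ (by omega) (by rw [hsh l hl']; omega), hsh l hl']
        omega
  · intro x
    by_cases hxm : x < m
    · exact ⟨x, hB1 x hxm⟩
    · obtain ⟨l, he⟩ := hE.surj (x - m + a m)
      have hl' := hEl l (by omega)
      refine ⟨l - a m + m, ?_⟩
      rw [hB3 _ (by omega) (by rw [hsh l hl']; omega), hsh l hl']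
      omega
  · funext i
    simp only [Function.comp]
    by_cases hi : i < m
    · rw [hB1 i hi, hE.fix _ (ha'.lt i hi)]
    · by_cases h : E (a i) < a m
      · rw [hB2 i (by omega) h, (hpre _ h).2]
      · rw [hB3 i (by omega) (by omega), hsh _ (by omega)]

/-- Fusion: a property that is inherited by coarsenings and attainable by coarsening at each `j`
holds simultaneously for all coarsenings of a suitable `B`. -/
theorem exists_fusion {P : ℕ → (ℕ → ℕ) → Prop}
    (hered : ∀ j A D, RigidSurj s A → RigidSurj j D → P j A → P j (D ∘ A))
    (dense : ∀ j A, s ≤ j → RigidSurj s A → ∃ D, RigidSurj j D ∧ P j (D ∘ A)) :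
    ∃ B, RigidSurj s B ∧ ∀ C, RigidSurj s C → ∀ j, s ≤ j → P j (C ∘ B) := by
  have hstep : ∀ m A, s ≤ m → RigidSurj s A → ∃ D, RigidSurj m D ∧
      ∀ a ∈ {a | RigidSurj s a ∧ IsShiftFrom m a}, P (a m) (a ∘ D ∘ A) := by
    intro m A hsm hA
    have haux : ∀ S : Set (ℕ → ℕ), S.Finite → S ⊆ {a | RigidSurj s a ∧ IsShiftFrom m a} →
        ∃ D, RigidSurj m D ∧ ∀ a ∈ S, P (a m) (a ∘ D ∘ A) := by
      intro S hS
      induction S, hS using Set.Finite.induction_on with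
      | empty => exact fun _ => ⟨_, RigidSurj.id m, by simp⟩
      | insert _ _ ih =>
        rename_i a S _ _
        intro hsub
        obtain ⟨D, hD, hDS⟩ := ih ((Set.subset_insert _ _).trans hsub)
        obtain ⟨ha, ha'⟩ := hsub (Set.mem_insert _ _)
        have hDA : RigidSurj s (D ∘ A) := (hD.mono hsm).comp hA
        have hsa : s ≤ a m := by
          by_contra! h
          have h1 := ha.fix (a m) h
          rcases hsm.eq_or_lt with h2 | h2
          · subst h2
            have := ha'.lt (a s) h
            omega
          · have := ha'.lt s h2
            rcases Nat.lt_or_ge (a m) m with h3 | h3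
            · have := ha'.lt (a m) h3
              omega
            · omega
        obtain ⟨E, hE, hPE⟩ := dense (a m) (a ∘ D ∘ A) hsa (ha.comp hDA)
        obtain ⟨B, hB, hBE⟩ := exists_amalgam ha ha' hE
        refine ⟨B ∘ D, hB.comp hD, ?_⟩
        rintro b (rfl | hb)
        · have : b ∘ (B ∘ D) ∘ A = E ∘ b ∘ D ∘ A := by
            rw [← Function.comp_assoc E b, ← hBE]
            rfl
          rwa [this]
        · obtain ⟨hb1, hb2⟩ := hsub (Set.mem_insert_of_mem _ hb)
          obtain ⟨E', hE', h'⟩ := exists_comp_eq_of_eqOn hb2 (hb1.comp (hB.mono hsm))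
            (fun i hi => by simp [hB.fix i hi])
          have : b ∘ (B ∘ D) ∘ A = E' ∘ b ∘ D ∘ A := by
            rw [← Function.comp_assoc E' b, ← h']
            rfl
          rw [this]
          exact hered _ _ _ (hb1.comp hDA) hE' (hDS b hb)
    exact haux _ (finite_isShiftFrom s m) subset_rfl
  choose! step hstep1 hstep2 using hstep
  let A : ℕ → ℕ → ℕ := fun k =>
    Nat.rec (motive := fun _ => ℕ → ℕ) _root_.id (fun k g => step (s + k) g ∘ g) k
  have AS : ∀ k, A (k + 1) = step (s + k) (A k) ∘ A k := fun _ => rfl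
  have hA : ∀ k, RigidSurj s (A k) := by
    intro k
    induction k with
    | zero => exact RigidSurj.id s
    | succ k ih => exact ((hstep1 (s + k) _ (by omega) ih).mono (by omega)).comp ih
  obtain ⟨F, hF⟩ := exists_limit (fun k => hstep1 (s + k) _ (by omega) (hA k))
  have hFA : ∀ k, F 0 = F k ∘ A k := by
    intro k
    induction k with
    | zero => rfl
    | succ k ih => rw [ih, (hF k).2, AS]; rfl
  refine ⟨F 0, (hF 0).1, fun C hC j hj => ?_⟩
  obtain ⟨p, hp, hlt, hon⟩ := hC.exists_first j
  have hsp : s ≤ p := by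
    by_contra! h
    have := hC.fix p h
    omega
  obtain ⟨k, rfl⟩ := Nat.exists_eq_add_of_le hsp
  have hC2 : RigidSurj s (C ∘ F (k + 1)) := hC.comp ((hF (k + 1)).1.mono (by omega))
  obtain ⟨a, ha, ha', haj, hCa⟩ := exists_isShiftFrom hsp hC hlt hon
  obtain ⟨E, hE, hCE⟩ := exists_comp_eq_of_eqOn ha' hC2
    (fun i hi => by simp [(hF (k + 1)).1.fix i (by omega), hCa i hi])
  have : C ∘ F 0 = E ∘ a ∘ A (k + 1) := by
    rw [hFA (k + 1), ← Function.comp_assoc, hCE]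
    rfl
  rw [this]
  subst haj
  exact hered _ _ _ (ha.comp (hA (k + 1))) hE (hstep2 (s + k) _ (by omega) (hA k) a ⟨ha, ha'⟩)

end RigidSurj

section UltrafilterSemigroup

attribute [local instance] Ultrafilter.mul Ultrafilter.semigroup

/-- The semigroup of ultrafilters has a minimal left ideal. -/
theorem Ultrafilter.exists_minimal_leftIdeal (M : Type*) [Semigroup M] [Nonempty M] :
    ∃ I : Set (Ultrafilter M), I.Nonempty ∧ (∀ x, ∀ m ∈ I, x * m ∈ I) ∧
      ∀ m ∈ I, ∀ y ∈ I, ∃ x, x * m = y := by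
  let S : Set (Set (Ultrafilter M)) :=
    {I | IsClosed I ∧ I.Nonempty ∧ ∀ x, ∀ m ∈ I, x * m ∈ I}
  obtain ⟨I, hI⟩ := zorn_superset S (by
    intro c hcS hc
    rcases c.eq_empty_or_nonempty with rfl | hne
    · exact ⟨Set.univ, ⟨isClosed_univ, Set.univ_nonempty, fun _ _ _ => Set.mem_univ _⟩, by simp⟩
    refine ⟨⋂₀ c, ⟨isClosed_sInter fun s hs => (hcS hs).1, ?_, ?_⟩,
      fun s hs => Set.sInter_subset_of_mem hs⟩
    · have := hne.to_subtype
      exact IsCompact.nonempty_sInter_of_directed_nonempty_isCompact_isClosed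
        (fun s hs s' hs' => (hc.total hs hs').elim
          (fun h => ⟨s, hs, subset_rfl, h⟩) fun h => ⟨s', hs', h, subset_rfl⟩)
        (fun s hs => (hcS hs).2.1) (fun s hs => (hcS hs).1.isCompact) (fun s hs => (hcS hs).1)
    · intro x m hm s hs
      exact (hcS hs).2.2 x m (hm s hs))
  obtain ⟨hcl, hne, hid⟩ := hI.prop
  refine ⟨I, hne, hid, fun m hm y hy => ?_⟩
  have hS : Set.range (· * m) ∈ S := by
    refine ⟨(isCompact_range (Ultrafilter.continuous_mul_left m)).isClosed,
      Set.range_nonempty _, ?_⟩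
    rintro x _ ⟨z, rfl⟩
    exact ⟨x * z, mul_assoc _ _ _⟩
  exact hI.le_of_le hS (by rintro _ ⟨z, rfl⟩; exact hid z m hm) hy

theorem Ultrafilter.map_mul_hom {M N : Type*} [Mul M] [Mul N] (f : M →ₙ* N) (U V : Ultrafilter M) :
    (U * V).map f = U.map f * V.map f := by
  refine Ultrafilter.coe_inj.mp (Filter.ext' fun p => ?_)
  change (∀ᶠ m in U, ∀ᶠ m' in V, p (f (m * m'))) ↔ ∀ᶠ m in U, ∀ᶠ m' in V, p (f m * f m')
  simp only [map_mul]

/-- Substituting the letter `l` for the variable `none`. -/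
def substVar {Λ : Type*} (l : Λ) : FreeMonoid (Option Λ) →* FreeMonoid Λ :=
  FreeMonoid.map fun o => o.getD l

/-- One-step form of the Carlson–Simpson theorem for left variable words: either `K` or its
complement contains a nonempty set `G` such that every finite subset of `G` can be extended
within `G` by all the instances of a single left variable word. -/
theorem exists_extendable_words {Λ : Type*} [Finite Λ] (K : Set (FreeMonoid Λ)) :
    ∃ G : Set (FreeMonoid Λ), (G ⊆ K ∨ G ⊆ Kᶜ) ∧ G.Nonempty ∧
      ∀ F : Set (FreeMonoid Λ), F.Finite → F ⊆ G → ∃ x : FreeMonoid (Option Λ),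
        ∀ u ∈ F, ∀ l : Λ, u * substVar l (FreeMonoid.of none * x) ∈ G := by
  obtain ⟨I, ⟨w, hw⟩, hid, htrans⟩ := Ultrafilter.exists_minimal_leftIdeal (FreeMonoid Λ)
  let ι : FreeMonoid Λ →* FreeMonoid (Option Λ) := FreeMonoid.map some
  have hι : ∀ l u, substVar l (ι u) = u := by
    intro l u
    have h : (fun o : Option Λ => o.getD l) ∘ some = id := rfl
    simp only [substVar, ι]
    rw [FreeMonoid.map_map, h, FreeMonoid.map_id]
    rfl
  let W : Ultrafilter (FreeMonoid (Option Λ)) := w.map ι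
  let v : Ultrafilter (FreeMonoid (Option Λ)) := pure (FreeMonoid.of none)
  obtain ⟨z, ⟨a, rfl⟩, hz⟩ := exists_idempotent_in_compact_subsemigroup
    Ultrafilter.continuous_mul_left (Set.range (· * (W * v))) (Set.range_nonempty _)
    (isCompact_range (Ultrafilter.continuous_mul_left _))
    (by
      rintro _ ⟨x, rfl⟩ _ ⟨y, rfl⟩
      exact ⟨x * (W * v) * y, by simp only [mul_assoc]⟩)
  simp only at hz
  let b := a * (W * v) * a
  let y := v * (b * W)
  have hy : y * y = y := by
    have : y * y = v * ((a * (W * v)) * (a * (W * v)) * (a * (W * v)) * a * W) := by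
      simp only [y, b, mul_assoc]
    rw [this, hz, hz]
  let e : Λ → Ultrafilter (FreeMonoid Λ) := fun l => y.map (substVar l)
  have heI : ∀ l, e l ∈ I := by
    intro l
    have h1 : e l = (v * b).map (substVar l).toMulHom * W.map (substVar l).toMulHom := by
      rw [← Ultrafilter.map_mul_hom, mul_assoc]
      rfl
    have h2 : W.map (substVar l).toMulHom = w := by
      have h3 : (substVar l).toMulHom ∘ ι = id := funext (hι l)
      rw [Ultrafilter.map_map, h3, Ultrafilter.map_id]
    rw [h1, h2]
    exact hid _ _ hw
  have hee : ∀ l, e l * e l = e l := fun l => by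
    have h := Ultrafilter.map_mul_hom (substVar l).toMulHom y y
    rw [hy] at h
    exact h.symm
  have hIe : ∀ m ∈ I, ∀ l, m * e l = m := by
    intro m hm l
    obtain ⟨x, rfl⟩ := htrans (e l) (heI l) m hm
    rw [mul_assoc, hee]
  obtain ⟨C, hC, hCw⟩ : ∃ C, (C = K ∨ C = Kᶜ) ∧ C ∈ w := by
    rcases Ultrafilter.mem_or_compl_mem w K with h | h
    · exact ⟨K, Or.inl rfl, h⟩
    · exact ⟨_, Or.inr rfl, h⟩
  let G : Set (FreeMonoid Λ) := {u | u ∈ C ∧ ∀ l, ∀ᶠ s in (e l : Filter _), u * s ∈ C}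
  refine ⟨G, ?_, ?_, ?_⟩
  · rcases hC with rfl | rfl
    · exact Or.inl fun _ h => h.1
    · exact Or.inr fun _ h => h.1
  · have h1 : ∀ l, ∀ᶠ u in (w : Filter _), ∀ᶠ s in (e l : Filter _), u * s ∈ C := fun l => by
      rw [← Ultrafilter.eventually_mul, hIe w hw l]
      exact hCw
    have h2 : ∀ᶠ u in (w : Filter _), u ∈ G := Filter.Eventually.and hCw (Filter.eventually_all.2 h1)
    exact h2.exists
  · intro F hF hFG
    have h1 : ∀ u ∈ F, ∀ l, ∀ᶠ s in (e l : Filter _), u * s ∈ G := by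
      intro u hu l
      refine ((hFG hu).2 l).and (Filter.eventually_all.2 fun l' => ?_)
      have h2 := (hFG hu).2 l
      rw [← hIe (e l) (heI l) l', Ultrafilter.eventually_mul] at h2
      simpa only [mul_assoc] using h2
    have h2 : ∀ u ∈ F, ∀ l, ∀ᶠ x in ((b * W : Ultrafilter _) : Filter _),
        u * substVar l (FreeMonoid.of none * x) ∈ G := fun u hu l => h1 u hu l
    exact ((hF.eventually_all).2 fun u hu => Filter.eventually_all.2 (h2 u hu)).exists

end UltrafilterSemigroup

namespace RigidSurj

/-- The finite word `L` over the letters `i < j + k` is an initial segment of a rigid surjection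
fixing `i < j`, and all its instances over the letters `i < j` continue the word `0, …, j - 1` by
an element of `G`. -/
structure IsGoodPrefix (j : ℕ) (G : Set (FreeMonoid (Fin j))) (k : ℕ) (L : List ℕ) : Prop where
  lt : ∀ x ∈ L, x < j + k
  mem : ∀ x < j + k, x ∈ L
  grow : ∀ i y : ℕ, L[i]? = some y → ∀ x < y, ∃ i' < i, L[i']? = some x
  fix : ∀ i : ℕ, i < j → L[i]? = some i
  inst : ∀ ρ : ℕ → ℕ, (∀ i < j, ρ i = i) → (∀ i < j + k, ρ i < j) →
    ∃ u ∈ G, L.map ρ = List.range j ++ u.toList.map Fin.val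

theorem IsGoodPrefix.extend {j k : ℕ} {G : Set (FreeMonoid (Fin j))} {L : List ℕ}
    (hG : ∀ F : Set (FreeMonoid (Fin j)), F.Finite → F ⊆ G → ∃ x : FreeMonoid (Option (Fin j)),
      ∀ u ∈ F, ∀ l : Fin j, u * substVar l (FreeMonoid.of none * x) ∈ G)
    (hL : IsGoodPrefix j G k L) : ∃ x, IsGoodPrefix j G (k + 1) (L ++ (j + k) :: x) := by
  obtain ⟨x, hx⟩ := hG {u : FreeMonoid (Fin j) | u ∈ G ∧ u.toList.length + j = L.length}
    ((List.finite_length_eq (Fin j) (L.length - j)).subset fun (u : FreeMonoid (Fin j)) hu => by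
      have := hu.2
      change u.toList.length = _
      omega) fun u hu => hu.1
  let f : Option (Fin j) → ℕ := fun o => o.elim (j + k) Fin.val
  have hf : ∀ o, f o < j + (k + 1) := by
    rintro (_ | i)
    · simp [f]
    · have := i.2
      simp only [f, Option.elim]
      omega
  refine ⟨x.toList.map f, ⟨?_, ?_, ?_, ?_, ?_⟩⟩
  · intro y hy
    simp only [List.mem_append, List.mem_cons, List.mem_map] at hy
    rcases hy with hy | rfl | ⟨o, _, rfl⟩
    · have := hL.lt y hy
      omega
    · omega
    · exact hf o
  · intro y hy
    rcases Nat.lt_or_ge y (j + k) with h | h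
    · exact List.mem_append_left _ (hL.mem y h)
    · have : y = j + k := by omega
      simp [this]
  · intro i y hy z hz
    by_cases hi : i < L.length
    · rw [List.getElem?_append_left hi] at hy
      obtain ⟨i', hi', he⟩ := hL.grow i y hy z hz
      exact ⟨i', hi', by rw [List.getElem?_append_left (by omega), he]⟩
    · by_cases hzk : z < j + k
      · obtain ⟨i', hi'⟩ := List.mem_iff_getElem?.1 (hL.mem z hzk)
        have hlt := (List.getElem?_eq_some_iff.1 hi').1
        exact ⟨i', by omega, by rw [List.getElem?_append_left hlt, hi']⟩
      · exfalso
        rw [List.getElem?_append_right (by omega)] at hy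
        have hmem := List.mem_iff_getElem?.2 ⟨_, hy⟩
        simp only [List.mem_cons, List.mem_map] at hmem
        rcases hmem with rfl | ⟨o, _, rfl⟩
        · omega
        · have := hf o
          omega
  · intro i hi
    have h := hL.fix i hi
    rw [List.getElem?_append_left (List.getElem?_eq_some_iff.1 h).1, h]
  · intro ρ h1 h2
    obtain ⟨u, hu, he⟩ := hL.inst ρ h1 fun i hi => h2 i (by omega)
    have hlen := congrArg List.length he
    simp only [List.length_map, List.length_append, List.length_range] at hlen
    have hρ := h2 (j + k) (by omega)
    refine ⟨_, hx u ⟨hu, by omega⟩ ⟨ρ (j + k), hρ⟩, ?_⟩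
    have hfx : ∀ o, ρ (f o) = (o.getD ⟨ρ (j + k), hρ⟩ : Fin j).val := by
      rintro (_ | i)
      · rfl
      · exact h1 _ i.2
    simp [substVar, he, FreeMonoid.toList_map, hfx, Function.comp_def]

/-- Colourings of rigid surjections that depend only on the part before the first occurrence of the
value `j` have homogeneous sets. -/
theorem exists_homogeneous {j : ℕ} {c : (ℕ → ℕ) → Prop}
    (hc : ∀ C C' p, RigidSurj j C → RigidSurj j C' → C p = j → C' p = j → (∀ i < p, C i < j) →
      (∀ i < p, C' i = C i) → c C → c C') :
    ∃ D, RigidSurj j D ∧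
      ((∀ C, RigidSurj j C → c (C ∘ D)) ∨ ∀ C, RigidSurj j C → ¬ c (C ∘ D)) := by
  let K : Set (FreeMonoid (Fin j)) := {u | ∃ C, RigidSurj j C ∧ c C ∧ C (j + u.toList.length) = j ∧
    (List.range (j + u.toList.length)).map C = List.range j ++ u.toList.map Fin.val}
  obtain ⟨G, hGK, ⟨u₀, hu₀⟩, hG⟩ := exists_extendable_words K
  have hstep : ∀ k L, IsGoodPrefix j G k L → ∃ x, IsGoodPrefix j G (k + 1) (L ++ (j + k) :: x) :=
    fun k L hL => hL.extend hG
  have hrange : ∀ i < j, (List.range j ++ u₀.toList.map Fin.val)[i]? = some i := fun i hi => by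
    rw [List.getElem?_append_left (by simpa using hi), List.getElem?_range hi]
  have hbase : IsGoodPrefix j G 0 (List.range j ++ u₀.toList.map Fin.val) := by
    have hlt : ∀ x ∈ List.range j ++ u₀.toList.map Fin.val, x < j := by
      intro x hx
      simp only [List.mem_append, List.mem_range, List.mem_map] at hx
      rcases hx with hx | ⟨i, _, rfl⟩
      · exact hx
      · exact i.2
    refine ⟨hlt, fun x hx => by simp; omega, fun i y hy x hxy => ?_, hrange,
      fun ρ h1 _ => ⟨u₀, hu₀, ?_⟩⟩
    · have hyj := hlt y (List.mem_iff_getElem?.2 ⟨_, hy⟩)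
      refine ⟨x, ?_, hrange x (by omega)⟩
      by_contra! h
      rw [hrange i (by omega)] at hy
      simp only [Option.some.injEq] at hy
      omega
    · conv_rhs => rw [← List.map_id (List.range j ++ u₀.toList.map Fin.val)]
      exact List.map_congr_left fun x hx => h1 x (hlt x hx)
  choose! next hnext using hstep
  let L : ℕ → List ℕ := fun k => Nat.rec (motive := fun _ => List ℕ)
    (List.range j ++ u₀.toList.map Fin.val) (fun k L => L ++ (j + k) :: next k L) k
  have LS : ∀ k, L (k + 1) = L k ++ (j + k) :: next k (L k) := fun _ => rfl
  have hL : ∀ k, IsGoodPrefix j G k (L k) := by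
    intro k
    induction k with
    | zero => exact hbase
    | succ k ih => exact hnext k _ ih
  have hlen : ∀ k, k ≤ (L k).length := by
    intro k
    induction k with
    | zero => exact Nat.zero_le _
    | succ k ih =>
      rw [LS, List.length_append, List.length_cons]
      omega
  have hmono : ∀ k i y : ℕ, (L k)[i]? = some y → ∀ k' ≥ k, (L k')[i]? = some y := by
    intro k i y hy k' hk'
    induction k', hk' using Nat.le_induction with
    | base => exact hy
    | succ k' _ ih =>
      rw [LS, List.getElem?_append_left (List.getElem?_eq_some_iff.1 ih).1, ih]
  let D : ℕ → ℕ := fun i => ((L (i + 1))[i]?).getD 0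
  have hD' : ∀ i, (L (i + 1))[i]? = some (D i) := fun i => by
    simp only [D]
    rw [List.getElem?_eq_getElem (hlen (i + 1))]
    rfl
  have hD : ∀ k i y : ℕ, (L k)[i]? = some y → D i = y := by
    intro k i y hy
    have h1 := hmono _ _ _ hy _ (le_max_left k (i + 1))
    have h2 := hmono _ _ _ (hD' i) _ (le_max_right k (i + 1))
    rw [h1] at h2
    exact (Option.some.inj h2).symm
  have hDr : RigidSurj j D := by
    refine ⟨fun i hi => hD 0 i i (hrange i hi), fun i x hx => ?_, fun x => ?_⟩
    · obtain ⟨i', hi', he⟩ := (hL (i + 1)).grow i _ (hD' i) x hx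
      exact ⟨i', hi', hD (i + 1) _ _ he⟩
    · obtain ⟨i, hi⟩ := List.mem_iff_getElem?.1 ((hL (x + 1)).mem x (by omega))
      exact ⟨i, hD (x + 1) _ _ hi⟩
  have hDmap : ∀ k, (List.range (L k).length).map D = L k := by
    intro k
    refine List.ext_getElem (by simp) fun i h1 h2 => ?_
    rw [List.getElem_map, List.getElem_range]
    exact hD k i _ (List.getElem?_eq_getElem h2)
  have hDlen : ∀ k, D (L k).length = j + k := fun k => hD (k + 1) _ _ (by simp [LS])
  have key : ∀ C, RigidSurj j C → ∃ u ∈ G, (C ∘ D) (j + u.toList.length) = j ∧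
      (List.range (j + u.toList.length)).map (C ∘ D) =
        List.range j ++ u.toList.map Fin.val := by
    intro C hC
    obtain ⟨p, hp, hlt, -⟩ := hC.exists_first j
    have hjp : j ≤ p := by
      by_contra! h
      have := hC.fix p h
      omega
    obtain ⟨k, rfl⟩ := Nat.exists_eq_add_of_le hjp
    obtain ⟨u, hu, he⟩ := (hL k).inst C hC.fix hlt
    have hq := congrArg List.length he
    simp only [List.length_map, List.length_append, List.length_range] at hq
    refine ⟨u, hu, ?_, ?_⟩
    · rw [← hq, Function.comp, hDlen, hp]
    · rw [← hq, ← List.map_map, hDmap, he]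
  refine ⟨D, hDr, hGK.imp (fun hGK C hC => ?_) fun hGK C hC hcC => ?_⟩
  · obtain ⟨u, hu, h1, h2⟩ := key C hC
    obtain ⟨C', hC', hcC', h1', h2'⟩ := hGK hu
    have heq : ∀ i < j + u.toList.length, (C ∘ D) i = C' i := by
      rw [← h2'] at h2
      simpa using h2
    refine hc C' (C ∘ D) _ hC' (hC.comp hDr) h1' h1 (fun i hi => ?_) heq hcC'
    have hmem : C' i ∈ List.range j ++ u.toList.map Fin.val :=
      h2' ▸ List.mem_map_of_mem (List.mem_range.2 hi)
    simp only [List.mem_append, List.mem_range, List.mem_map] at hmem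
    rcases hmem with hx | ⟨x, _, hx⟩
    · exact hx
    · exact hx ▸ x.2
  · obtain ⟨u, hu, h1, h2⟩ := key C hC
    exact hGK hu ⟨_, hC.comp hDr, hcC, h1, h2⟩

/-- Ramsey property of sets that are open in the Ellentuck sense. -/
theorem exists_ramsey_of_open {s : ℕ} {Y : Set (ℕ → ℕ)}
    (hY : ∀ A, RigidSurj s A → A ∈ Y → ∃ j ≥ s, ∀ C, RigidSurj j C → C ∘ A ∈ Y) :
    ∃ B, RigidSurj s B ∧
      ((∀ C, RigidSurj s C → C ∘ B ∈ Y) ∨ ∀ C, RigidSurj s C → C ∘ B ∉ Y) := by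
  let acc : ℕ → (ℕ → ℕ) → Prop := fun j A => ∀ C, RigidSurj j C → C ∘ A ∈ Y
  have hdecide : ∀ j A, s ≤ j → RigidSurj s A → ∃ B, RigidSurj j B ∧ ∀ C, RigidSurj j C →
      ∀ j', j ≤ j' → acc j' (C ∘ B ∘ A) ∨ ∀ E, RigidSurj j' E → ¬ acc j' (E ∘ C ∘ B ∘ A) := by
    intro j A _ _
    refine exists_fusion (s := j) (P := fun j' C => acc j' (C ∘ A) ∨
      ∀ E, RigidSurj j' E → ¬ acc j' (E ∘ C ∘ A)) ?_ ?_
    · rintro j' C D - hD (h | h)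
      · exact Or.inl fun X hX => h (X ∘ D) (hX.comp hD)
      · exact Or.inr fun E hE => h (E ∘ D) (hE.comp hD)
    · intro j' C _ _
      by_cases h : ∃ D, RigidSurj j' D ∧ acc j' (D ∘ C ∘ A)
      · obtain ⟨D, hD, h⟩ := h
        exact ⟨D, hD, Or.inl h⟩
      · push Not at h
        exact ⟨_, RigidSurj.id j', Or.inr h⟩
  obtain ⟨B, hB, hBP⟩ := exists_fusion (s := s)
    (P := fun j A => acc j A ∨ ∀ C, RigidSurj j C → ¬ acc (j + 1) (C ∘ A)) (by
      rintro j A D - hD (h | h)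
      · exact Or.inl fun X hX => h (X ∘ D) (hX.comp hD)
      · exact Or.inr fun C hC => h (C ∘ D) (hC.comp hD)) (by
      intro j A hj hA
      obtain ⟨B, hB, hdec⟩ := hdecide j A hj hA
      obtain ⟨D, hD, h⟩ := exists_homogeneous (j := j) (c := fun C => acc (j + 1) (C ∘ B ∘ A)) (by
        intro C C' p hC hC' hp hp' hlt heq hcC
        have hjp : j ≤ p := by
          by_contra! h
          have := hC.fix p h
          omega
        have hlt' : ∀ i < p + 1, C i < j + 1 := by
          intro i hi
          rcases Nat.lt_succ_iff_lt_or_eq.1 hi with h | rfl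
          · have := hlt i h
            omega
          · omega
        have heq' : ∀ i < p + 1, C' i = C i := by
          intro i hi
          rcases Nat.lt_succ_iff_lt_or_eq.1 hi with h | rfl
          · exact heq i h
          · omega
        obtain ⟨a, ha, ha', haj, hCa⟩ := exists_isShiftFrom (m := p + 1) (j := j + 1)
          (by omega) hC hlt' (fun x hx => by
            rcases Nat.lt_succ_iff_lt_or_eq.1 hx with h | rfl
            · obtain ⟨i, hi, he⟩ := hC.grow p x (by omega)
              exact ⟨i, by omega, he⟩
            · exact ⟨p, by omega, hp⟩)
        obtain ⟨E, hE, rfl⟩ := exists_comp_eq_of_eqOn ha' hC hCa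
        obtain ⟨E', hE', rfl⟩ := exists_comp_eq_of_eqOn ha' hC'
          fun i hi => (heq' i hi).trans (hCa i hi)
        rw [haj] at hE hE'
        rcases hdec a ha (j + 1) (by omega) with h | h
        · exact fun X hX => h (X ∘ E') (hX.comp hE')
        · exact absurd hcC (h E hE))
      refine ⟨D ∘ B, hD.comp hB, h.imp (fun h C hC => ?_) fun h => h⟩
      exact h C hC _ (RigidSurj.id _))
  by_cases hacc : ∃ D, RigidSurj s D ∧ acc s (D ∘ B)
  · obtain ⟨D, hD, h⟩ := hacc
    exact ⟨D ∘ B, hD.comp hB, Or.inl h⟩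
  push Not at hacc
  refine ⟨B, hB, Or.inr fun C hC hCY => ?_⟩
  have hrej : ∀ j, s ≤ j → ∀ C, RigidSurj s C → ¬ acc j (C ∘ B) := by
    intro j hj
    induction j, hj using Nat.le_induction with
    | base => exact hacc
    | succ j hj ih =>
      intro C hC
      exact (hBP C hC j hj).resolve_left (ih C hC) _ (RigidSurj.id j)
  obtain ⟨j, hj, h⟩ := hY _ (hC.comp hB) hCY
  exact hrej j hj C hC h

/-- If each `N k` can be avoided by coarsening, then so can their union. -/
theorem exists_avoiding {s : ℕ} {N : ℕ → Set (ℕ → ℕ)}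
    (hN : ∀ k j A, s ≤ j → RigidSurj s A →
      ∃ D, RigidSurj j D ∧ ∀ C, RigidSurj j C → C ∘ D ∘ A ∉ N k) :
    ∃ B, RigidSurj s B ∧ ∀ C, RigidSurj s C → ∀ k, C ∘ B ∉ N k := by
  obtain ⟨B, hB, h⟩ := exists_fusion (s := s)
    (P := fun j A => ∀ C, RigidSurj j C → ∀ k ≤ j, C ∘ A ∉ N k)
    (fun j A D _ hD h C hC => h (C ∘ D) (hC.comp hD)) (by
      intro j A hj hA
      have haux : ∀ n, ∃ D, RigidSurj j D ∧ ∀ C, RigidSurj j C → ∀ k < n, C ∘ D ∘ A ∉ N k := by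
        intro n
        induction n with
        | zero => exact ⟨_, RigidSurj.id j, by simp⟩
        | succ n ih =>
          obtain ⟨D, hD, h⟩ := ih
          obtain ⟨D', hD', h'⟩ := hN n j (D ∘ A) hj ((hD.mono hj).comp hA)
          refine ⟨D' ∘ D, hD'.comp hD, fun C hC k hk => ?_⟩
          rcases Nat.lt_succ_iff_lt_or_eq.1 hk with hk | rfl
          · exact h (C ∘ D') (hC.comp hD') k hk
          · exact h' C hC
      obtain ⟨D, hD, h⟩ := haux (j + 1)
      exact ⟨D, hD, fun C hC k hk => h C hC k (by omega)⟩)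
  exact ⟨B, hB, fun C hC k => h C hC (max s k) (le_max_left _ _) _ (RigidSurj.id _) k
    (le_max_right _ _)⟩

end RigidSurj

/-- Composing an element of `St t` with a rigid surjection `C` leaves its `n`-th approximation
unchanged if and only if `C` fixes the integers below `depth t n`. -/
def depth (t n : ℕ) : ℕ := if n = 0 then t else t + n + 1

theorem le_depth (t n : ℕ) : t ≤ depth t n := by
  unfold depth
  split_ifs <;> omega

theorem le_depth_self (t n : ℕ) : n ≤ depth t n := by
  unfold depth
  split_ifs <;> omega

theorem depth_mono (t : ℕ) {m n : ℕ} (h : m ≤ n) : depth t m ≤ depth t n := by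
  unfold depth
  split_ifs <;> omega

theorem rP_eq_map_range {t n p : ℕ} {A : ℕ → ℕ} (hn : n ≠ 0) (hp : A p = t + n)
    (hlt : ∀ i < p, A i < t + n) : rP t n A = (List.range p).map A := by
  have hinf : sInf {i | A i = t + n} = p := by
    refine le_antisymm (Nat.sInf_le hp) (le_csInf ⟨p, hp⟩ fun i hi => ?_)
    by_contra! h
    exact (hlt i h).ne hi
  rw [rP, if_neg hn, hinf]
  exact List.ext_getElem (by simp) fun i _ _ => by simp

namespace RigidSurj

variable {t n k : ℕ} {A C : ℕ → ℕ}

theorem rP_comp (hA : RigidSurj t A) (hC : RigidSurj (depth t n) C) :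
    rP t n (C ∘ A) = rP t n A := by
  by_cases hn : n = 0
  · simp [rP, hn]
  have hfix : ∀ x ≤ t + n, C x = x := fun x hx => hC.fix x (by rw [depth, if_neg hn]; omega)
  obtain ⟨p, hp, hlt, -⟩ := hA.exists_first (t + n)
  have heq : ∀ i < p, (C ∘ A) i = A i := fun i hi => hfix _ (hlt i hi).le
  rw [rP_eq_map_range hn hp hlt, rP_eq_map_range (p := p) hn (by simp [hp, hfix])
    fun i hi => by rw [heq i hi]; exact hlt i hi]
  exact List.map_congr_left fun i hi => heq i (List.mem_range.1 hi)

theorem of_rP_comp_eq (hA : RigidSurj t A) (hC : RigidSurj t C)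
    (h : rP t k (C ∘ A) = rP t n A) : RigidSurj (depth t n) C := by
  by_cases hn : n = 0
  · simpa [depth, hn] using hC
  obtain ⟨p, hp, hlt, hon⟩ := hA.exists_first (t + n)
  rw [rP_eq_map_range hn hp hlt] at h
  by_cases hk : k = 0
  · obtain ⟨i, hi, -⟩ := hon 0 (by omega)
    have := congrArg List.length h
    simp [rP, hk] at this
    omega
  obtain ⟨q, hq, hlt', hon'⟩ := (hC.comp hA).exists_first (t + k)
  rw [rP_eq_map_range hk hq hlt'] at h
  obtain rfl : q = p := by simpa using congrArg List.length h
  have heq : ∀ i < q, (C ∘ A) i = A i := by simpa using h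
  have hkn : k = n := by
    obtain ⟨i, hi, hi'⟩ := hon (t + n - 1) (by omega)
    obtain ⟨i', hi2, hi2'⟩ := hon' (t + k - 1) (by omega)
    have h1 := heq i hi
    have h2 := hlt' i hi
    have h3 := heq i' hi2
    have h4 := hlt i' hi2
    omega
  refine ⟨fun x hx => ?_, hC.grow, hC.surj⟩
  rw [depth, if_neg hn] at hx
  rcases Nat.lt_succ_iff_lt_or_eq.1 hx with hx | rfl
  · obtain ⟨i, hi, rfl⟩ := hon x hx
    exact heq i hi
  · rw [← hp, ← Function.comp_apply (f := C), hq, hp, hkn]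

end RigidSurj

namespace St

variable {t : ℕ}

/-- The quasi-order on `St t`. -/
def le (t : ℕ) (A B : ↥(St t)) : Prop := ∃ C ∈ St t, A.val = compP B.val C

/-- The approximations of elements of `St t`. -/
noncomputable def approx (t n : ℕ) (A : ↥(St t)) : List ℕ := rP t n A.val

/-- The Ellentuck topology on `St t`. -/
noncomputable abbrev ellentuck (t : ℕ) : TopologicalSpace ↥(St t) := EllTop (le t) (approx t)

theorem rigidSurj (A : ↥(St t)) : RigidSurj t A.val := mem_St_iff.1 A.2

/-- The element `C ∘ A` of `St t`. -/
def coarsen (A : ↥(St t)) {C : ℕ → ℕ} {s : ℕ} (hC : RigidSurj s C) (hs : t ≤ s) : ↥(St t) :=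
  ⟨C ∘ A.val, mem_St_iff.2 ((hC.mono hs).comp (rigidSurj A))⟩

theorem mem_ellSet_approx_iff {n : ℕ} {A B : ↥(St t)} :
    B ∈ EllSet (le t) (approx t) (approx t n A) A ↔
      ∃ C, RigidSurj (depth t n) C ∧ B.val = C ∘ A.val := by
  constructor
  · rintro ⟨⟨C, hC, hB⟩, k, hk⟩
    refine ⟨C, (rigidSurj A).of_rP_comp_eq (k := k) (mem_St_iff.1 hC) ?_, hB⟩
    change rP t k B.val = _ at hk
    rwa [hB] at hk
  · rintro ⟨C, hC, hB⟩
    refine ⟨⟨C, mem_St_iff.2 (hC.mono (le_depth t n)), hB⟩, n, ?_⟩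
    rw [approx, hB]
    exact (rigidSurj A).rP_comp hC

theorem mem_ellSet_approx_self (n : ℕ) (A : ↥(St t)) :
    A ∈ EllSet (le t) (approx t) (approx t n A) A :=
  mem_ellSet_approx_iff.2 ⟨_, RigidSurj.id _, rfl⟩

theorem le_of_le_of_le {A B D : ↥(St t)} (h₁ : le t A B) (h₂ : le t B D) : le t A D := by
  obtain ⟨C, hC, hA⟩ := h₁
  obtain ⟨E, hE, hB⟩ := h₂
  exact ⟨C ∘ E, mem_St_iff.2 ((mem_St_iff.1 hC).comp (mem_St_iff.1 hE)), by rw [hA, hB]; rfl⟩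

theorem ellSet_subset {a : List ℕ} {A B : ↥(St t)} (h : le t A B) :
    EllSet (le t) (approx t) a A ⊆ EllSet (le t) (approx t) a B :=
  fun _ hX => ⟨le_of_le_of_le hX.1 h, hX.2⟩

theorem ellSet_approx_antitone {m n : ℕ} (h : m ≤ n) (A : ↥(St t)) :
    EllSet (le t) (approx t) (approx t n A) A ⊆ EllSet (le t) (approx t) (approx t m A) A := by
  intro B hB
  obtain ⟨C, hC, hB⟩ := mem_ellSet_approx_iff.1 hB
  exact mem_ellSet_approx_iff.2 ⟨C, hC.mono (depth_mono t h), hB⟩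

theorem exists_ellSet_subset_of_isOpen {U : Set ↥(St t)} (hU : IsOpen[ellentuck t] U) :
    ∀ A ∈ U, ∃ n, EllSet (le t) (approx t) (approx t n A) A ⊆ U := by
  induction hU with
  | basic s hs =>
    obtain ⟨a, B, rfl⟩ := hs
    rintro A ⟨hAB, n, rfl⟩
    exact ⟨n, ellSet_subset hAB⟩
  | univ => exact fun _ _ => ⟨0, Set.subset_univ _⟩
  | inter U V _ _ ihU ihV =>
    rintro A ⟨hAU, hAV⟩
    obtain ⟨m, hm⟩ := ihU A hAU
    obtain ⟨n, hn⟩ := ihV A hAV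
    exact ⟨max m n, Set.subset_inter
      ((ellSet_approx_antitone (le_max_left m n) A).trans hm)
      ((ellSet_approx_antitone (le_max_right m n) A).trans hn)⟩
  | sUnion S _ ih =>
    rintro A ⟨U, hUS, hAU⟩
    obtain ⟨n, hn⟩ := ih U hUS A hAU
    exact ⟨n, hn.trans (Set.subset_sUnion_of_mem hUS)⟩

theorem isOpen_ellSet (a : List ℕ) (A : ↥(St t)) :
    IsOpen[ellentuck t] (EllSet (le t) (approx t) a A) :=
  TopologicalSpace.isOpen_generateFrom_of_mem ⟨a, A, rfl⟩

theorem exists_homogeneous_of_isOpen {U : Set ↥(St t)} (hU : IsOpen[ellentuck t] U) {s : ℕ}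
    (hs : t ≤ s) (A : ↥(St t)) :
    ∃ D, RigidSurj s D ∧ ((∀ C, RigidSurj s C → C ∘ D ∘ A.val ∈ Subtype.val '' U) ∨
      ∀ C, RigidSurj s C → C ∘ D ∘ A.val ∉ Subtype.val '' U) := by
  refine RigidSurj.exists_ramsey_of_open (Y := {C | C ∘ A.val ∈ Subtype.val '' U}) ?_
  rintro E - ⟨B, hB, hBE⟩
  obtain ⟨n, hn⟩ := exists_ellSet_subset_of_isOpen hU B hB
  refine ⟨max s (depth t n), le_max_left _ _, fun C hC => ?_⟩
  refine ⟨coarsen B hC (hs.trans (le_max_left _ _)),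
    hn (mem_ellSet_approx_iff.2 ⟨C, hC.mono (le_max_right _ _), rfl⟩), ?_⟩
  change C ∘ B.val = (C ∘ E) ∘ A.val
  rw [hBE]
  rfl

theorem exists_avoiding_of_isNowhereDense {N : Set ↥(St t)}
    (hN : @IsNowhereDense _ (ellentuck t) N) {s : ℕ} (hs : t ≤ s) (A : ↥(St t)) :
    ∃ D, RigidSurj s D ∧ ∀ C, RigidSurj s C → C ∘ D ∘ A.val ∉ Subtype.val '' N := by
  let _ := ellentuck t
  obtain ⟨D, hD, h | h⟩ := exists_homogeneous_of_isOpen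
    (isClosed_closure (s := N)).isOpen_compl hs A
  · refine ⟨D, hD, fun C hC ⟨B, hB, hBC⟩ => ?_⟩
    obtain ⟨B', hB', hBC'⟩ := h C hC
    obtain rfl : B = B' := Subtype.ext (hBC.trans hBC'.symm)
    exact hB' (subset_closure hB)
  · exfalso
    have hsub : EllSet (le t) (approx t) (approx t s (coarsen A hD hs)) (coarsen A hD hs) ⊆
        closure N := by
      intro B hB
      obtain ⟨C, hC, hBC⟩ := mem_ellSet_approx_iff.1 hB
      by_contra hBN
      exact h C (hC.mono (le_depth_self t s)) ⟨B, hBN, hBC⟩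
    have hmem := interior_maximal hsub (isOpen_ellSet _ _) (mem_ellSet_approx_self s _)
    rw [hN] at hmem
    exact hmem

theorem exists_avoiding_of_isMeagre {M : Set ↥(St t)}
    (hM : @IsMeagre _ (ellentuck t) M) {s : ℕ} (hs : t ≤ s) (A : ↥(St t)) :
    ∃ D, RigidSurj s D ∧ ∀ C, RigidSurj s C → C ∘ D ∘ A.val ∉ Subtype.val '' M := by
  let _ := ellentuck t
  obtain ⟨S, hS, hSc, hMS⟩ := isMeagre_iff_countable_union_isNowhereDense.1 hM
  obtain ⟨N, hN⟩ := (hSc.insert ∅).exists_eq_range (Set.insert_nonempty _ _)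
  have hNd : ∀ k, IsNowhereDense (N k) := by
    intro k
    rcases hN ▸ Set.mem_range_self k with h | h
    · rw [h]
      exact isNowhereDense_empty
    · exact hS _ h
  obtain ⟨D, hD, h⟩ := RigidSurj.exists_avoiding (s := s)
    (N := fun k => {C | C ∘ A.val ∈ Subtype.val '' N k}) fun k j E hj hE =>
      exists_avoiding_of_isNowhereDense (hNd k) (hs.trans hj) (coarsen A hE hs)
  refine ⟨D, hD, fun C hC ⟨B, hB, hBC⟩ => ?_⟩
  obtain ⟨T, hT, hBT⟩ := hMS hB
  obtain ⟨k, rfl⟩ : T ∈ Set.range N := hN ▸ Set.mem_insert_of_mem _ hT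
  exact h C hC k ⟨B, hBT, hBC⟩

theorem exists_homogeneous_of_hasPropertyOfBaire {X : Set ↥(St t)}
    (hX : HasPropertyOfBaire (ellentuck t) X) {s : ℕ} (hs : t ≤ s) (A : ↥(St t)) :
    ∃ D, RigidSurj s D ∧ ((∀ C, RigidSurj s C → C ∘ D ∘ A.val ∈ Subtype.val '' X) ∨
      ∀ C, RigidSurj s C → C ∘ D ∘ A.val ∉ Subtype.val '' X) := by
  obtain ⟨U, M, hU, hM, rfl⟩ := hX
  obtain ⟨E, hE, hEM⟩ := exists_avoiding_of_isMeagre hM hs A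
  obtain ⟨D, hD, h⟩ := exists_homogeneous_of_isOpen hU hs (coarsen A hE hs)
  refine ⟨D ∘ E, hD.comp hE, h.imp (fun h C hC => ?_) fun h C hC => ?_⟩
  · obtain ⟨B, hB, hBC⟩ := h C hC
    exact ⟨B, Or.inl ⟨hB, fun hBM => hEM (C ∘ D) (hC.comp hD) ⟨B, hBM, hBC⟩⟩, hBC⟩
  · rintro ⟨B, ⟨hB, -⟩ | ⟨hB, -⟩, hBC⟩
    · exact h C hC ⟨B, hB, hBC⟩
    · exact hEM (C ∘ D) (hC.comp hD) ⟨B, hB, hBC⟩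

/-- For a nonempty basic set `[a,A]` there are `B` and `s` such that, for every rigid surjection `D`
fixing the integers below `s`, some `E ∈ [a,A]` has all elements of `[a,E]` of the form `C ∘ D ∘ B`
with `C` fixing the integers below `s`. -/
theorem exists_ellSet_coarsen {a : List ℕ} {A : ↥(St t)}
    (h : (EllSet (le t) (approx t) a A).Nonempty) :
    ∃ (B : ↥(St t)) (s : ℕ), t ≤ s ∧ ∀ D, RigidSurj s D → ∃ E ∈ EllSet (le t) (approx t) a A,
      ∀ X ∈ EllSet (le t) (approx t) a E, ∃ C, RigidSurj s C ∧ X.val = C ∘ D ∘ B.val := by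
  obtain ⟨B, hBA, n, rfl⟩ := h
  refine ⟨B, depth t n, le_depth t n, fun D hD => ?_⟩
  have hE : approx t n (coarsen B hD (le_depth t n)) = approx t n B := (rigidSurj B).rP_comp hD
  refine ⟨coarsen B hD (le_depth t n), ⟨le_of_le_of_le ?_ hBA, n, hE⟩, fun X hX => ?_⟩
  · exact ⟨D, mem_St_iff.2 (hD.mono (le_depth t n)), rfl⟩
  · change X ∈ EllSet (le t) (approx t) (approx t n B) _ at hX
    rw [← hE] at hX
    exact mem_ellSet_approx_iff.1 hX

theorem isRamseySet_of_hasPropertyOfBaire {X : Set ↥(St t)}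
    (hX : HasPropertyOfBaire (ellentuck t) X) : IsRamseySet (le t) (approx t) X := by
  intro a A hne
  obtain ⟨B, s, hs, hB⟩ := exists_ellSet_coarsen hne
  obtain ⟨D, hD, h⟩ := exists_homogeneous_of_hasPropertyOfBaire hX hs B
  obtain ⟨E, hE, hED⟩ := hB D hD
  refine ⟨E, hE, h.imp (fun h Y hY => ?_) fun h => Set.eq_empty_of_forall_notMem ?_⟩
  · obtain ⟨C, hC, hYC⟩ := hED Y hY
    obtain ⟨Z, hZ, hZC⟩ := h C hC
    rwa [Subtype.ext (hYC.trans hZC.symm)]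
  · rintro Y ⟨hY, hYX⟩
    obtain ⟨C, hC, hYC⟩ := hED Y hY
    exact h C hC ⟨Y, hYX, hYC⟩

theorem isRamseyNullSet_of_isMeagre {X : Set ↥(St t)}
    (hX : @IsMeagre _ (ellentuck t) X) : IsRamseyNullSet (le t) (approx t) X := by
  intro a A hne
  obtain ⟨B, s, hs, hB⟩ := exists_ellSet_coarsen hne
  obtain ⟨D, hD, h⟩ := exists_avoiding_of_isMeagre hX hs B
  obtain ⟨E, hE, hED⟩ := hB D hD
  refine ⟨E, hE, Set.eq_empty_of_forall_notMem ?_⟩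
  rintro Y ⟨hY, hYX⟩
  obtain ⟨C, hC, hYC⟩ := hED Y hY
  exact h C hC ⟨Y, hYX, hYC⟩

end St

/-- **Theorem (Carlson–Simpson).** For every `t < ω`, `(S_t(ω;ω), ≤, r)` is a
topological Ramsey space, where `A ≤ B` iff `A = B·C` for some
`C ∈ S_t(ω;ω)`. -/
theorem st_is_topological_ramsey_space (t : ℕ) :
    IsTopRamseySpace
      (fun A B : ↥(St t) => ∃ C ∈ St t, A.val = compP B.val C)
      (fun n (A : ↥(St t)) => rP t n A.val) := by
  exact ⟨fun _ => St.isRamseySet_of_hasPropertyOfBaire, fun _ => St.isRamseyNullSet_of_isMeagre⟩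
end

section
/- The triple (S_1^<(ω;ω), ≤, r) (Milliken's space) is a topological Ramsey space. -/
open Topology

/-- The space `S_t^<(ω;ω)` of ascending parameter words: elements of
`S_t(ω;ω)` whose classes `A^{-1}({t+j})` are finite and occur in successive
blocks (`max A^{-1}({t+i}) < min A^{-1}({t+j})` for `i < j`). -/
def StLt (t : ℕ) : Set (ℕ → ℕ) :=
  {A | A ∈ St t ∧ (∀ j, {i | A i = t + j}.Finite) ∧
       ∀ j j', j < j' → ∀ i i', A i = t + j → A i' = t + j' → i < i'}

/-- The space `S_t^<(ω;k)`: elements of `S_t(ω;k)` whose classes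
`A^{-1}({t+j})`, `j < k`, are finite and occur in successive blocks. -/
def StLtK (t k : ℕ) : Set (ℕ → ℕ) :=
  {A | A ∈ StK t k ∧ (∀ j < k, {i | A i = t + j}.Finite) ∧
       ∀ j j', j < j' → j' < k → ∀ i i', A i = t + j → A i' = t + j' → i < i'}

section Hindman

open Finset

/-- There is an ultrafilter on the finite sets of natural numbers which is idempotent for unions
and contains the nonempty sets beyond any given bound. -/
theorem exists_idempotent_ultrafilter_finset : ∃ U : Ultrafilter (Finset ℕ),
    (∀ n, ∀ᶠ K in (U : Filter (Finset ℕ)), K.Nonempty ∧ ∀ x ∈ K, n ≤ x) ∧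
    ∀ p : Finset ℕ → Prop, (∀ᶠ H in (U : Filter (Finset ℕ)), p H) →
      ∀ᶠ H in (U : Filter (Finset ℕ)), ∀ᶠ K in (U : Filter (Finset ℕ)), p (H ∪ K) := by
  let _ : Semigroup (Finset ℕ) := { mul := (· ∪ ·), mul_assoc := Finset.union_assoc }
  let _ := Ultrafilter.semigroup (M := Finset ℕ)
  let s : Set (Ultrafilter (Finset ℕ)) :=
    {U | ∀ n, ∀ᶠ K in (U : Filter (Finset ℕ)), K.Nonempty ∧ ∀ x ∈ K, n ≤ x}
  have hne : s.Nonempty := by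
    refine ⟨(Filter.hyperfilter ℕ).map fun n => {n}, fun n => ?_⟩
    have : ∀ᶠ m in (Filter.hyperfilter ℕ : Filter ℕ), n ≤ m :=
      Nat.hyperfilter_le_atTop (Filter.eventually_ge_atTop n)
    rw [Ultrafilter.coe_map, Filter.eventually_map]
    filter_upwards [this] with m hm
    simpa using hm
  have hcomp : IsCompact s := by
    have : s = ⋂ n, {U : Ultrafilter (Finset ℕ) |
        {K : Finset ℕ | K.Nonempty ∧ ∀ x ∈ K, n ≤ x} ∈ U} := by
      ext U
      simp only [s, Set.mem_iInter, Set.mem_ofPred_eq]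
      rfl
    rw [this]
    exact (isClosed_iInter fun n => ultrafilter_isClosed_basic _).isCompact
  have hmul : ∀ U ∈ s, ∀ V ∈ s, U * V ∈ s := by
    intro U hU V hV n
    rw [Ultrafilter.eventually_mul]
    filter_upwards [hU n] with H hH
    filter_upwards [hV n] with K hK
    refine ⟨hH.1.mono Finset.subset_union_left, fun x hx => ?_⟩
    rcases Finset.mem_union.1 hx with hx | hx
    · exact hH.2 x hx
    · exact hK.2 x hx
  obtain ⟨U, hU, h⟩ := exists_idempotent_in_compact_subsemigroup
    Ultrafilter.continuous_mul_left s hne hcomp hmul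
  refine ⟨U, hU, fun p hp => ?_⟩
  rw [← h] at hp
  exact (Ultrafilter.eventually_mul U U p).1 hp

/-- If `c H K` holds for almost all `H` and almost all `K`, then there is a block sequence all of
whose finite unions `H`, followed by a later block `K`, satisfy `c H K`. -/
theorem exists_block_seq_of_eventually {U : Ultrafilter (Finset ℕ)}
    (hU : ∀ n, ∀ᶠ K in (U : Filter (Finset ℕ)), K.Nonempty ∧ ∀ x ∈ K, n ≤ x)
    (hidem : ∀ p : Finset ℕ → Prop, (∀ᶠ H in (U : Filter (Finset ℕ)), p H) →
      ∀ᶠ H in (U : Filter (Finset ℕ)), ∀ᶠ K in (U : Filter (Finset ℕ)), p (H ∪ K))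
    (c : Finset ℕ → Finset ℕ → Prop)
    (hc : ∀ᶠ H in (U : Filter (Finset ℕ)), ∀ᶠ K in (U : Filter (Finset ℕ)), c H K) :
    ∃ F : ℕ → Finset ℕ, (∀ n, (F n).Nonempty) ∧
      (∀ m n, m < n → ∀ x ∈ F m, ∀ y ∈ F n, x < y) ∧
      ∀ n, ∀ I ⊆ range n, I.Nonempty → c (I.biUnion F) (F n) := by
  let p : Finset ℕ → Prop := fun H => H = ∅ ∨ ∀ᶠ K in (U : Filter (Finset ℕ)), c H K
  have hp : ∀ᶠ H in (U : Filter (Finset ℕ)), p H := hc.mono fun H h => Or.inr h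
  let star : Finset ℕ → Prop := fun H => p H ∧ ∀ᶠ K in (U : Filter (Finset ℕ)), p (H ∪ K)
  have star_empty : star ∅ := ⟨Or.inl rfl, by simpa using hp⟩
  have star_union : ∀ H, star H → ∀ᶠ K in (U : Filter (Finset ℕ)), star (H ∪ K) := by
    intro H hH
    filter_upwards [hH.2, hidem (fun K => p (H ∪ K)) hH.2] with K h1 h2
    exact ⟨h1, by simpa only [Finset.union_assoc] using h2⟩
  have step : ∀ T : {T : Finset (Finset ℕ) // ∀ H ∈ T, star H}, ∃ K : Finset ℕ, K.Nonempty ∧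
      ∀ H ∈ T.1, star (H ∪ K) ∧ (H = ∅ ∨ c H K) ∧ ∀ x ∈ H, ∀ y ∈ K, x < y := by
    rintro ⟨T, hT⟩
    have h1 : ∀ᶠ K in (U : Filter (Finset ℕ)), ∀ H ∈ T,
        star (H ∪ K) ∧ (H = ∅ ∨ c H K) ∧ ∀ x ∈ H, ∀ y ∈ K, x < y := by
      rw [Filter.eventually_all_finset]
      intro H hH
      have h2 : ∀ᶠ K in (U : Filter (Finset ℕ)), H = ∅ ∨ c H K := by
        rcases (hT H hH).1 with h | h
        · exact Filter.Eventually.of_forall fun _ => Or.inl h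
        · exact h.mono fun _ => Or.inr
      filter_upwards [star_union H (hT H hH), h2, hU (H.sup id + 1)] with K h3 h4 h5
      refine ⟨h3, h4, fun x hx y hy => ?_⟩
      have := h5.2 y hy
      have := Finset.le_sup (f := id) hx
      simp only [id] at this
      omega
    obtain ⟨K, h, h'⟩ := (h1.and (hU 0)).exists
    exact ⟨K, h'.1, h⟩
  choose g hg1 hg2 using step
  let T : ℕ → {T : Finset (Finset ℕ) // ∀ H ∈ T, star H} := fun n =>
    Nat.rec ⟨{∅}, by simpa using star_empty⟩ (fun _ T => ⟨T.1 ∪ T.1.image (· ∪ g T), by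
      intro H hH
      rcases Finset.mem_union.1 hH with h | h
      · exact T.2 H h
      · obtain ⟨H', h', rfl⟩ := Finset.mem_image.1 h
        exact (hg2 T H' h').1⟩) n
  have hT : ∀ n, (T (n + 1)).1 = (T n).1 ∪ (T n).1.image (· ∪ g (T n)) := fun n => rfl
  let F : ℕ → Finset ℕ := fun n => g (T n)
  have key : ∀ n, ∀ I ⊆ range n, I.biUnion F ∈ (T n).1 := by
    intro n
    induction n with
    | zero =>
      intro I hI
      have : I = ∅ := by simpa using hI
      subst this
      simp [T]
    | succ n ih =>
      intro I hI
      rw [hT]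
      by_cases hn : n ∈ I
      · refine Finset.mem_union_right _ (Finset.mem_image.2 ⟨(I.erase n).biUnion F, ih _ ?_, ?_⟩)
        · intro x hx
          have := hI (Finset.mem_of_mem_erase hx)
          have := Finset.ne_of_mem_erase hx
          simp only [Finset.mem_range] at *
          omega
        · conv_rhs => rw [← Finset.insert_erase hn, Finset.biUnion_insert]
          exact Finset.union_comm _ _
      · refine Finset.mem_union_left _ (ih _ fun x hx => ?_)
        have := hI hx
        have : x ≠ n := fun h => hn (h ▸ hx)
        simp only [Finset.mem_range] at *
        omega
  refine ⟨F, fun n => hg1 _, fun m n hmn x hx y hy => ?_, fun n I hI hne => ?_⟩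
  · have := key n {m} (by simpa using hmn)
    exact (hg2 (T n) _ this).2.2 x (by simpa using hx) y hy
  · rcases (hg2 (T n) _ (key n I hI)).2.1 with h | h
    · obtain ⟨i, hi⟩ := hne
      obtain ⟨x, hx⟩ := hg1 (T i)
      have : x ∈ I.biUnion F := Finset.mem_biUnion.2 ⟨i, hi, hx⟩
      simp [h] at this
    · exact h

/-- Hindman's theorem for block sequences, for colourings of a finite union of blocks together
with a later block. -/
theorem exists_block_seq (c : Finset ℕ → Finset ℕ → Prop) :
    ∃ F : ℕ → Finset ℕ, (∀ n, (F n).Nonempty) ∧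
      (∀ m n, m < n → ∀ x ∈ F m, ∀ y ∈ F n, x < y) ∧
      ((∀ n, ∀ I ⊆ range n, I.Nonempty → c (I.biUnion F) (F n)) ∨
        ∀ n, ∀ I ⊆ range n, I.Nonempty → ¬ c (I.biUnion F) (F n)) := by
  obtain ⟨U, hU, hidem⟩ := exists_idempotent_ultrafilter_finset
  by_cases h : ∀ᶠ H in (U : Filter (Finset ℕ)), ∀ᶠ K in (U : Filter (Finset ℕ)), c H K
  · obtain ⟨F, h1, h2, h3⟩ := exists_block_seq_of_eventually hU hidem c h
    exact ⟨F, h1, h2, Or.inl h3⟩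
  · rw [← Ultrafilter.eventually_not] at h
    simp only [← Ultrafilter.eventually_not] at h
    obtain ⟨F, h1, h2, h3⟩ := exists_block_seq_of_eventually hU hidem (fun H K => ¬ c H K) h
    exact ⟨F, h1, h2, Or.inr h3⟩

end Hindman

section Words

/-- An ascending parameter word with one fixed letter `0`: the positive letters occur in
successive blocks. -/
structure IsWord (A : ℕ → ℕ) : Prop where
  zero : A 0 = 0
  surj : Function.Surjective A
  asc : ∀ {i j}, 0 < A i → A i < A j → i < j

/-- The letter of `A` at position `L` exceeds all earlier letters. -/
def IsCut (A : ℕ → ℕ) (L : ℕ) : Prop := ∀ i < L, A i < A L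

/-- The words below `A` which agree with `D` up to position `L`. -/
def Nbhd (L : ℕ) (D A : ℕ → ℕ) : Set (ℕ → ℕ) :=
  {B | IsWord B ∧ B.FactorsThrough A ∧ ∀ i ≤ L, B i = D i}

theorem factorsThrough_trans {A B C : ℕ → ℕ} (h : A.FactorsThrough B) (h' : B.FactorsThrough C) :
    A.FactorsThrough C := fun _ _ e => h (h' e)

theorem factorsThrough_self (A : ℕ → ℕ) : A.FactorsThrough A := fun _ _ e => e

theorem IsCut.eq_zero {A : ℕ → ℕ} {L : ℕ} (hL : IsCut A L) (h : A L = 0) : L = 0 := by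
  by_contra h0
  have := hL 0 (by omega)
  omega

namespace IsWord

variable {A B D : ℕ → ℕ} {L : ℕ}

theorem le_self (hA : IsWord A) (i : ℕ) : A i ≤ i := by
  suffices h : ∀ n i, A i = n → n ≤ i from h _ i rfl
  intro n
  induction n with
  | zero => intros; omega
  | succ n ih =>
    intro i hi
    obtain ⟨j, hj⟩ := hA.surj n
    rcases Nat.eq_zero_or_pos n with rfl | hn
    · rcases Nat.eq_zero_or_pos i with rfl | h
      · rw [hA.zero] at hi
        omega
      · omega
    · have := hA.asc (i := j) (j := i) (by omega) (by omega)
      have := ih j hj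
      omega

theorem self_mem_nbhd (hA : IsWord A) (hAB : A.FactorsThrough B) : A ∈ Nbhd L A B :=
  ⟨hA, hAB, fun _ _ => rfl⟩

theorem exists_isCut (hA : IsWord A) (n : ℕ) : ∃ L, IsCut A L ∧ A L = n := by
  classical
  refine ⟨Nat.find (hA.surj n), fun i hi => ?_, Nat.find_spec (hA.surj n)⟩
  have h1 := Nat.find_spec (hA.surj n)
  have h2 : A i ≠ n := Nat.find_min (hA.surj n) hi
  by_contra h
  rcases Nat.eq_zero_or_pos n with h0 | h0
  · have := Nat.find_min' (hA.surj n) (hA.zero.trans h0.symm)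
    omega
  · have := hA.asc (i := Nat.find (hA.surj n)) (j := i) (by omega) (by omega)
    omega

theorem isCut_of_factorsThrough (hA : IsWord A) (hD : IsWord D) (h : D.FactorsThrough A)
    (hL : IsCut D L) : IsCut A L := by
  intro i hi
  by_contra hlt
  rcases Nat.eq_zero_or_pos (A L) with h0 | h0
  · have := hL.eq_zero (by rw [h (h0.trans hA.zero.symm), hD.zero])
    omega
  · rcases (not_lt.1 hlt).eq_or_lt with h1 | h1
    · have := hL i hi
      rw [h h1] at this
      omega
    · have := hA.asc h0 h1
      omega

end IsWord

theorem IsCut.congr {A B : ℕ → ℕ} {L : ℕ} (h : ∀ i ≤ L, B i = A i) (hA : IsCut A L) :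
    IsCut B L := fun i hi => by
  rw [h i hi.le, h L le_rfl]
  exact hA i hi

theorem nbhd_congr {L : ℕ} {D D' : ℕ → ℕ} (h : ∀ i ≤ L, D i = D' i) (A : ℕ → ℕ) :
    Nbhd L D A = Nbhd L D' A := by
  ext B
  refine and_congr_right fun _ => and_congr_right fun _ => forall₂_congr fun i hi => ?_
  rw [h i hi]

theorem nbhd_mono {L : ℕ} (D : ℕ → ℕ) {A B : ℕ → ℕ} (h : B.FactorsThrough A) :
    Nbhd L D B ⊆ Nbhd L D A := fun _ hC => ⟨hC.1, factorsThrough_trans hC.2.1 h, hC.2.2⟩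

theorem nbhd_anti {L L' : ℕ} (hL : L ≤ L') (D A : ℕ → ℕ) : Nbhd L' D A ⊆ Nbhd L D A :=
  fun _ hC => ⟨hC.1, hC.2.1, fun i hi => hC.2.2 i (hi.trans hL)⟩

/-- The word which follows `A` before position `L` and `B` from there on. -/
def splice (L : ℕ) (A B : ℕ → ℕ) (i : ℕ) : ℕ :=
  if i < L then A i else if B i = 0 then 0 else B i - B L + A L

section Splice

variable {A B D : ℕ → ℕ} {L : ℕ}

theorem splice_of_lt {i : ℕ} (h : i < L) : splice L A B i = A i := if_pos h

theorem splice_of_eq_zero (hA : IsWord A) (hB : IsWord B) (h : B.FactorsThrough A) {i : ℕ}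
    (hi : A i = 0) : splice L A B i = 0 := by
  have : B i = 0 := (h (hi.trans hA.zero.symm)).trans hB.zero
  simp [splice, hi, this]

theorem splice_self (hA : IsWord A) (hBL : IsCut B L) :
    splice L A B L = A L := by
  unfold splice
  rw [if_neg (lt_irrefl L)]
  split_ifs with h
  · have := hBL.eq_zero h
    subst this
    exact hA.zero.symm
  · omega

theorem isWord_splice (hA : IsWord A) (hB : IsWord B) (hAL : IsCut A L) (hBL : IsCut B L) :
    IsWord (splice L A B) := by
  have hge : ∀ i, L ≤ i → B i ≠ 0 → B L ≤ B i := fun i hi h0 => by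
    by_contra h
    have := hB.asc (i := i) (j := L) (by omega) (by omega)
    omega
  refine ⟨?_, fun n => ?_, fun {i j} hi hij => ?_⟩
  · unfold splice
    rw [hA.zero, hB.zero]
    simp
  · rcases lt_or_ge n (A L) with hn | hn
    · obtain ⟨i, rfl⟩ := hA.surj n
      rcases Nat.eq_zero_or_pos (A i) with h0 | h0
      · refine ⟨0, ?_⟩
        have : 0 < L := by
          rcases Nat.eq_zero_or_pos L with h | h
          · rw [h, hA.zero] at hn
            omega
          · exact h
        rw [splice_of_lt this, hA.zero, h0]
      · exact ⟨i, splice_of_lt (hA.asc h0 hn)⟩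
    · obtain ⟨i, hi⟩ := hB.surj (B L + (n - A L))
      have hLi : ¬ i < L := fun h => by
        have := hBL i h
        omega
      refine ⟨i, ?_⟩
      unfold splice
      rw [if_neg hLi]
      split_ifs with h
      · have := hBL.eq_zero (by omega)
        subst this
        have := hA.zero
        omega
      · omega
  · unfold splice at hi hij
    rcases lt_or_ge i L with h1 | h1 <;> rcases lt_or_ge j L with h2 | h2
    · rw [if_pos h1] at hi hij
      rw [if_pos h2] at hij
      exact hA.asc hi hij
    · omega
    · have := hAL j h2
      rw [if_neg h1.not_gt] at hi hij
      rw [if_pos h2] at hij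
      split_ifs at hi hij <;> omega
    · have hi' := hge i h1
      have hj' := hge j h2
      rw [if_neg h1.not_gt] at hi hij
      rw [if_neg h2.not_gt] at hij
      split_ifs at hi hij <;> first | omega | exact hB.asc (by omega) (by omega)

theorem splice_factorsThrough (hA : IsWord A) (hB : IsWord B) (h : B.FactorsThrough A)
    (hAL : IsCut A L) : (splice L A B).FactorsThrough A := by
  have key : ∀ i j, i < L → L ≤ j → A i = A j → splice L A B i = splice L A B j := by
    intro i j hi hj hij
    have h1 := hAL i hi
    have h2 : A j = 0 := by
      by_contra h0
      have := hA.asc (i := j) (j := L) (by omega) (by omega)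
      omega
    rw [splice_of_eq_zero hA hB h h2, splice_of_eq_zero hA hB h (hij.trans h2)]
  intro i j hij
  rcases lt_or_ge i L with h1 | h1 <;> rcases lt_or_ge j L with h2 | h2
  · rw [splice_of_lt h1, splice_of_lt h2, hij]
  · exact key i j h1 h2 hij
  · exact (key j i h2 h1 hij.symm).symm
  · unfold splice
    rw [if_neg h1.not_gt, if_neg h2.not_gt, h hij]

theorem splice_mem_nbhd (hA : IsWord A) (hB : IsWord B) (h : B.FactorsThrough A)
    (hAL : IsCut A L) (hBL : IsCut B L) : splice L A B ∈ Nbhd L A A := by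
  refine ⟨isWord_splice hA hB hAL hBL, splice_factorsThrough hA hB h hAL, fun i hi => ?_⟩
  rcases hi.eq_or_lt with rfl | hi
  · exact splice_self hA hBL
  · exact splice_of_lt hi

theorem nbhd_splice_subset (hA : IsWord A) (hB : IsWord B) (hBL : IsCut B L) :
    Nbhd L B (splice L A B) ⊆ Nbhd L B B := by
  rintro C ⟨hC, hCs, hCB⟩
  have key : ∀ i j, i < L → L ≤ j → B i = B j → C i = C j := by
    intro i j hi hj hij
    have h1 := hBL i hi
    have h2 : B j = 0 := by
      by_contra h0
      have := hB.asc (i := j) (j := L) (by omega) (by omega)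
      omega
    have h3 : C j = C 0 := hCs <| by
      rw [splice_of_lt (i := 0) (by omega), hA.zero, splice, if_neg hj.not_gt, if_pos h2]
    rw [h3, hC.zero, hCB i hi.le, hij, h2]
  refine ⟨hC, fun i j hij => ?_, hCB⟩
  rcases lt_or_ge i L with h1 | h1 <;> rcases lt_or_ge j L with h2 | h2
  · rw [hCB i h1.le, hCB j h2.le, hij]
  · exact key i j h1 h2 hij
  · exact (key j i h2 h1 hij.symm).symm
  · apply hCs
    unfold splice
    rw [if_neg h1.not_gt, if_neg h2.not_gt, hij]

end Splice

/-- A fusion argument: a hereditary property which can be achieved at any given cut can be achieved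
simultaneously at all cuts from `L₀` on. -/
theorem exists_forall_isCut (P : ℕ → (ℕ → ℕ) → (ℕ → ℕ) → Prop)
    (congr : ∀ L D D' A, (∀ i ≤ L, D i = D' i) → P L D A → P L D' A)
    (mono : ∀ L D A B, Nbhd L D B ⊆ Nbhd L D A → P L D A → P L D B)
    (dense : ∀ L D A, IsWord A → IsWord D → D.FactorsThrough A → IsCut D L →
      ∃ B ∈ Nbhd L D A, P L D B)
    {L₀ : ℕ} {A : ℕ → ℕ} (hA : IsWord A) :
    ∃ B ∈ Nbhd L₀ A A, ∀ D, IsWord D → D.FactorsThrough B → ∀ L ≥ L₀, IsCut D L → P L D B := by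
  have step : ∀ L A, IsWord A → IsCut A L → ∃ B ∈ Nbhd L A A,
      ∀ D, IsWord D → D.FactorsThrough B → IsCut D L → P L D B := by
    intro L A hA hAL
    have hfin : ∀ T : Finset (Fin (L + 1) → Fin (L + 1)), ∃ B ∈ Nbhd L A A,
        ∀ D, IsWord D → D.FactorsThrough B → IsCut D L →
          (∃ p ∈ T, ∀ i : Fin (L + 1), D i = p i) → P L D B := by
      intro T
      induction T using Finset.induction_on with
      | empty => exact ⟨A, hA.self_mem_nbhd (factorsThrough_self A), by simp⟩
      | insert p T _ ih =>
        obtain ⟨B, ⟨hB, hBA, hBe⟩, hBP⟩ := ih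
        have hBL : IsCut B L := hAL.congr hBe
        by_cases hex : ∃ D, IsWord D ∧ D.FactorsThrough B ∧ IsCut D L ∧
            ∀ i : Fin (L + 1), D i = p i
        · obtain ⟨D, hD, hDB, hDL, hDp⟩ := hex
          obtain ⟨E, ⟨hE, hEB, hED⟩, hEP⟩ := dense L D B hB hD hDB hDL
          have hEL : IsCut E L := hDL.congr hED
          obtain ⟨hS, hSB, hSe⟩ := splice_mem_nbhd hB hE hEB hBL hEL
          refine ⟨splice L B E, ⟨hS, factorsThrough_trans hSB hBA,
            fun i hi => (hSe i hi).trans (hBe i hi)⟩, fun C hC hCS hCL hCT => ?_⟩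
          obtain ⟨q, hq, hCq⟩ := hCT
          rcases Finset.mem_insert.1 hq with rfl | hq
          · refine congr L D C _ (fun i hi => ?_) (mono L D _ _ ?_ hEP)
            · exact (hDp ⟨i, by omega⟩).trans (hCq ⟨i, by omega⟩).symm
            · rw [nbhd_congr (fun i hi => (hED i hi).symm), nbhd_congr (fun i hi => (hED i hi).symm)]
              exact nbhd_splice_subset hB hE hEL
          · exact mono L C B _ (nbhd_mono C hSB)
              (hBP C hC (factorsThrough_trans hCS hSB) hCL ⟨q, hq, hCq⟩)
        · refine ⟨B, ⟨hB, hBA, hBe⟩, fun D hD hDB hDL hDT => ?_⟩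
          obtain ⟨q, hq, hDq⟩ := hDT
          rcases Finset.mem_insert.1 hq with rfl | hq
          · exact absurd ⟨D, hD, hDB, hDL, hDq⟩ hex
          · exact hBP D hD hDB hDL ⟨q, hq, hDq⟩
    obtain ⟨B, hB, hBP⟩ := hfin Finset.univ
    refine ⟨B, hB, fun D hD hDB hDL => hBP D hD hDB hDL
      ⟨fun i => ⟨D i, ?_⟩, Finset.mem_univ _, fun _ => rfl⟩⟩
    have := hD.le_self i
    omega
  have step' : ∀ L (A : {A // IsWord A}), ∃ B : {A // IsWord A}, B.1 ∈ Nbhd L A.1 A.1 ∧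
      (L₀ ≤ L → ∀ D, IsWord D → D.FactorsThrough B.1 → IsCut D L → P L D B.1) ∧
      (L < L₀ ∨ ¬ IsCut A.1 L → B = A) := by
    rintro L ⟨A, hA⟩
    by_cases h : L₀ ≤ L ∧ IsCut A L
    · obtain ⟨B, hB, hBP⟩ := step L A hA h.2
      refine ⟨⟨B, hB.1⟩, hB, fun _ => hBP, fun h' => ?_⟩
      rcases h' with h' | h'
      · omega
      · exact absurd h.2 h'
    · refine ⟨⟨A, hA⟩, hA.self_mem_nbhd (factorsThrough_self A), fun h1 D hD hDA hDL => ?_,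
        fun _ => rfl⟩
      exact absurd ⟨h1, hA.isCut_of_factorsThrough hD hDA hDL⟩ h
  choose F hF1 hF2 hF3 using step'
  let a : ℕ → {A // IsWord A} := fun n => Nat.rec ⟨A, hA⟩ (fun L B => F L B) n
  have ha : ∀ n, a (n + 1) = F n (a n) := fun _ => rfl
  have hle : ∀ m n, m ≤ n → (a n).1.FactorsThrough (a m).1 := by
    intro m n hmn
    induction n, hmn using Nat.le_induction with
    | base => exact factorsThrough_self _
    | succ n _ ih =>
      rw [ha]
      exact factorsThrough_trans (hF1 n (a n)).2.1 ih
  have heq : ∀ i n, i ≤ n → (a n).1 i = (a i).1 i := by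
    intro i n hin
    induction n, hin using Nat.le_induction with
    | base => rfl
    | succ n hn ih => rw [ha, (hF1 n (a n)).2.2 i hn, ih]
  let B : ℕ → ℕ := fun i => (a i).1 i
  have hBa : ∀ i n, i ≤ n → B i = (a n).1 i := fun i n h => (heq i n h).symm
  have hBle : ∀ n, B.FactorsThrough (a n).1 := by
    intro n i j hij
    rw [hBa i (max n (max i j)) (by omega), hBa j (max n (max i j)) (by omega)]
    exact hle n _ (by omega) hij
  have hB : IsWord B := by
    refine ⟨(a 0).2.zero, fun n => ?_, fun {i j} hi hij => ?_⟩
    · induction n with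
      | zero => exact ⟨0, (a 0).2.zero⟩
      | succ n ih =>
        obtain ⟨i, hi⟩ := ih
        rw [hBa i (i + 1) (by omega)] at hi
        obtain ⟨j, hjL, hj⟩ := (a (i + 1)).2.exists_isCut (n + 1)
        rcases le_or_gt j (i + 1) with h | h
        · exact ⟨j, (hBa j _ h).trans hj⟩
        · have hst : ∀ l, i + 1 ≤ l → l ≤ j → a l = a (i + 1) := by
            intro l hl
            induction l, hl using Nat.le_induction with
            | base => intro; rfl
            | succ l hl ih =>
              intro hlj
              have h1 := ih (by omega)
              rw [ha, hF3 l (a l) (Or.inr fun hc => ?_), h1]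
              have h2 := hc i (by omega)
              rw [h1] at h2
              have := hjL l (by omega)
              omega
          refine ⟨j, ?_⟩
          change (a j).1 j = _
          rw [hst j h.le le_rfl, hj]
    · rw [hBa i (max i j) (by omega)] at hi hij
      rw [hBa j (max i j) (by omega)] at hij
      exact (a _).2.asc hi hij
  refine ⟨B, ⟨hB, hBle 0, fun i hi => ?_⟩, fun D hD hDB L hL hDL => ?_⟩
  · have h0 : ∀ l ≤ L₀, a l = ⟨A, hA⟩ := by
      intro l
      induction l with
      | zero => intro; rfl
      | succ l ih =>
        intro hl
        rw [ha, hF3 l (a l) (Or.inl (by omega)), ih (by omega)]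
    rw [hBa i L₀ hi, h0 L₀ le_rfl]
  · exact mono L D _ _ (nbhd_mono D (hBle (L + 1)))
      (hF2 L (a L) hL D hD (factorsThrough_trans hDB (hBle (L + 1))) hDL)

end Words

section Ramsey

/-- The pigeonhole principle: below `D` the initial segments up to the first occurrence of the
next letter can be made monochromatic. -/
theorem exists_monochromatic_next_cut (Q : ℕ → (ℕ → ℕ) → Prop)
    (congr : ∀ L C C', (∀ i ≤ L, C i = C' i) → Q L C → Q L C')
    {L : ℕ} {D : ℕ → ℕ} (hD : IsWord D) (hDL : IsCut D L) :
    ∃ B ∈ Nbhd L D D,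
      (∀ C ∈ Nbhd L D B, ∀ L', IsCut C L' → C L' = C L + 1 → Q L' C) ∨
      (∀ C ∈ Nbhd L D B, ∀ L', IsCut C L' → C L' = C L + 1 → ¬ Q L' C) := by
  classical
  obtain ⟨k, hk⟩ : ∃ k, D L = k := ⟨_, rfl⟩
  let pos : Finset ℕ → ℕ := fun K => sInf {i | ∃ x ∈ K, D i = k + 1 + x}
  let word : Finset ℕ → Finset ℕ → ℕ → ℕ := fun H K i =>
    if D i ≤ k then D i else if D i - (k + 1) ∈ H then k else if D i - (k + 1) ∈ K then k + 1 else 0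
  obtain ⟨F, hne, hlt, hF⟩ := exists_block_seq fun H K => Q (pos K) (word H K)
  have huniq : ∀ {m n x}, x ∈ F m → x ∈ F n → m = n := by
    intro m n x hm hn
    rcases lt_trichotomy m n with h | h | h
    · exact absurd (hlt m n h x hm x hn) (lt_irrefl _)
    · exact h
    · exact absurd (hlt n m h x hn x hm) (lt_irrefl _)
  let B : ℕ → ℕ := fun i =>
    if D i ≤ k then D i else if h : ∃ n, D i - (k + 1) ∈ F n then k + Nat.find h else 0
  have hB_le : ∀ {i}, D i ≤ k → B i = D i := fun h => if_pos h
  have hB_mem : ∀ {i x n}, D i = k + 1 + x → x ∈ F n → B i = k + n := by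
    intro i x n hi hx
    have hx' : D i - (k + 1) ∈ F n := by rwa [hi, Nat.add_sub_cancel_left]
    have h : ∃ n, D i - (k + 1) ∈ F n := ⟨n, hx'⟩
    simp only [B]
    rw [if_neg (by omega), dif_pos h, huniq (Nat.find_spec h) hx']
  have hB_not : ∀ {i x}, D i = k + 1 + x → (∀ n, x ∉ F n) → B i = 0 := by
    intro i x hi hx
    have h : ¬ ∃ n, D i - (k + 1) ∈ F n := by
      rw [hi, Nat.add_sub_cancel_left]
      simpa using hx
    simp only [B]
    rw [if_neg (by omega), dif_neg h]
  have hcases : ∀ i, D i ≤ k ∨ ∃ x, D i = k + 1 + x ∧ ((∃ n, x ∈ F n) ∨ ∀ n, x ∉ F n) := by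
    intro i
    rcases le_or_gt (D i) k with h | h
    · exact Or.inl h
    · refine Or.inr ⟨D i - (k + 1), by omega, ?_⟩
      rw [← not_exists]
      exact em _
  have hB_pos : ∀ {i}, k < D i → 0 < B i → ∃ x n, D i = k + 1 + x ∧ x ∈ F n ∧ B i = k + n := by
    intro i hi h0
    rcases hcases i with h | ⟨x, hx, ⟨n, hn⟩ | hn⟩
    · omega
    · exact ⟨x, n, hx, hn, hB_mem hx hn⟩
    · have := hB_not hx hn
      omega
  have hBD : B.FactorsThrough D := fun i j hij => by simp only [B, hij]
  have hB : IsWord B := by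
    refine ⟨?_, fun n => ?_, fun {i j} hi hij => ?_⟩
    · rw [hB_le (by rw [hD.zero]; omega), hD.zero]
    · rcases le_or_gt n k with h | h
      · obtain ⟨i, rfl⟩ := hD.surj n
        exact ⟨i, hB_le h⟩
      · obtain ⟨x, hx⟩ := hne (n - k)
        obtain ⟨i, hi⟩ := hD.surj (k + 1 + x)
        refine ⟨i, ?_⟩
        rw [hB_mem hi hx]
        omega
    · rcases le_or_gt (D i) k with h1 | h1
      · rw [hB_le h1] at hi hij
        refine hD.asc hi ?_
        rcases le_or_gt (D j) k with h2 | h2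
        · rwa [hB_le h2] at hij
        · omega
      · obtain ⟨x, m, hx, hxm, hm⟩ := hB_pos h1 hi
        rcases le_or_gt (D j) k with h2 | h2
        · rw [hB_le h2] at hij
          omega
        · obtain ⟨y, n, hy, hyn, hn⟩ := hB_pos h2 (by omega)
          have := hlt m n (by omega) x hxm y hyn
          exact hD.asc (by omega) (by omega)
  have hDk : ∀ i ≤ L, D i ≤ k := by
    intro i hi
    rcases hi.eq_or_lt with rfl | hi
    · omega
    · have := hDL i hi
      omega
  have hBL : ∀ i ≤ L, B i = D i := fun i hi => hB_le (hDk i hi)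
  have main : ∀ C ∈ Nbhd L D B, ∀ L', IsCut C L' → C L' = C L + 1 →
      ∃ n, ∃ I ⊆ Finset.range n, I.Nonempty ∧ pos (F n) = L' ∧
        ∀ i ≤ L', word (I.biUnion F) (F n) i = C i := by
    rintro C ⟨hC, hCB, hCD⟩ L' hCL' hnext
    have hCL : C L = k := by rw [hCD L le_rfl, hk]
    rw [hCL] at hnext
    have hsmall : ∀ i, D i ≤ k → C i = D i := by
      intro i hi
      obtain ⟨j, hj, hji⟩ : ∃ j ≤ L, D j = D i := by
        rcases hi.eq_or_lt with h | h
        · exact ⟨L, le_rfl, by omega⟩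
        · rcases Nat.eq_zero_or_pos (D i) with h0 | h0
          · exact ⟨0, Nat.zero_le _, by rw [hD.zero, h0]⟩
          · exact ⟨i, (hD.asc h0 (by omega)).le, rfl⟩
      rw [← hji, ← hCD j hj]
      exact hCB (by rw [hB_le hi, hBL j hj, hji])
    have hDL' : k < D L' := by
      by_contra h
      have := hsmall L' (by omega)
      omega
    have hBL' : 0 < B L' := by
      by_contra h
      have : C L' = C 0 := hCB (by rw [hB.zero]; omega)
      rw [hC.zero] at this
      omega
    obtain ⟨x, n, hx, hxn, hn⟩ := hB_pos hDL' hBL'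
    have hn0 : 0 < n := by
      by_contra h
      have : C L' = C L := hCB (by rw [hBL L le_rfl]; omega)
      omega
    refine ⟨n, (Finset.range n).filter fun m => ∃ i, B i = k + m ∧ C i = k,
      Finset.filter_subset _ _, ⟨0, ?_⟩, ?_, fun i hi => ?_⟩
    · rw [Finset.mem_filter, Finset.mem_range]
      exact ⟨hn0, L, by rw [hBL L le_rfl, hk, add_zero], hCL⟩
    · refine le_antisymm (Nat.sInf_le ⟨x, hxn, hx⟩) (le_csInf ⟨L', x, hxn, hx⟩ ?_)
      rintro i ⟨y, hy, hi⟩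
      by_contra hlt'
      have h1 := hCL' i (by omega)
      have : C i = C L' := hCB (by rw [hB_mem hi hy, hn])
      omega
    · have hfilter : ∀ {y m}, y ∈ F m →
          (y ∈ ((Finset.range n).filter fun m => ∃ i, B i = k + m ∧ C i = k).biUnion F ↔
            m < n ∧ ∃ i, B i = k + m ∧ C i = k) := by
        intro y m hy
        simp only [Finset.mem_biUnion, Finset.mem_filter, Finset.mem_range]
        constructor
        · rintro ⟨m', h, h'⟩
          rwa [huniq hy h']
        · exact fun h => ⟨m, h, hy⟩
      rcases hcases i with h | ⟨y, hy, ⟨m, hm⟩ | hm⟩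
      · rw [hsmall i h]
        exact if_pos h
      · have hBi := hB_mem hy hm
        have hword : ∀ H, word H (F n) i =
            if y ∈ H then k else if y ∈ F n then k + 1 else 0 := by
          intro H
          simp only [word]
          rw [if_neg (by omega), hy, Nat.add_sub_cancel_left]
        rw [hword]
        rcases lt_trichotomy m n with h | rfl | h
        · have hiL : i < L' := by
            rcases hi.eq_or_lt with rfl | h'
            · omega
            · exact h'
          have h1 := hCL' i hiL
          have hyn : y ∉ F n := fun h' => h.ne (huniq hm h')
          rw [if_neg hyn]
          by_cases hik : C i = k
          · rw [if_pos ((hfilter hm).2 ⟨h, i, hBi, hik⟩), hik]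
          · rw [if_neg fun h' => ?_]
            · by_contra h0
              have h2 := hC.asc (i := i) (j := L) (by omega) (by omega)
              have := hDk i h2.le
              omega
            · obtain ⟨-, j, hj, hjk⟩ := (hfilter hm).1 h'
              exact hik ((hCB (hBi.trans hj.symm)).trans hjk)
        · rw [if_neg fun h' => lt_irrefl _ ((hfilter hm).1 h').1, if_pos hm,
            hCB (hBi.trans hn.symm), hnext]
        · have := hB.asc (i := L') (j := i) hBL' (by omega)
          omega
      · have h1 : C i = 0 := (hCB ((hB_not hy hm).trans hB.zero.symm)).trans hC.zero
        rw [h1]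
        simp only [word]
        rw [if_neg (by omega), hy, Nat.add_sub_cancel_left, if_neg, if_neg (hm n)]
        simp [hm]
  refine ⟨B, ⟨hB, hBD, hBL⟩, ?_⟩
  refine hF.imp (fun hF C hC L' hCL' hnext => ?_) (fun hF C hC L' hCL' hnext hQ => ?_)
  · obtain ⟨n, I, hI, hne, hpos, hword⟩ := main C hC L' hCL' hnext
    have := hF n I hI hne
    rw [hpos] at this
    exact congr L' _ C hword this
  · obtain ⟨n, I, hI, hne, hpos, hword⟩ := main C hC L' hCL' hnext
    refine hF n I hI hne ?_
    rw [hpos]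
    exact congr L' C _ (fun i hi => (hword i hi).symm) hQ

/-- A set which is open in the Ellentuck topology is Ramsey. -/
theorem exists_nbhd_subset_or_disjoint {X : Set (ℕ → ℕ)}
    (hX : ∀ C ∈ X, IsWord C → ∃ L, Nbhd L C C ⊆ X)
    {L₀ : ℕ} {D₀ A : ℕ → ℕ} (hD₀ : IsWord D₀) (hA : D₀.FactorsThrough A) (hL₀ : IsCut D₀ L₀) :
    ∃ B ∈ Nbhd L₀ D₀ A, Nbhd L₀ D₀ B ⊆ X ∨ Nbhd L₀ D₀ B ∩ X = ∅ := by
  let rejects : ℕ → (ℕ → ℕ) → (ℕ → ℕ) → Prop := fun L D A =>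
    ∀ C ∈ Nbhd L D A, ¬ Nbhd L D C ⊆ X
  have rejects_congr : ∀ L D D' A, (∀ i ≤ L, D i = D' i) → rejects L D A → rejects L D' A := by
    intro L D D' A h
    simp only [rejects, nbhd_congr h]
    exact id
  have rejects_mono : ∀ L D A B, Nbhd L D B ⊆ Nbhd L D A → rejects L D A → rejects L D B :=
    fun L D A B h hr C hC => hr C (h hC)
  have exists_decided : ∀ {L A}, IsWord A → ∃ B ∈ Nbhd L A A, ∀ D, IsWord D → D.FactorsThrough B →
      ∀ L' ≥ L, IsCut D L' → Nbhd L' D B ⊆ X ∨ rejects L' D B := by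
    intro L A hA
    refine exists_forall_isCut (fun L D A => Nbhd L D A ⊆ X ∨ rejects L D A) ?_ ?_ ?_ hA
    · intro L D D' A h
      simp only [rejects, nbhd_congr h]
      exact id
    · exact fun L D A B h => Or.imp h.trans (rejects_mono L D A B h)
    · intro L D A _ hD hDA _
      by_cases h : rejects L D A
      · exact ⟨D, hD.self_mem_nbhd hDA, Or.inr (rejects_mono _ _ _ _ (nbhd_mono D hDA) h)⟩
      · simp only [rejects, not_forall, not_not] at h
        obtain ⟨C, hC, hCX⟩ := h
        exact ⟨C, hC, Or.inl hCX⟩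
  let P : ℕ → (ℕ → ℕ) → (ℕ → ℕ) → Prop := fun L D A => Nbhd L D A ⊆ X ∨
    ∀ C ∈ Nbhd L D A, ∀ L' ≥ L, IsCut C L' → C L' = C L + 1 → rejects L' C A
  have P_congr : ∀ L D D' A, (∀ i ≤ L, D i = D' i) → P L D A → P L D' A := by
    intro L D D' A h
    simp only [P, nbhd_congr h]
    exact id
  have P_mono : ∀ L D A B, Nbhd L D B ⊆ Nbhd L D A → P L D A → P L D B := by
    refine fun L D A B h => Or.imp h.trans fun h' C hC L' hLL' hL' hn => ?_
    refine rejects_mono _ _ _ _ ?_ (h' C (h hC) L' hLL' hL' hn)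
    intro E hE
    refine ⟨hE.1, (h ⟨hE.1, hE.2.1, fun i hi => ?_⟩).2.1, hE.2.2⟩
    rw [hE.2.2 i (hi.trans hLL'), hC.2.2 i hi]
  have P_dense : ∀ L D A, IsWord A → IsWord D → D.FactorsThrough A → IsCut D L →
      ∃ B ∈ Nbhd L D A, P L D B := by
    intro L D A _ hD hDA hDL
    obtain ⟨B, ⟨hB, hBD, hBe⟩, hdec⟩ := exists_decided (L := L) hD
    obtain ⟨B', ⟨hB', hB'B, hB'e⟩, hQ⟩ := exists_monochromatic_next_cut
      (fun L C => Nbhd L C B ⊆ X) (fun L C C' h => by simp only [nbhd_congr h]; exact id)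
      hB (hDL.congr hBe)
    refine ⟨B', ⟨hB', factorsThrough_trans hB'B (factorsThrough_trans hBD hDA),
      fun i hi => (hB'e i hi).trans (hBe i hi)⟩, ?_⟩
    rw [nbhd_congr hBe] at hQ
    refine hQ.imp (fun hQ C hC => ?_) (fun hQ C hC L' hLL' hL' hn => ?_)
    · obtain ⟨L', hL', hn⟩ := hC.1.exists_isCut (C L + 1)
      exact hQ C hC L' hL' hn (hC.1.self_mem_nbhd (factorsThrough_trans hC.2.1 hB'B))
    · exact rejects_mono _ _ _ _ (nbhd_mono C hB'B)
        ((hdec C hC.1 (factorsThrough_trans hC.2.1 hB'B) L' hLL' hL').resolve_left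
          (hQ C hC L' hL' hn))
  by_cases hr : rejects L₀ D₀ D₀
  swap
  · simp only [rejects, not_forall, not_not] at hr
    obtain ⟨C, hC, hCX⟩ := hr
    exact ⟨C, nbhd_mono _ hA hC, Or.inl hCX⟩
  obtain ⟨B, hBD, hBP⟩ := exists_forall_isCut P P_congr P_mono P_dense hD₀ (L₀ := L₀)
  have hall : ∀ n, ∀ C ∈ Nbhd L₀ D₀ B, ∀ L ≥ L₀, IsCut C L → C L = C L₀ + n →
      rejects L C B := by
    intro n
    induction n with
    | zero =>
      intro C hC L hL hCL hn
      obtain rfl : L = L₀ := by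
        by_contra hne
        have := hCL L₀ (by omega)
        omega
      exact rejects_congr L D₀ C B (fun i hi => (hC.2.2 i hi).symm)
        (rejects_mono _ _ _ _ (nbhd_mono _ hBD.2.1) hr)
    | succ n ih =>
      intro C hC L hL hCL hn
      obtain ⟨L₁, hL₁, hn₁⟩ := hC.1.exists_isCut (C L₀ + n)
      have h01 : L₀ ≤ L₁ := by
        by_contra hlt
        have := (hL₀.congr hC.2.2) L₁ (by omega)
        omega
      have h1L : L₁ ≤ L := by
        by_contra hlt
        have := hL₁ L (by omega)
        omega
      have hself := hC.1.self_mem_nbhd (L := L₁) hC.2.1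
      rcases hBP C hC.1 hC.2.1 L₁ h01 hL₁ with h | h
      · exact absurd ((nbhd_mono C hC.2.1).trans h) (ih C hC L₁ h01 hL₁ hn₁ C hself)
      · exact h C hself L h1L hCL (by omega)
  refine ⟨B, nbhd_mono _ hA hBD, Or.inr (Set.eq_empty_iff_forall_notMem.2 ?_)⟩
  rintro C ⟨hC, hCX⟩
  obtain ⟨L, hLX⟩ := hX C hCX hC.1
  obtain ⟨L', hL', hn⟩ := hC.1.exists_isCut (max L L₀)
  have hle := hC.1.le_self L'
  have hLL' : C L₀ ≤ C L' := by
    rcases (show L₀ ≤ L' by omega).eq_or_lt with h | h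
    · rw [h]
    · exact (hL' L₀ h).le
  exact hall (C L' - C L₀) C hC L' (by omega) hL' (by omega) C (hC.1.self_mem_nbhd hC.2.1)
    ((nbhd_anti (by omega) C C).trans hLX)

/-- If each of countably many sets contains, for every basic neighbourhood, a smaller one, then
every basic neighbourhood contains a smaller one inside their intersection. -/
theorem exists_nbhd_subset_iInter {U : ℕ → Set (ℕ → ℕ)}
    (hU : ∀ k L D A, IsWord D → D.FactorsThrough A → IsCut D L →
      ∃ B ∈ Nbhd L D A, Nbhd L D B ⊆ U k)
    {L₀ : ℕ} {D₀ A : ℕ → ℕ} (hD₀ : IsWord D₀) (hA : D₀.FactorsThrough A) :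
    ∃ B ∈ Nbhd L₀ D₀ A, Nbhd L₀ D₀ B ⊆ ⋂ k, U k := by
  have dense : ∀ n L D A, IsWord D → D.FactorsThrough A → IsCut D L →
      ∃ B ∈ Nbhd L D A, ∀ k < n, Nbhd L D B ⊆ U k := by
    intro n L D A hD hDA hDL
    induction n with
    | zero => exact ⟨D, hD.self_mem_nbhd hDA, by simp⟩
    | succ n ih =>
      obtain ⟨B, ⟨hB, hBA, hBD⟩, hBU⟩ := ih
      obtain ⟨C, hC, hCU⟩ := hU n L B B hB (factorsThrough_self B) (hDL.congr hBD)
      rw [nbhd_congr hBD] at hC hCU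
      refine ⟨C, nbhd_mono D hBA hC, fun k hk => ?_⟩
      rcases (Nat.lt_succ_iff.1 hk).eq_or_lt with rfl | hk
      · exact hCU
      · exact (nbhd_mono D hC.2.1).trans (hBU k hk)
  obtain ⟨B, hB, hBU⟩ := exists_forall_isCut (fun L D A => ∀ k < L + 1, Nbhd L D A ⊆ U k)
    (fun L D D' A h => by simp only [nbhd_congr h]; exact id)
    (fun L D A B h h' k hk => h.trans (h' k hk))
    (fun L D A _ hD hDA hDL => dense (L + 1) L D A hD hDA hDL) hD₀ (L₀ := L₀)
  refine ⟨B, nbhd_mono D₀ hA hB, fun C hC => Set.mem_iInter.2 fun k => ?_⟩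
  obtain ⟨L, hL, hn⟩ := hC.1.exists_isCut (max k L₀)
  have hle := hC.1.le_self L
  exact hBU C hC.1 hC.2.1 L (by omega) hL k (by omega) (hC.1.self_mem_nbhd hC.2.1)

end Ramsey

section Milliken

theorem mem_StLt_one_iff {A : ℕ → ℕ} : A ∈ StLt 1 ↔ IsWord A := by
  constructor
  · rintro ⟨⟨h1, h2, -⟩, -, h3⟩
    refine ⟨h2 0 one_pos, h1, fun {i j} hi hij => ?_⟩
    exact h3 (A i - 1) (A j - 1) (by omega) i j (by omega) (by omega)
  · intro hA
    refine ⟨⟨hA.surj, fun i hi => ?_, fun j j' hjj' => ?_⟩, fun j => ?_, fun j j' hjj' i i' hi hi' => ?_⟩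
    · obtain rfl : i = 0 := by omega
      exact hA.zero
    · obtain ⟨L, hL, rfl⟩ := hA.exists_isCut j
      refine ⟨L, rfl, fun i hi => ?_⟩
      by_contra h
      rcases (not_lt.1 h).eq_or_lt with h | h
      · subst h
        omega
      · have := hL i h
        omega
    · obtain ⟨m, hm⟩ := hA.surj (j + 2)
      refine (Set.finite_Iio m).subset fun i hi => ?_
      have hi : A i = 1 + j := hi
      exact hA.asc (by omega) (by omega)
    · exact hA.asc (by omega) (by omega)

theorem exists_eq_compP_iff {A B : ℕ → ℕ} (hA : IsWord A) (hB : IsWord B) :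
    (∃ C ∈ StLt 1, A = compP B C) ↔ A.FactorsThrough B := by
  constructor
  · rintro ⟨C, -, rfl⟩ i j hij
    simp only [compP, hij]
  · intro h
    have hinv : ∀ n, B (Function.surjInv hB.surj n) = n := Function.surjInv_eq hB.surj
    have hC : ∀ i, A (Function.surjInv hB.surj (B i)) = A i := fun i => h (hinv (B i))
    refine ⟨fun n => A (Function.surjInv hB.surj n), mem_StLt_one_iff.2 ⟨?_, fun n => ?_, ?_⟩, ?_⟩
    · rw [h ((hinv 0).trans hB.zero.symm), hA.zero]
    · obtain ⟨i, hi⟩ := hA.surj n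
      exact ⟨B i, (hC i).trans hi⟩
    · intro m n hm hmn
      have h1 := hA.asc hm hmn
      by_contra hnm
      rcases (not_lt.1 hnm).eq_or_lt with h2 | h2
      · rw [h2] at hmn
        omega
      · have hn : 0 < n := by
          by_contra h0
          have h3 := h ((hinv n).trans ((by omega : n = 0).trans hB.zero.symm))
          rw [hA.zero] at h3
          omega
        have := hB.asc (i := Function.surjInv hB.surj n) (j := Function.surjInv hB.surj m)
          (by rwa [hinv]) (by rwa [hinv, hinv])
        omega
    · funext i
      exact (hC i).symm

/-- The quasi-order of Milliken's space. -/
def millikenLE (A B : StLt 1) : Prop := ∃ C ∈ StLt 1, A.val = compP B.val C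

/-- The approximation map of Milliken's space. -/
noncomputable def millikenApprox (n : ℕ) (A : StLt 1) : List ℕ := rP 1 n A.val

theorem millikenLE_iff {A B : StLt 1} : millikenLE A B ↔ A.val.FactorsThrough B.val :=
  exists_eq_compP_iff (mem_StLt_one_iff.1 A.2) (mem_StLt_one_iff.1 B.2)

theorem millikenLE_trans {A B C : StLt 1} (h : millikenLE A B) (h' : millikenLE B C) :
    millikenLE A C :=
  millikenLE_iff.2 (factorsThrough_trans (millikenLE_iff.1 h) (millikenLE_iff.1 h'))

theorem IsWord.sInf_spec {A : ℕ → ℕ} (hA : IsWord A) (n : ℕ) :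
    A (sInf {i | A i = 1 + n}) = 1 + n ∧ ∀ i < sInf {i | A i = 1 + n}, A i < 1 + n := by
  obtain ⟨L, hL, hn⟩ := hA.exists_isCut (1 + n)
  have : sInf {i | A i = 1 + n} = L := by
    refine le_antisymm (Nat.sInf_le hn) (le_csInf ⟨L, hn⟩ fun i hi => ?_)
    have hi : A i = 1 + n := hi
    by_contra h
    have := hL i (by omega)
    omega
  rw [this]
  exact ⟨hn, fun i hi => hn ▸ hL i hi⟩

/-- The basic Ellentuck sets are the neighbourhoods given by cuts. -/
theorem exists_ellSet_eq (C : StLt 1) (n : ℕ) : ∃ L ≥ n, IsCut C.val L ∧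
    ∀ A, EllSet millikenLE millikenApprox (millikenApprox n C) A =
      {B | B.val ∈ Nbhd L C.val A.val} := by
  have hC := mem_StLt_one_iff.1 C.2
  have hlen : ∀ (m : ℕ) (B : StLt 1), m ≠ 0 →
      (millikenApprox m B) = List.ofFn fun i : Fin (sInf {i | B.val i = 1 + m}) => B.val i :=
    fun m B h => if_neg h
  have hpos : ∀ {m} {B : ℕ → ℕ}, IsWord B → 0 < sInf {i | B i = 1 + m} := by
    intro m B hB
    by_contra h
    have := (hB.sInf_spec m).1
    rw [Nat.eq_zero_of_not_pos h, hB.zero] at this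
    omega
  rcases Nat.eq_zero_or_pos n with rfl | hn
  · refine ⟨0, le_rfl, fun i hi => absurd hi (Nat.not_lt_zero i), fun A => ?_⟩
    ext B
    have hB := mem_StLt_one_iff.1 B.2
    constructor
    · rintro ⟨h, -⟩
      refine ⟨hB, millikenLE_iff.1 h, fun i hi => ?_⟩
      rw [Nat.le_zero.1 hi, hB.zero, hC.zero]
    · rintro ⟨-, h, -⟩
      exact ⟨millikenLE_iff.2 h, 0, rfl⟩
  · obtain ⟨h1, h2⟩ := hC.sInf_spec n
    have hnL := hC.le_self (sInf {i | C.val i = 1 + n})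
    refine ⟨sInf {i | C.val i = 1 + n}, by omega, fun i hi => by rw [h1]; exact h2 i hi, fun A => ?_⟩
    ext B
    have hB := mem_StLt_one_iff.1 B.2
    constructor
    · rintro ⟨h, m, hm⟩
      refine ⟨hB, millikenLE_iff.1 h, ?_⟩
      have hm0 : m ≠ 0 := by
        rintro rfl
        have := congrArg List.length hm
        rw [hlen n C hn.ne', List.length_ofFn] at this
        have := hpos (m := n) hC
        simp [millikenApprox, rP] at *
        omega
      rw [hlen n C hn.ne', hlen m B hm0] at hm
      obtain ⟨h3, h4⟩ := hB.sInf_spec m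
      have hL : sInf {i | B.val i = 1 + m} = sInf {i | C.val i = 1 + n} := by
        simpa using congrArg List.length hm
      have heq : ∀ i < sInf {i | C.val i = 1 + n}, B.val i = C.val i := by
        intro i hi
        have := congrArg (fun l => l[i]?) hm
        simpa [List.getElem?_ofFn, hL, hi] using this
      rw [hL] at h3 h4
      have hle : ∀ {A : ℕ → ℕ} {L k : ℕ}, IsWord A → 0 < k → A L = 1 + k →
          ∃ i < L, A i = k := by
        intro A L k hA hk hAL
        obtain ⟨i, hi⟩ := hA.surj k
        exact ⟨i, hA.asc (by omega) (by omega), hi⟩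
      have hmn : m = n := by
        obtain ⟨i, hi, hin⟩ := hle hC hn h1
        obtain ⟨j, hj, hjm⟩ := hle hB (by omega) h3
        have := h4 i hi
        have := h2 j hj
        have := heq i hi
        have := heq j hj
        omega
      intro i hi
      rcases hi.eq_or_lt with rfl | hi
      · rw [h1, h3, hmn]
      · exact heq i hi
    · rintro ⟨-, h, hBC⟩
      refine ⟨millikenLE_iff.2 h, n, ?_⟩
      rw [hlen n C hn.ne', hlen n B hn.ne']
      have hL : sInf {i | B.val i = 1 + n} = sInf {i | C.val i = 1 + n} := by
        refine le_antisymm (Nat.sInf_le ((hBC _ le_rfl).trans h1)) ?_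
        by_contra hlt
        have h5 := h2 _ (not_le.1 hlt)
        rw [← hBC _ (not_le.1 hlt).le, (hB.sInf_spec n).1] at h5
        omega
      refine List.ext_getElem (by simp [hL]) fun i hi hi' => ?_
      simp only [List.getElem_ofFn]
      refine hBC i ?_
      simp only [List.length_ofFn] at hi'
      exact hi'.le

theorem exists_nbhd_subset_of_isOpen {U : Set (StLt 1)}
    (hU : IsOpen[EllTop millikenLE millikenApprox] U) (C : StLt 1) (hC : C ∈ U) :
    ∃ L, {B : StLt 1 | B.val ∈ Nbhd L C.val C.val} ⊆ U := by
  induction hU with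
  | basic s hs =>
    obtain ⟨a, A, rfl⟩ := hs
    obtain ⟨hCA, n, rfl⟩ := hC
    obtain ⟨L, -, -, hL⟩ := exists_ellSet_eq C n
    refine ⟨L, ?_⟩
    rw [← hL]
    exact fun B hB => ⟨millikenLE_trans hB.1 hCA, hB.2⟩
  | univ => exact ⟨0, Set.subset_univ _⟩
  | inter s t _ _ hs ht =>
    obtain ⟨L, hL⟩ := hs hC.1
    obtain ⟨L', hL'⟩ := ht hC.2
    exact ⟨max L L', fun B hB => ⟨hL (nbhd_anti (le_max_left _ _) _ _ hB),
      hL' (nbhd_anti (le_max_right _ _) _ _ hB)⟩⟩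
  | sUnion S _ ih =>
    obtain ⟨s, hs, hCs⟩ := hC
    obtain ⟨L, hL⟩ := ih s hs hCs
    exact ⟨L, hL.trans (Set.subset_sUnion_of_mem hs)⟩

/-- Ellentuck-open sets of Milliken's space decide every neighbourhood given by a cut. -/
theorem exists_nbhd_subset_or_disjoint_of_isOpen {U : Set (StLt 1)}
    (hU : IsOpen[EllTop millikenLE millikenApprox] U) {L : ℕ} {D A : ℕ → ℕ} (hD : IsWord D)
    (hA : D.FactorsThrough A) (hL : IsCut D L) :
    ∃ B ∈ Nbhd L D A, Nbhd L D B ⊆ Subtype.val '' U ∨ Nbhd L D B ∩ Subtype.val '' U = ∅ := by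
  refine exists_nbhd_subset_or_disjoint ?_ hD hA hL
  rintro _ ⟨C, hC, rfl⟩ -
  obtain ⟨M, hM⟩ := exists_nbhd_subset_of_isOpen hU C hC
  exact ⟨M, fun B hB => ⟨⟨B, mem_StLt_one_iff.2 hB.1⟩, hM hB, rfl⟩⟩

theorem isRamseySet_of_isOpen {U : Set (StLt 1)}
    (hU : IsOpen[EllTop millikenLE millikenApprox] U) :
    IsRamseySet millikenLE millikenApprox U := by
  rintro a A ⟨C, hCA, n, rfl⟩
  obtain ⟨L, -, hL, hE⟩ := exists_ellSet_eq C n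
  obtain ⟨B, hB, hBU⟩ := exists_nbhd_subset_or_disjoint_of_isOpen hU
    (mem_StLt_one_iff.1 C.2) (millikenLE_iff.1 hCA) hL
  refine ⟨⟨B, mem_StLt_one_iff.2 hB.1⟩, by rw [hE]; exact hB, ?_⟩
  rw [hE]
  refine hBU.imp (fun h D hD => ?_) (fun h => ?_)
  · obtain ⟨D', hD', h'⟩ := h hD
    rwa [← Subtype.ext h']
  · refine Set.eq_empty_iff_forall_notMem.2 fun D hD => ?_
    exact Set.eq_empty_iff_forall_notMem.1 h D.val ⟨hD.1, D, hD.2, rfl⟩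

theorem exists_nbhd_subset_of_dense {U : Set (StLt 1)}
    (hU : IsOpen[EllTop millikenLE millikenApprox] U)
    (hd : @Dense _ (EllTop millikenLE millikenApprox) U) {L : ℕ} {D A : ℕ → ℕ} (hD : IsWord D)
    (hA : D.FactorsThrough A) (hL : IsCut D L) :
    ∃ B ∈ Nbhd L D A, Nbhd L D B ⊆ Subtype.val '' U := by
  obtain ⟨B, hB, h | h⟩ := exists_nbhd_subset_or_disjoint_of_isOpen hU hD hA hL
  · exact ⟨B, hB, h⟩
  · exfalso
    let B' : StLt 1 := ⟨B, mem_StLt_one_iff.2 hB.1⟩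
    obtain ⟨L', hLL', -, hE⟩ := exists_ellSet_eq B' L
    have hV : IsOpen[EllTop millikenLE millikenApprox]
        (EllSet millikenLE millikenApprox (millikenApprox L B') B') :=
      TopologicalSpace.GenerateOpen.basic _ ⟨_, _, rfl⟩
    obtain ⟨C, hCV, hCU⟩ := (@dense_iff_inter_open _ (EllTop millikenLE millikenApprox) _).1 hd _ hV
      ⟨B', by rw [hE]; exact hB.1.self_mem_nbhd (factorsThrough_self _)⟩
    rw [hE] at hCV
    refine Set.eq_empty_iff_forall_notMem.1 h C.val ⟨?_, C, hCU, rfl⟩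
    rw [← nbhd_congr hB.2.2]
    exact nbhd_anti hLL' _ _ hCV

theorem isRamseyNullSet_of_isMeagre {S : Set (StLt 1)}
    (hS : @IsMeagre _ (EllTop millikenLE millikenApprox) S) :
    IsRamseyNullSet millikenLE millikenApprox S := by
  rintro a A ⟨C, hCA, n, rfl⟩
  obtain ⟨L, -, hL, hE⟩ := exists_ellSet_eq C n
  obtain ⟨T, hTo, hTd, hTc, hTS⟩ :=
    (@mem_residual_iff _ (EllTop millikenLE millikenApprox) _).1 hS
  obtain ⟨U, hU⟩ := (hTc.insert Set.univ).exists_eq_range (Set.insert_nonempty _ _)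
  have hmem : ∀ k, U k = Set.univ ∨ U k ∈ T := fun k =>
    Set.mem_insert_iff.1 (hU ▸ Set.mem_range_self k)
  have hUo : ∀ k, IsOpen[EllTop millikenLE millikenApprox] (U k) := fun k =>
    (hmem k).elim (fun h => h ▸ TopologicalSpace.GenerateOpen.univ) (hTo _)
  have hUd : ∀ k, @Dense _ (EllTop millikenLE millikenApprox) (U k) := fun k =>
    (hmem k).elim (fun h => h ▸ @dense_univ _ (EllTop millikenLE millikenApprox)) (hTd _)
  obtain ⟨B, hB, hBU⟩ := exists_nbhd_subset_iInter (U := fun k => Subtype.val '' U k)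
    (fun k L D A hD hA hL => exists_nbhd_subset_of_dense (hUo k) (hUd k) hD hA hL)
    (L₀ := L) (mem_StLt_one_iff.1 C.2) (millikenLE_iff.1 hCA)
  refine ⟨⟨B, mem_StLt_one_iff.2 hB.1⟩, by rw [hE]; exact hB, ?_⟩
  rw [hE]
  refine Set.eq_empty_iff_forall_notMem.2 fun D hD => hTS (Set.mem_sInter.2 fun t ht => ?_) hD.2
  obtain ⟨k, rfl⟩ : t ∈ Set.range U := hU ▸ Set.mem_insert_of_mem _ ht
  obtain ⟨D', hD', h⟩ := Set.mem_iInter.1 (hBU hD.1) k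
  rwa [← Subtype.ext h]

end Milliken

/-- **Theorem (Milliken).** `(S_1^<(ω;ω), ≤, r)` (Milliken's space) is a
topological Ramsey space, where `A ≤ B` iff `A = B·C` for some
`C ∈ S_1^<(ω;ω)`. -/
theorem milliken_is_topological_ramsey_space :
    IsTopRamseySpace
      (fun A B : ↥(StLt 1) => ∃ C ∈ StLt 1, A.val = compP B.val C)
      (fun n (A : ↥(StLt 1)) => rP 1 n A.val) := by
  refine ⟨?_, fun S hS => isRamseyNullSet_of_isMeagre hS⟩
  rintro S ⟨U, M, hU, hM, rfl⟩ a A hA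
  obtain ⟨B, hB, hBM⟩ := isRamseyNullSet_of_isMeagre hM a A hA
  have hsub : ∀ {C D : StLt 1}, millikenLE C D →
      EllSet millikenLE millikenApprox a C ⊆ EllSet millikenLE millikenApprox a D :=
    fun h E hE => ⟨millikenLE_trans hE.1 h, hE.2⟩
  have hself : B ∈ EllSet millikenLE millikenApprox a B :=
    ⟨millikenLE_iff.2 (factorsThrough_self _), hB.2⟩
  obtain ⟨C, hC, h⟩ := isRamseySet_of_isOpen hU a B ⟨B, hself⟩
  have hCM : ∀ D ∈ EllSet millikenLE millikenApprox a C, D ∉ M := fun D hD hDM =>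
    Set.eq_empty_iff_forall_notMem.1 hBM D ⟨hsub hC.1 hD, hDM⟩
  refine ⟨C, hsub hB.1 hC, h.imp (fun h D hD => Or.inl ⟨h hD, hCM D hD⟩) fun h => ?_⟩
  refine Set.eq_empty_iff_forall_notMem.2 ?_
  rintro D ⟨hD, hDU | hDM⟩
  · exact Set.eq_empty_iff_forall_notMem.1 h D ⟨hD, hDU.1⟩
  · exact hCM D hD hDM.1
end
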